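/- arXiv:math/0408343 — 3 statements merged into one kernel-verified Lean document; each statement's English description precedes it below -/
import Mathlib

section
/- Let Δ be an (r-1)-dimensional k-CM simplicial complex. Then h_i(Δ) ≥ C(k+i-2, i) for all 0 ≤ i ≤ r, i.e., h_i(Δ) ≥ h_i(U_{r,r+k-1}). -/
/-!
The bound is proved by induction on `k` and `i`. Counting the faces of `Δ` that avoid or contain a
vertex `v` gives `h_i(Δ) = h_i(Δ - v) + h_{i-1}(lk v)` (`hvec_succ`). If `Δ` is `k`-CM, then
`Δ - v` is `(k-1)`-CM and `lk v` is `k`-CM of one dimension less (`IsKCM.delV`, `IsKCM.lk`), since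
links of Cohen–Macaulay complexes are Cohen–Macaulay; the dimension of the link is right because
Cohen–Macaulay complexes are pure (`isPure_of_isCM`). The binomial coefficients satisfy the same
recursion by Pascal's rule. What remains is the case `k = 1`, where the bound says that the
`h`-vector of a Cohen–Macaulay complex is nonnegative (`hvec_nonneg`).

Nonnegativity comes from commutative algebra, worked out by hand on graded vector spaces. Let `M_j`
be the direct sum, over the faces `F` with `j` vertices, of the polynomial rings `ℚ[x_v : v ∈ F]`,
and let `M_{j+1} → M_j` be the signed sum of the maps setting one variable to zero. In multidegree
`a` this complex is the simplicial chain complex of the link of the support of `a`, so for a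
Cohen–Macaulay complex of dimension `r - 1` it is exact at `M_j` for `j < r`
(`exists_faceDiff_eq`). Let `Z_j` be the module of cycles in `M_j`; then
`0 → Z_{j+1} → M_{j+1} → Z_j → 0` is exact for `j < r`. Two consequences follow.

* The Hilbert series of `Z_r` is an alternating sum of those of the `M_j`, and `(1 - X)^r` times it
  is the polynomial whose coefficients are the `h`-numbers in reverse order (`hilb_cycleMod`).
* For numbers `t_u`, distinct on each face, the linear forms `∑ t_u ^ l x_u` with `l < j` are a
  regular sequence on `M_j` (`isReg_faceMod`): by Lagrange interpolation they generate all
  variables, and a numerical criterion (`isReg_of_hilbQ_eq`) does the rest. By the depth lemma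
  (`isReg_of_exact`) the first `r` of them are then regular on `Z_r` (`isReg_cycleMod`).

Hence `(1 - X)^r` times the Hilbert series of `Z_r` is the Hilbert series of the quotient of `Z_r`
by these forms, whose coefficients are dimensions.
-/

variable {α : Type*} [DecidableEq α]

/-- `K` is an (abstract) simplicial complex: it contains the empty face and is
closed under taking subsets. -/
def IsComplex (K : Finset (Finset α)) : Prop :=
  ∅ ∈ K ∧ ∀ F ∈ K, ∀ G ⊆ F, G ∈ K

/-- `K` is IsPure of dimension `r - 1`: every face is contained in a face of cardinality `r`. -/
def IsPure (K : Finset (Finset α)) (r : ℕ) : Prop :=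
  ∀ F ∈ K, ∃ B ∈ K, F ⊆ B ∧ B.card = r

/-- `fvec K j` is the number of faces of `K` of cardinality `j`. -/
def fvec (K : Finset (Finset α)) (j : ℕ) : ℕ := (K.filter (fun F => F.card = j)).card

/-- The `h`-vector of an `(r-1)`-dimensional complex:
`h_i = ∑_{j=0}^i (-1)^{i-j} C(r-j, r-i) f_j`. -/
def hvec (K : Finset (Finset α)) (r i : ℕ) : ℤ :=
  ∑ j ∈ Finset.range (i + 1), (-1 : ℤ) ^ (i - j) * ((r - j).choose (r - i) : ℤ) * (fvec K j : ℤ)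

/-- The vertex set of `K`. -/
def verts (K : Finset (Finset α)) : Finset α := K.sup id

/-- The link of a vertex `v` in `K`. -/
def lk (K : Finset (Finset α)) (v : α) : Finset (Finset α) :=
  (K.filter (fun F => v ∈ F)).image (fun F => F.erase v)

/-- The deletion `K - v` of a vertex: all faces of `K` avoiding `v`. -/
def delV (K : Finset (Finset α)) (v : α) : Finset (Finset α) := K.filter (fun F => v ∉ F)

/-- The deletion `K - A` of a set of vertices: all faces of `K` disjoint from `A`. -/
def delS (K : Finset (Finset α)) (A : Finset α) : Finset (Finset α) :=
  K.filter (fun F => Disjoint F A)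

section CohenMacaulay

variable [LinearOrder α]

/-- The sign of the face `G` inside `F`, where `F = G ∪ {v}`:
`(-1)` to the number of elements of `F` smaller than `v`. -/
def sgn (F G : Finset α) : ℤ :=
  (-1 : ℤ) ^ (F.filter (fun x => ∃ y ∈ F \ G, x < y)).card

/-- The simplicial boundary operator (over `ℚ`) of the complex `K`: the value of the
boundary of the chain `c` at a face `G` is the signed sum of `c` over the faces of `K`
obtained from `G` by adding one vertex. -/
def bdry (K : Finset (Finset α)) (c : Finset α → ℚ) (G : Finset α) : ℚ :=
  ∑ F ∈ K.filter (fun F => G ⊆ F ∧ F.card = G.card + 1), (sgn F G : ℚ) * c F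

/-- The reduced rational homology `H̃_{j-1}` of `K` vanishes (indexing by cardinality
`j`; note that the empty face is a face of `K`, giving reduced homology): every cycle
supported on the faces of cardinality `j` is a boundary. -/
def HomologyVanishes (K : Finset (Finset α)) (j : ℕ) : Prop :=
  ∀ c : Finset α → ℚ, (∀ F, c F ≠ 0 → F ∈ K ∧ F.card = j) →
    (∀ G, bdry K c G = 0) →
      ∃ d : Finset α → ℚ, (∀ F, d F ≠ 0 → F ∈ K ∧ F.card = j + 1) ∧
        ∀ G, bdry K d G = c G

/-- The link of the face `F` in `K`. -/
def linkF (K : Finset (Finset α)) (F : Finset α) : Finset (Finset α) :=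
  (K.filter (fun G => F ⊆ G)).image (fun G => G \ F)

/-- `K` is Cohen–Macaulay (over `ℚ`): for every face `F` and every
`i < dim (lk F)`, the reduced homology `H̃_i(lk F; ℚ)` vanishes.  (In cardinality
indexing: `H̃_{j-1}` vanishes for all `j` less than the maximal cardinality of a face
of the link.) -/
def IsCM (K : Finset (Finset α)) : Prop :=
  ∀ F ∈ K, ∀ j : ℕ, j < (linkF K F).sup Finset.card → HomologyVanishes (linkF K F) j

end CohenMacaulay

set_option linter.unusedSectionVars false

/-! ### Graded modules and regular sequences -/

section GradedModules

variable {E : Type*} [AddCommGroup E] [Module ℚ E]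

/-- For a graded submodule `A` of `E` stable under the degree-one operators `T 0, T 1, …`,
`linIdeal T A k n` is the degree `n` part of `(T 0, …, T (k-1)) A`. -/
def linIdeal (T : ℕ → E →ₗ[ℚ] E) (A : ℕ → Submodule ℚ E) : ℕ → ℕ → Submodule ℚ E
  | 0, _ => ⊥
  | _ + 1, 0 => ⊥
  | k + 1, n + 1 => linIdeal T A k (n + 1) ⊔ (A n).map (T k)

/-- `T 0, …, T (m-1)` is a weakly regular sequence on the graded module `A`. -/
def IsReg (T : ℕ → E →ₗ[ℚ] E) (A : ℕ → Submodule ℚ E) (m : ℕ) : Prop :=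
  ∀ k < m, ∀ n, ∀ x ∈ A n, T k x ∈ linIdeal T A k (n + 1) → x ∈ linIdeal T A k n

/-- The graded subspace `A` is stable under all the operators, each raising the degree by one. -/
def IsStable (T : ℕ → E →ₗ[ℚ] E) (A : ℕ → Submodule ℚ E) : Prop :=
  ∀ l n, ∀ x ∈ A n, T l x ∈ A (n + 1)

variable {T : ℕ → E →ₗ[ℚ] E} {A B C : ℕ → Submodule ℚ E}

@[simp] lemma linIdeal_zero (k : ℕ) : linIdeal T A k 0 = ⊥ := by cases k <;> rfl

lemma linIdeal_le (hA : IsStable T A) (k n : ℕ) : linIdeal T A k n ≤ A n := by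
  induction k with
  | zero => exact bot_le
  | succ k ih =>
    cases n with
    | zero => exact bot_le
    | succ n =>
      refine sup_le ih ?_
      rintro _ ⟨x, hx, rfl⟩
      exact hA _ _ _ hx

lemma linIdeal_mono (hAB : ∀ n, A n ≤ B n) (k n : ℕ) : linIdeal T A k n ≤ linIdeal T B k n := by
  induction k with
  | zero => exact bot_le
  | succ k ih =>
    cases n with
    | zero => exact bot_le
    | succ n => exact sup_le_sup ih (Submodule.map_mono (hAB n))

lemma linIdeal_le_succ (k n : ℕ) : linIdeal T A k n ≤ linIdeal T A (k + 1) n := by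
  cases n with
  | zero => simp
  | succ n => exact le_sup_left

lemma apply_mem_linIdeal {l k n : ℕ} (h : l < k) {x : E} (hx : x ∈ A n) :
    T l x ∈ linIdeal T A k (n + 1) := by
  induction k with
  | zero => omega
  | succ k ih =>
    rcases Nat.lt_succ_iff_lt_or_eq.1 h with h | rfl
    · exact linIdeal_le_succ _ _ (ih h)
    · exact Submodule.mem_sup_right ⟨x, hx, rfl⟩

lemma map_linIdeal (hT : ∀ i j x, T i (T j x) = T j (T i x)) (hA : IsStable T A) (l : ℕ) {k n : ℕ}
    {x : E} (hx : x ∈ linIdeal T A k n) : T l x ∈ linIdeal T A k (n + 1) := by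
  induction k generalizing n x with
  | zero =>
    rw [(Submodule.mem_bot ℚ).1 hx, map_zero]
    exact zero_mem _
  | succ k ih =>
    cases n with
    | zero =>
      rw [(Submodule.mem_bot ℚ).1 hx, map_zero]
      exact zero_mem _
    | succ n =>
      obtain ⟨y, hy, _, ⟨z, hz, rfl⟩, rfl⟩ := Submodule.mem_sup.1 hx
      rw [map_add, hT l k]
      exact add_mem (linIdeal_le_succ _ _ (ih hy))
        (apply_mem_linIdeal (Nat.lt_succ_self k) (hA _ _ _ hz))

/-- For an exact sequence `0 → A → B → C → 0` on whose quotient `C` the operators form a regular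
sequence, the submodule `A` meets `(T 0, …, T (k-1)) B` in `(T 0, …, T (k-1)) A`
(vanishing of `Tor₁`). -/
lemma mem_linIdeal_of_exact (hT : ∀ i j x, T i (T j x) = T j (T i x)) (hB : IsStable T B)
    (d : E →ₗ[ℚ] E) (hd : ∀ l x, d (T l x) = T l (d x))
    (hA : ∀ n x, x ∈ A n ↔ x ∈ B n ∧ d x = 0)
    (hmap : ∀ n, ∀ x ∈ B n, d x ∈ C n) (hsurj : ∀ n, ∀ y ∈ C n, ∃ x ∈ B n, d x = y)
    {m : ℕ} (hC : IsReg T C m) {k : ℕ} (hk : k ≤ m) {n : ℕ} {x : E} (hx : x ∈ A n)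
    (hxB : x ∈ linIdeal T B k n) : x ∈ linIdeal T A k n := by
  have hdI : ∀ k n x, x ∈ linIdeal T B k n → d x ∈ linIdeal T C k n := by
    intro k
    induction k with
    | zero =>
      intro n x hx
      rw [(Submodule.mem_bot ℚ).1 hx, map_zero]
      exact zero_mem _
    | succ k ih =>
      intro n x hx
      cases n with
      | zero =>
        rw [(Submodule.mem_bot ℚ).1 hx, map_zero]
        exact zero_mem _
      | succ n =>
        obtain ⟨y, hy, _, ⟨z, hz, rfl⟩, rfl⟩ := Submodule.mem_sup.1 hx
        rw [map_add, hd]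
        exact add_mem (linIdeal_le_succ _ _ (ih _ _ hy))
          (apply_mem_linIdeal (Nat.lt_succ_self k) (hmap _ _ hz))
  have hsI : ∀ k n y, y ∈ linIdeal T C k n → ∃ x ∈ linIdeal T B k n, d x = y := by
    intro k
    induction k with
    | zero =>
      intro n y hy
      exact ⟨0, zero_mem _, by rw [(Submodule.mem_bot ℚ).1 hy, map_zero]⟩
    | succ k ih =>
      intro n y hy
      cases n with
      | zero => exact ⟨0, zero_mem _, by rw [(Submodule.mem_bot ℚ).1 hy, map_zero]⟩
      | succ n =>
        obtain ⟨u, hu, _, ⟨z, hz, rfl⟩, rfl⟩ := Submodule.mem_sup.1 hy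
        obtain ⟨y', hy', rfl⟩ := ih _ _ hu
        obtain ⟨z', hz', rfl⟩ := hsurj _ _ hz
        exact ⟨y' + T k z', add_mem (linIdeal_le_succ _ _ hy')
          (apply_mem_linIdeal (Nat.lt_succ_self k) hz'), by rw [map_add, hd]⟩
  have hAs : IsStable T A := fun l n x hx => by
    rw [hA] at hx ⊢
    exact ⟨hB _ _ _ hx.1, by rw [hd, hx.2, map_zero]⟩
  induction k generalizing n x with
  | zero => exact hxB
  | succ k ih =>
    cases n with
    | zero => exact hxB
    | succ n =>
      obtain ⟨y, hy, _, ⟨z, hz, rfl⟩, rfl⟩ := Submodule.mem_sup.1 hxB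
      have h0 : d y + T k (d z) = 0 := by rw [← hd, ← map_add]; exact ((hA _ _).1 hx).2
      have h1 : T k (d z) ∈ linIdeal T C k (n + 1) := by
        rw [← neg_eq_of_add_eq_zero_right h0]
        exact neg_mem (hdI _ _ _ hy)
      obtain ⟨w, hw, hwz⟩ := hsI _ _ _ (hC k (by omega) n _ (hmap _ _ hz) h1)
      -- correct `z` by an element of the ideal of `B` so that it lands in `A`
      have hzA : z - w ∈ A n :=
        (hA _ _).2 ⟨sub_mem hz (linIdeal_le hB _ _ hw), by rw [map_sub, hwz, sub_self]⟩
      have e : y + T k z = (y + T k w) + T k (z - w) := by rw [map_sub]; abel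
      have h2 : y + T k w ∈ A (n + 1) := by
        have : y + T k w = (y + T k z) - T k (z - w) := by rw [map_sub]; abel
        rw [this]
        exact sub_mem hx (hAs _ _ _ hzA)
      rw [e]
      exact add_mem (linIdeal_le_succ _ _
        (ih (by omega) h2 (add_mem hy (map_linIdeal hT hB k hw))))
        (apply_mem_linIdeal (Nat.lt_succ_self k) hzA)

/-- Depth lemma: in an exact sequence `0 → A → B → C → 0`, the depth of `A` is at least
`min (depth B) (depth C + 1)`. -/
lemma isReg_of_exact (hT : ∀ i j x, T i (T j x) = T j (T i x)) (hB : IsStable T B)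
    (d : E →ₗ[ℚ] E) (hd : ∀ l x, d (T l x) = T l (d x))
    (hA : ∀ n x, x ∈ A n ↔ x ∈ B n ∧ d x = 0)
    (hmap : ∀ n, ∀ x ∈ B n, d x ∈ C n) (hsurj : ∀ n, ∀ y ∈ C n, ∃ x ∈ B n, d x = y)
    {m : ℕ} (hC : IsReg T C m) (hBr : IsReg T B (m + 1)) : IsReg T A (m + 1) := by
  intro k hk n x hx hTx
  have hAB : ∀ n, A n ≤ B n := fun n x hx => ((hA n x).1 hx).1
  exact mem_linIdeal_of_exact hT hB d hd hA hmap hsurj hC (by omega) hx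
    (hBr k hk n x (hAB n hx) (linIdeal_mono hAB _ _ hTx))

/-- The Hilbert series of `A / (T 0, …, T (k-1)) A`. -/
noncomputable def hilbQ (T : ℕ → E →ₗ[ℚ] E) (A : ℕ → Submodule ℚ E) (k : ℕ) : PowerSeries ℤ :=
  PowerSeries.mk fun n =>
    (Module.finrank ℚ (A n) : ℤ) - (Module.finrank ℚ (linIdeal T A k n) : ℤ)

/-- The Hilbert series of `A`. -/
noncomputable def hilb (A : ℕ → Submodule ℚ E) : PowerSeries ℤ :=
  PowerSeries.mk fun n => (Module.finrank ℚ (A n) : ℤ)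

/-- The elements of degree `n` of `A` that `T k` multiplies into `(T 0, …, T (k-1)) A`. -/
def colonPart (T : ℕ → E →ₗ[ℚ] E) (A : ℕ → Submodule ℚ E) (k n : ℕ) : Submodule ℚ E :=
  A n ⊓ (linIdeal T A k (n + 1)).comap (T k)

/-- The Hilbert series of the kernel of `T k` on `A / (T 0, …, T (k-1)) A`; it measures the
failure of regularity at the `k`-th step. -/
noncomputable def defect (T : ℕ → E →ₗ[ℚ] E) (A : ℕ → Submodule ℚ E) (k : ℕ) : PowerSeries ℤ :=
  PowerSeries.mk fun n =>
    (Module.finrank ℚ (colonPart T A k n) : ℤ) - (Module.finrank ℚ (linIdeal T A k n) : ℤ)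

lemma finrank_map_add_inf_ker (f : E →ₗ[ℚ] E) (p : Submodule ℚ E) [FiniteDimensional ℚ p] :
    Module.finrank ℚ (p.map f) + Module.finrank ℚ (p ⊓ LinearMap.ker f : Submodule ℚ E) =
      Module.finrank ℚ p := by
  have h := (f.domRestrict p).finrank_range_add_finrank_ker
  rw [LinearMap.range_domRestrict, LinearMap.ker_domRestrict] at h
  rw [← h, ← Submodule.map_comap_subtype,
    (Submodule.equivMapOfInjective p.subtype p.injective_subtype _).finrank_eq]

lemma hilbQ_zero : hilbQ T A 0 = hilb A := by
  ext n
  have h : linIdeal T A 0 n = ⊥ := rfl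
  simp only [hilbQ, hilb, PowerSeries.coeff_mk]
  rw [h, finrank_bot, Nat.cast_zero, sub_zero]

lemma linIdeal_le_colonPart (hT : ∀ i j x, T i (T j x) = T j (T i x)) (hA : IsStable T A)
    (k n : ℕ) : linIdeal T A k n ≤ colonPart T A k n :=
  le_inf (linIdeal_le hA k n) fun _ hx => map_linIdeal hT hA k hx

variable [hfin : ∀ n, FiniteDimensional ℚ (A n)]

lemma hilbQ_coeff_nonneg (hA : IsStable T A) (k n : ℕ) : 0 ≤ (hilbQ T A k).coeff n := by
  have := Submodule.finrank_mono (linIdeal_le hA k n)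
  simp only [hilbQ, PowerSeries.coeff_mk]
  omega

lemma hilbQ_succ (hA : IsStable T A) (k : ℕ) :
    hilbQ T A (k + 1) = (1 - PowerSeries.X) * hilbQ T A k + PowerSeries.X * defect T A k := by
  ext n
  cases n with
  | zero =>
    simp only [hilbQ, sub_mul, one_mul, map_add, map_sub, PowerSeries.coeff_mk,
      PowerSeries.coeff_zero_X_mul]
    rw [linIdeal_zero, linIdeal_zero]
    ring
  | succ n =>
    have : FiniteDimensional ℚ (linIdeal T A k (n + 1)) :=
      Submodule.finiteDimensional_of_le (linIdeal_le hA k (n + 1))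
    have : FiniteDimensional ℚ (colonPart T A k n) :=
      Submodule.finiteDimensional_of_le inf_le_left
    have h1 := Submodule.finrank_sup_add_finrank_inf_eq (linIdeal T A k (n + 1)) ((A n).map (T k))
    have h2 := finrank_map_add_inf_ker (T k) (A n)
    have h3 := finrank_map_add_inf_ker (T k) (colonPart T A k n)
    have h4 : linIdeal T A k (n + 1) ⊓ (A n).map (T k) = (colonPart T A k n).map (T k) := by
      ext x
      constructor
      · rintro ⟨hx, y, hy, rfl⟩
        exact ⟨y, ⟨hy, hx⟩, rfl⟩
      · rintro ⟨y, ⟨hy, hx⟩, rfl⟩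
        exact ⟨hx, y, hy, rfl⟩
    have h5 : colonPart T A k n ⊓ LinearMap.ker (T k) = A n ⊓ LinearMap.ker (T k) := by
      ext x
      constructor
      · rintro ⟨⟨hx, -⟩, h⟩
        exact ⟨hx, h⟩
      · rintro ⟨hx, h⟩
        refine ⟨⟨hx, ?_⟩, h⟩
        rw [SetLike.mem_coe, Submodule.mem_comap, LinearMap.mem_ker.1 h]
        exact zero_mem _
    rw [h4] at h1
    rw [h5] at h3
    have h6 : linIdeal T A (k + 1) (n + 1) = linIdeal T A k (n + 1) ⊔ (A n).map (T k) := rfl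
    rw [← h6] at h1
    simp only [hilbQ, defect, sub_mul, one_mul, map_add, map_sub, PowerSeries.coeff_mk,
      PowerSeries.coeff_succ_X_mul]
    omega

lemma defect_coeff_nonneg (hT : ∀ i j x, T i (T j x) = T j (T i x)) (hA : IsStable T A)
    (k n : ℕ) : 0 ≤ (defect T A k).coeff n := by
  have : FiniteDimensional ℚ (colonPart T A k n) :=
    Submodule.finiteDimensional_of_le inf_le_left
  have := Submodule.finrank_mono (linIdeal_le_colonPart hT hA k n)
  simp only [defect, PowerSeries.coeff_mk]
  omega

lemma isReg_iff_defect (hT : ∀ i j x, T i (T j x) = T j (T i x)) (hA : IsStable T A) (m : ℕ) :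
    IsReg T A m ↔ ∀ k < m, defect T A k = 0 := by
  have key : ∀ k n, (defect T A k).coeff n = 0 ↔ colonPart T A k n ≤ linIdeal T A k n := by
    intro k n
    have : FiniteDimensional ℚ (colonPart T A k n) :=
      Submodule.finiteDimensional_of_le inf_le_left
    have hle := linIdeal_le_colonPart hT hA k n
    simp only [defect, PowerSeries.coeff_mk]
    constructor
    · intro h
      exact (Submodule.eq_of_le_of_finrank_eq hle (by omega)).ge
    · intro h
      rw [le_antisymm h hle, sub_self]
  constructor
  · intro h k hk
    ext n
    rw [map_zero, key]
    rintro x ⟨hx, hx'⟩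
    exact h k hk n x hx hx'
  · intro h k hk n x hx hx'
    exact (key k n).1 (by rw [h k hk, map_zero]) ⟨hx, hx'⟩

lemma hilbQ_eq_of_isReg (hT : ∀ i j x, T i (T j x) = T j (T i x)) (hA : IsStable T A) {m : ℕ}
    (h : IsReg T A m) : hilbQ T A m = (1 - PowerSeries.X) ^ m * hilb A := by
  rw [isReg_iff_defect hT hA] at h
  have : ∀ k ≤ m, hilbQ T A k = (1 - PowerSeries.X) ^ k * hilb A := by
    intro k
    induction k with
    | zero => intro _; rw [hilbQ_zero, pow_zero, one_mul]
    | succ k ih =>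
      intro hk
      rw [hilbQ_succ hA, ih (by omega), h k (by omega)]
      ring
  exact this m le_rfl

lemma mul_coeff_nonneg {f g : PowerSeries ℤ} (hf : ∀ n, 0 ≤ f.coeff n) (hg : ∀ n, 0 ≤ g.coeff n)
    (n : ℕ) : 0 ≤ (f * g).coeff n := by
  rw [PowerSeries.coeff_mul]
  exact Finset.sum_nonneg fun _ _ => mul_nonneg (hf _) (hg _)

/-- Numerical criterion for regularity: passing to the quotient by each `T k` multiplies the
Hilbert series by `1 - X` up to a nonnegative error, so if the final series is the expected one,
every error vanishes. -/
lemma isReg_of_hilbQ_eq (hT : ∀ i j x, T i (T j x) = T j (T i x)) (hA : IsStable T A) {m : ℕ}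
    (h : hilbQ T A m = (1 - PowerSeries.X) ^ m * hilb A) : IsReg T A m := by
  rw [isReg_iff_defect hT hA]
  set G : PowerSeries ℤ := PowerSeries.mk 1 with hG
  have hG1 : G * (1 - PowerSeries.X) = 1 := PowerSeries.mk_one_mul_one_sub_eq_one ℤ
  have hGn : ∀ k n, 0 ≤ (G ^ k).coeff n := by
    intro k
    induction k with
    | zero =>
      intro n
      rw [pow_zero, PowerSeries.coeff_one]
      split_ifs <;> simp
    | succ k ih =>
      intro n
      rw [pow_succ]
      exact mul_coeff_nonneg ih (by simp [hG]) n
  have hstep : ∀ k, G ^ (k + 1) * hilbQ T A (k + 1) =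
      G ^ k * hilbQ T A k + G ^ (k + 1) * (PowerSeries.X * defect T A k) := by
    intro k
    rw [hilbQ_succ hA]
    linear_combination (G ^ k * hilbQ T A k) * hG1
  have herr : ∀ k n, 0 ≤ (G ^ (k + 1) * (PowerSeries.X * defect T A k)).coeff n := fun k n =>
    mul_coeff_nonneg (hGn _) (mul_coeff_nonneg
      (fun n => by rw [PowerSeries.coeff_X]; split_ifs <;> simp)
      (defect_coeff_nonneg hT hA k)) n
  have hmono : ∀ n, Monotone fun k => (G ^ k * hilbQ T A k).coeff n := fun n =>
    monotone_nat_of_le_succ fun k => by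
      rw [hstep, map_add]
      linarith [herr k n]
  have hend : G ^ m * hilbQ T A m = G ^ 0 * hilbQ T A 0 := by
    rw [h, hilbQ_zero, ← mul_assoc, ← mul_pow, hG1, one_pow, pow_zero]
  intro k hk
  have h0 : G ^ (k + 1) * (PowerSeries.X * defect T A k) = 0 := by
    ext n
    have h1 := hmono n (Nat.zero_le k)
    have h2 := hmono n (Nat.succ_le_of_lt hk)
    have h3 := herr k n
    simp only [Nat.succ_eq_add_one, hend, hstep, map_add] at h1 h2
    rw [map_zero]
    linarith
  have hGne : G ^ (k + 1) ≠ 0 := pow_ne_zero _ (left_ne_zero_of_mul_eq_one hG1)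
  exact (mul_eq_zero.1 ((mul_eq_zero.1 h0).resolve_left hGne)).resolve_left PowerSeries.X_ne_zero

end GradedModules

/-! ### Signs and boundary operators of links -/

section Signs

variable [LinearOrder α]

lemma sgn_erase {F : Finset α} {v : α} (hv : v ∈ F) :
    sgn F (F.erase v) = (-1) ^ (F.filter (· < v)).card := by
  have h : F \ F.erase v = {v} := by
    ext x
    simp only [Finset.mem_sdiff, Finset.mem_erase, Finset.mem_singleton]
    constructor
    · rintro ⟨h1, h2⟩
      by_contra h
      exact h2 ⟨h, h1⟩
    · rintro rfl
      exact ⟨hv, fun h => h.1 rfl⟩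
  unfold sgn
  rw [h]
  simp

/-- The sign of a vertex cancels in pairs: removing two vertices in the two possible orders gives
opposite signs. -/
lemma sgn_erase_erase {F : Finset α} {v w : α} (hv : v ∈ F) (hw : w ∈ F) (hvw : v ≠ w) :
    sgn F (F.erase v) * sgn (F.erase v) ((F.erase v).erase w) =
      -(sgn F (F.erase w) * sgn (F.erase w) ((F.erase w).erase v)) := by
  wlog h : v < w generalizing v w
  · rw [this hw hv hvw.symm (lt_of_le_of_ne (not_lt.1 h) hvw.symm), neg_neg]
  rw [sgn_erase hv, sgn_erase hw, sgn_erase (Finset.mem_erase.2 ⟨hvw.symm, hw⟩),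
    sgn_erase (Finset.mem_erase.2 ⟨hvw, hv⟩)]
  have h1 : (F.erase w).filter (· < v) = F.filter (· < v) := by
    rw [Finset.filter_erase, Finset.erase_eq_of_notMem]
    simp [h.le]
  have h2 : ((F.erase v).filter (· < w)).card + 1 = (F.filter (· < w)).card := by
    rw [Finset.filter_erase]
    exact Finset.card_erase_add_one (by simp [hv, h])
  rw [h1, ← h2, pow_succ]
  ring

/-- The sign relating a chain on the link of `S` to a chain on the star of `S`. -/
def linkSign (S H : Finset α) : ℚ := (-1) ^ ∑ u ∈ H, (S.filter (· < u)).card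

lemma linkSign_mul_self (S H : Finset α) : linkSign S H * linkSign S H = 1 := by
  unfold linkSign
  rw [← mul_pow]
  norm_num

lemma sgn_union_mul_linkSign {S H : Finset α} {v : α} (hv : v ∈ H) (hS : Disjoint H S) :
    linkSign S (H.erase v) * (sgn (H ∪ S) (H.erase v ∪ S) : ℚ) =
      (sgn H (H.erase v) : ℚ) * linkSign S H := by
  have hvS : v ∉ S := Finset.disjoint_left.1 hS hv
  have h1 : H.erase v ∪ S = (H ∪ S).erase v := by
    rw [Finset.erase_union_distrib, Finset.erase_eq_of_notMem hvS]
  rw [h1, sgn_erase (Finset.mem_union_left _ hv), sgn_erase hv, Finset.filter_union,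
    Finset.card_union_of_disjoint (Finset.disjoint_filter_filter hS)]
  unfold linkSign
  rw [← Finset.sum_erase_add _ _ hv]
  push_cast
  rw [pow_add, pow_add]
  ring

lemma mem_linkF {K : Finset (Finset α)} {S H : Finset α} :
    H ∈ linkF K S ↔ H ∪ S ∈ K ∧ Disjoint H S := by
  unfold linkF
  simp only [Finset.mem_image, Finset.mem_filter]
  constructor
  · rintro ⟨G, ⟨hG, hS⟩, rfl⟩
    rw [Finset.sdiff_union_of_subset hS]
    exact ⟨hG, Finset.sdiff_disjoint⟩
  · rintro ⟨h, hd⟩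
    exact ⟨H ∪ S, ⟨h, Finset.subset_union_right⟩, Finset.union_sdiff_cancel_right hd⟩

lemma exists_erase_eq {F G : Finset α} (h : G ⊆ F) (hc : F.card = G.card + 1) :
    ∃ v ∈ F, v ∉ G ∧ G = F.erase v := by
  have h1 : (F \ G).card = 1 := by rw [Finset.card_sdiff_of_subset h]; omega
  obtain ⟨v, hv⟩ := Finset.card_eq_one.1 h1
  have hv' : v ∈ F \ G := by rw [hv]; exact Finset.mem_singleton_self v
  rw [Finset.mem_sdiff] at hv'
  refine ⟨v, hv'.1, hv'.2, Finset.eq_of_subset_of_card_le ?_ ?_⟩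
  · exact fun x hx => Finset.mem_erase.2 ⟨fun e => hv'.2 (e ▸ hx), h hx⟩
  · rw [Finset.card_erase_of_mem hv'.1]
    omega

/-- Up to signs, the boundary operator of the link of `S` is the boundary operator of `K` on faces
containing `S`. -/
lemma bdry_linkF (K : Finset (Finset α)) (S G : Finset α) (f : Finset α → ℚ)
    (hG : Disjoint G S) :
    bdry (linkF K S) (fun H => linkSign S H * f (H ∪ S)) G = linkSign S G * bdry K f (G ∪ S) := by
  unfold bdry
  rw [Finset.mul_sum]
  refine Finset.sum_bij' (fun H _ => H ∪ S) (fun F _ => F \ S) ?_ ?_ ?_ ?_ ?_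
  · intro H hH
    simp only [Finset.mem_filter, mem_linkF] at hH ⊢
    obtain ⟨⟨h1, h2⟩, h3, h4⟩ := hH
    refine ⟨h1, Finset.union_subset_union_left h3, ?_⟩
    rw [Finset.card_union_of_disjoint h2, Finset.card_union_of_disjoint hG]
    omega
  · intro F hF
    simp only [Finset.mem_filter, mem_linkF] at hF ⊢
    obtain ⟨h1, h2, h3⟩ := hF
    have hS : S ⊆ F := Finset.subset_union_right.trans h2
    refine ⟨⟨by rwa [Finset.sdiff_union_of_subset hS], Finset.sdiff_disjoint⟩, ?_, ?_⟩
    · exact Finset.subset_sdiff.2 ⟨Finset.subset_union_left.trans h2, hG⟩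
    · rw [Finset.card_union_of_disjoint hG] at h3
      rw [Finset.card_sdiff_of_subset hS]
      omega
  · intro H hH
    simp only [Finset.mem_filter, mem_linkF] at hH
    exact Finset.union_sdiff_cancel_right hH.1.2
  · intro F hF
    simp only [Finset.mem_filter] at hF
    exact Finset.sdiff_union_of_subset (Finset.subset_union_right.trans hF.2.1)
  · intro H hH
    simp only [Finset.mem_filter, mem_linkF] at hH
    obtain ⟨⟨-, h2⟩, h3, h4⟩ := hH
    obtain ⟨v, hv, -, rfl⟩ := exists_erase_eq h3 h4
    rw [← mul_assoc, ← mul_assoc, sgn_union_mul_linkSign hv h2]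

end Signs

/-! ### The complex of coordinate polynomial rings -/

/-- A pair `(F, a)` stands for the monomial `x^a` in the copy of the polynomial ring attached to
the face `F`. -/
abbrev Cell (α : Type*) := (_ : Finset α) × (α →₀ ℕ)

/-- Multiplication by the linear form `∑ p u • x_u` on the direct sum over `F` of the polynomial
rings in the vertices of `F`; on the summand of `F` the variables outside `F` act as zero. -/
noncomputable def mulForm (p : α → ℚ) : (Cell α →₀ ℚ) →ₗ[ℚ] (Cell α →₀ ℚ) :=
  Finsupp.linearCombination ℚ fun x : Cell α =>
    ∑ u ∈ x.1, p u • Finsupp.single (⟨x.1, x.2 + Finsupp.single u 1⟩ : Cell α) (1 : ℚ)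

/-- The monomials of degree `n` in the summands of the faces of cardinality `j`. -/
noncomputable def cells (K : Finset (Finset α)) (j n : ℕ) : Finset (Cell α) :=
  (K.filter fun F => F.card = j).sigma fun F => F.finsuppAntidiag n

/-- The degree `n` part of `⨁ ℚ[x_v : v ∈ F]`, the sum being over the faces `F` of cardinality
`j`. -/
noncomputable def faceMod (K : Finset (Finset α)) (j n : ℕ) : Submodule ℚ (Cell α →₀ ℚ) :=
  Finsupp.supported ℚ ℚ (cells K j n : Set (Cell α))

lemma mem_cells {K : Finset (Finset α)} {j n : ℕ} {x : Cell α} :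
    x ∈ cells K j n ↔ (x.1 ∈ K ∧ x.1.card = j) ∧ x.1.sum x.2 = n ∧ x.2.support ⊆ x.1 := by
  simp [cells, Finset.mem_sigma, Finset.mem_finsuppAntidiag]

lemma mem_faceMod {K : Finset (Finset α)} {j n : ℕ} {z : Cell α →₀ ℚ} :
    z ∈ faceMod K j n ↔ ∀ x, z x ≠ 0 → x ∈ cells K j n := by
  rw [faceMod, Finsupp.mem_supported]
  constructor
  · intro h x hx
    exact h (Finsupp.mem_support_iff.2 hx)
  · intro h x hx
    exact h x (Finsupp.mem_support_iff.1 hx)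

lemma single_mem_faceMod {K : Finset (Finset α)} {j n : ℕ} {x : Cell α} (c : ℚ)
    (hx : x ∈ cells K j n) : Finsupp.single x c ∈ faceMod K j n :=
  Finsupp.single_mem_supported ℚ c hx

lemma faceMod_le_of_single {K : Finset (Finset α)} {j n : ℕ} {M : Submodule ℚ (Cell α →₀ ℚ)}
    (h : ∀ x ∈ cells K j n, Finsupp.single x (1 : ℚ) ∈ M) : faceMod K j n ≤ M := by
  rw [faceMod, Finsupp.supported_eq_span_single, Submodule.span_le]
  rintro _ ⟨x, hx, rfl⟩
  exact h x hx

lemma mulForm_single (p : α → ℚ) (x : Cell α) :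
    mulForm p (Finsupp.single x 1) =
      ∑ u ∈ x.1, p u • Finsupp.single (⟨x.1, x.2 + Finsupp.single u 1⟩ : Cell α) (1 : ℚ) := by
  rw [mulForm, Finsupp.linearCombination_single, one_smul]

lemma mulForm_comm (p q : α → ℚ) (z : Cell α →₀ ℚ) :
    mulForm p (mulForm q z) = mulForm q (mulForm p z) := by
  suffices h : mulForm p ∘ₗ mulForm q = mulForm q ∘ₗ mulForm p from LinearMap.congr_fun h z
  refine Finsupp.lhom_ext' fun x => LinearMap.ext_ring ?_
  simp only [LinearMap.comp_apply, Finsupp.lsingle_apply, mulForm_single, map_sum, map_smul,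
    Finset.smul_sum]
  rw [Finset.sum_comm]
  refine Finset.sum_congr rfl fun u _ => Finset.sum_congr rfl fun w _ => ?_
  rw [smul_comm, add_right_comm]

lemma add_single_mem_cells {K : Finset (Finset α)} {j n : ℕ} {x : Cell α} (hx : x ∈ cells K j n)
    {u : α} (hu : u ∈ x.1) :
    (⟨x.1, x.2 + Finsupp.single u 1⟩ : Cell α) ∈ cells K j (n + 1) := by
  rw [mem_cells] at hx ⊢
  refine ⟨hx.1, ?_, ?_⟩
  · simp only [Finsupp.coe_add, Pi.add_apply, Finset.sum_add_distrib]
    rw [hx.2.1]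
    simp [Finsupp.single_apply, hu]
  · refine Finsupp.support_add.trans (Finset.union_subset hx.2.2 ?_)
    exact Finsupp.support_single_subset.trans (Finset.singleton_subset_iff.2 hu)

lemma faceMod_stable (p : ℕ → α → ℚ) (K : Finset (Finset α)) (j : ℕ) :
    IsStable (fun l => mulForm (p l)) (faceMod K j) := by
  intro l n
  change faceMod K j n ≤ (faceMod K j (n + 1)).comap (mulForm (p l))
  refine faceMod_le_of_single fun x hx => ?_
  rw [Submodule.mem_comap, mulForm_single]
  exact sum_mem fun u hu => Submodule.smul_mem _ _
    (single_mem_faceMod _ (add_single_mem_cells hx hu))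

instance (K : Finset (Finset α)) (j n : ℕ) : FiniteDimensional ℚ (faceMod K j n) :=
  Module.Finite.equiv (Finsupp.supportedEquivFinsupp (M := ℚ) (R := ℚ)
    (cells K j n : Set (Cell α))).symm

lemma finrank_faceMod (K : Finset (Finset α)) (j n : ℕ) :
    Module.finrank ℚ (faceMod K j n) = fvec K j * j.multichoose n := by
  have h : Module.finrank ℚ (faceMod K j n) = (cells K j n).card := by
    rw [faceMod, (Finsupp.supportedEquivFinsupp (M := ℚ) (R := ℚ)
      (cells K j n : Set (Cell α))).finrank_eq, Module.finrank_finsupp_self]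
    simp
  rw [h, cells, Finset.card_sigma, fvec, Finset.sum_congr rfl (g := fun _ => j.multichoose n),
    Finset.sum_const, smul_eq_mul]
  intro F hF
  rw [Finset.card_finsuppAntidiag_nat_eq_multichoose, (Finset.mem_filter.1 hF).2]

lemma hilb_faceMod (K : Finset (Finset α)) (j : ℕ) :
    (1 - PowerSeries.X) ^ j * hilb (faceMod K j) = PowerSeries.C (fvec K j : ℤ) := by
  have h : hilb (faceMod K j) =
      PowerSeries.C (fvec K j : ℤ) * (PowerSeries.invOneSubPow ℤ j).val := by
    ext n
    rw [PowerSeries.coeff_C_mul, hilb, PowerSeries.coeff_mk, finrank_faceMod, Nat.cast_mul]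
    congr 1
    cases j with
    | zero =>
      rw [PowerSeries.invOneSubPow_zero, Units.val_one, PowerSeries.coeff_one]
      cases n <;> simp
    | succ j =>
      rw [PowerSeries.invOneSubPow_val_succ_eq_mk_add_choose, PowerSeries.coeff_mk,
        Nat.multichoose_eq]
      congr 1
      rw [show j + 1 + n - 1 = j + n by omega, ← Nat.choose_symm_of_eq_add]
      omega
  rw [h, ← PowerSeries.invOneSubPow_inv_eq_one_sub_pow, mul_left_comm, Units.inv_val, mul_one]

/-- The Vandermonde linear forms `∑ t_u ^ l x_u`, `l < j`, generate the irrelevant ideal of the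
polynomial ring in any `j` variables: by Lagrange interpolation each variable is a linear
combination of them. -/
lemma linIdeal_faceMod {K : Finset (Finset α)} {t : α → ℚ}
    (ht : ∀ F ∈ K, Set.InjOn t (F : Set α)) (j n : ℕ) :
    linIdeal (fun l => mulForm fun u => t u ^ l) (faceMod K j) j (n + 1) =
      faceMod K j (n + 1) := by
  refine le_antisymm (linIdeal_le (faceMod_stable (fun l u => t u ^ l) K j) _ _) ?_
  refine faceMod_le_of_single fun x hx => ?_
  obtain ⟨F, a⟩ := x
  have hx' := mem_cells.1 hx
  obtain ⟨⟨hF, hj⟩, hn, hs⟩ := hx'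
  simp only at hF hj hn hs
  obtain ⟨v, hv, hav⟩ : ∃ v ∈ F, a v ≠ 0 := by
    by_contra! hcon
    rw [Finset.sum_eq_zero hcon] at hn
    omega
  set b : α →₀ ℕ := a - Finsupp.single v 1
  have hba : b + Finsupp.single v 1 = a :=
    tsub_add_cancel_of_le (Finsupp.single_le_iff.2 (by omega))
  have hb : (⟨F, b⟩ : Cell α) ∈ cells K j n := by
    rw [mem_cells]
    refine ⟨⟨hF, hj⟩, ?_, fun u hu => hs ?_⟩
    · have : F.sum b + 1 = n + 1 := by
        rw [← hn, ← hba]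
        simp only [Finsupp.coe_add, Pi.add_apply, Finset.sum_add_distrib]
        simp [Finsupp.single_apply, hv]
      change F.sum b = n
      omega
    · rw [Finsupp.mem_support_iff] at hu ⊢
      rw [← hba]
      simp only [Finsupp.coe_add, Pi.add_apply]
      change b u ≠ 0 at hu
      omega
  set P := Lagrange.basis F t v with hP
  have hdeg : P.natDegree < j := by
    rw [hP, Lagrange.natDegree_basis (ht F hF) hv, hj]
    have := Finset.card_pos.2 ⟨v, hv⟩
    omega
  have key : Finsupp.single (⟨F, a⟩ : Cell α) (1 : ℚ) =
      ∑ l ∈ Finset.range j,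
        P.coeff l • mulForm (fun u => t u ^ l) (Finsupp.single (⟨F, b⟩ : Cell α) 1) := by
    simp only [mulForm_single, Finset.smul_sum, smul_smul]
    rw [Finset.sum_comm]
    simp only [← Finset.sum_smul, ← Polynomial.eval_eq_sum_range' hdeg]
    rw [Finset.sum_eq_single v]
    · rw [hP, Lagrange.eval_basis_self (ht F hF) hv, one_smul, hba]
    · intro u hu huv
      rw [hP, Lagrange.eval_basis_of_ne huv.symm hu, zero_smul]
    · exact fun h => absurd hv h
  rw [key]
  exact sum_mem fun l hl => Submodule.smul_mem _ _
    (apply_mem_linIdeal (T := fun l => mulForm fun u => t u ^ l) (Finset.mem_range.1 hl)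
      (single_mem_faceMod 1 hb))

lemma isReg_faceMod {K : Finset (Finset α)} {t : α → ℚ}
    (ht : ∀ F ∈ K, Set.InjOn t (F : Set α)) (j : ℕ) :
    IsReg (fun l => mulForm fun u => t u ^ l) (faceMod K j) j := by
  refine isReg_of_hilbQ_eq (fun _ _ _ => mulForm_comm _ _ _)
    (faceMod_stable (fun l u => t u ^ l) K j) ?_
  rw [hilb_faceMod]
  ext n
  simp only [hilbQ, PowerSeries.coeff_mk, PowerSeries.coeff_C]
  cases n with
  | zero =>
    rw [linIdeal_zero, finrank_bot, finrank_faceMod]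
    simp
  | succ n =>
    rw [linIdeal_faceMod ht]
    simp

/-! ### The differential and its exactness -/

section Differential

variable [LinearOrder α]

/-- The differential sending the summand of a face `F` to those of its facets `F \ {v}`, by the
signed sum of the maps setting `x_v` to zero. -/
noncomputable def faceDiff : (Cell α →₀ ℚ) →ₗ[ℚ] (Cell α →₀ ℚ) :=
  Finsupp.linearCombination ℚ fun x : Cell α =>
    ∑ v ∈ x.1 \ x.2.support,
      (sgn x.1 (x.1.erase v) : ℚ) • Finsupp.single (⟨x.1.erase v, x.2⟩ : Cell α) (1 : ℚ)

lemma faceDiff_single (x : Cell α) :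
    faceDiff (Finsupp.single x 1) = ∑ v ∈ x.1 \ x.2.support,
      (sgn x.1 (x.1.erase v) : ℚ) • Finsupp.single (⟨x.1.erase v, x.2⟩ : Cell α) (1 : ℚ) := by
  rw [faceDiff, Finsupp.linearCombination_single, one_smul]

lemma faceDiff_mulForm (p : α → ℚ) (z : Cell α →₀ ℚ) :
    faceDiff (mulForm p z) = mulForm p (faceDiff z) := by
  suffices h : faceDiff ∘ₗ mulForm p = mulForm p ∘ₗ faceDiff from LinearMap.congr_fun h z
  refine Finsupp.lhom_ext' fun x => LinearMap.ext_ring ?_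
  simp only [LinearMap.comp_apply, Finsupp.lsingle_apply, mulForm_single, faceDiff_single,
    map_sum, map_smul, Finset.smul_sum]
  rw [Finset.sum_comm' (t' := x.1 \ x.2.support) (s' := fun v => x.1.erase v)]
  · exact Finset.sum_congr rfl fun v _ => Finset.sum_congr rfl fun u _ => smul_comm _ _ _
  · intro u v
    simp only [Finset.mem_sdiff, Finsupp.mem_support_iff, Finset.mem_erase, Finsupp.coe_add,
      Pi.add_apply, Finsupp.single_apply, not_not]
    by_cases h : u = v
    · simp [h]
    · simp [h]

lemma faceDiff_faceDiff (z : Cell α →₀ ℚ) : faceDiff (faceDiff z) = 0 := by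
  suffices h : faceDiff ∘ₗ faceDiff = (0 : (Cell α →₀ ℚ) →ₗ[ℚ] (Cell α →₀ ℚ)) from
    LinearMap.congr_fun h z
  refine Finsupp.lhom_ext' fun x => LinearMap.ext_ring ?_
  obtain ⟨F, a⟩ := x
  simp only [LinearMap.comp_apply, Finsupp.lsingle_apply, faceDiff_single, map_sum, map_smul,
    Finset.smul_sum, LinearMap.zero_apply, smul_smul]
  -- the double sum equals its own negative, by exchanging the two removed vertices
  rw [← self_eq_neg]
  conv_rhs => rw [Finset.sum_comm' (t' := F \ a.support) (s' := fun v => F.erase v \ a.support)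
    (by
      intro u v
      simp only [Finset.mem_sdiff, Finset.mem_erase]
      tauto)]
  rw [← Finset.sum_neg_distrib]
  refine Finset.sum_congr rfl fun v hv => ?_
  rw [← Finset.sum_neg_distrib]
  refine Finset.sum_congr rfl fun w hw => ?_
  simp only [Finset.mem_sdiff, Finset.mem_erase] at hv hw
  rw [← neg_smul, Finset.erase_right_comm]
  congr 1
  have h := sgn_erase_erase hv.1 hw.1.2 hw.1.1.symm
  rw [Finset.erase_right_comm (a := v) (b := w)] at h
  exact_mod_cast h

lemma faceDiff_mem {K : Finset (Finset α)} (hK : IsComplex K) {j n : ℕ} {z : Cell α →₀ ℚ}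
    (hz : z ∈ faceMod K (j + 1) n) : faceDiff z ∈ faceMod K j n := by
  suffices h : faceMod K (j + 1) n ≤ (faceMod K j n).comap faceDiff from h hz
  refine faceMod_le_of_single fun x hx => ?_
  rw [Submodule.mem_comap, faceDiff_single]
  refine sum_mem fun v hv => Submodule.smul_mem _ _ (single_mem_faceMod _ ?_)
  rw [mem_cells] at hx ⊢
  rw [Finset.mem_sdiff, Finsupp.mem_support_iff, not_not] at hv
  refine ⟨⟨hK.2 _ hx.1.1 _ (Finset.erase_subset _ _), ?_⟩, ?_, fun u hu => ?_⟩
  · rw [Finset.card_erase_of_mem hv.1, hx.1.2]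
    omega
  · simp only
    rw [Finset.sum_erase _ hv.2]
    exact hx.2.1
  · refine Finset.mem_erase.2 ⟨?_, hx.2.2 hu⟩
    rintro rfl
    exact Finsupp.mem_support_iff.1 hu hv.2

lemma faceDiff_eq_zero_of_card {K : Finset (Finset α)} {n : ℕ} {z : Cell α →₀ ℚ}
    (hz : z ∈ faceMod K 0 n) : faceDiff z = 0 := by
  suffices h : faceMod K 0 n ≤ LinearMap.ker faceDiff from h hz
  refine faceMod_le_of_single fun x hx => ?_
  rw [mem_cells, Finset.card_eq_zero] at hx
  rw [LinearMap.mem_ker, faceDiff_single, hx.1.2]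
  simp

/-- In each multidegree `a`, the differential is the simplicial boundary operator on the faces
containing the support of `a`. -/
lemma faceDiff_apply {K : Finset (Finset α)} {z : Cell α →₀ ℚ}
    (hz : ∀ x, z x ≠ 0 → x.1 ∈ K ∧ x.2.support ⊆ x.1) (G : Finset α) (a : α →₀ ℕ) :
    faceDiff z ⟨G, a⟩ = if a.support ⊆ G then bdry K (fun F => z ⟨F, a⟩) G else 0 := by
  have hz' : z ∈ Finsupp.supported ℚ ℚ {x : Cell α | x.1 ∈ K ∧ x.2.support ⊆ x.1} := by
    rw [Finsupp.mem_supported]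
    exact fun x hx => hz x (Finsupp.mem_support_iff.1 hx)
  clear hz
  rw [Finsupp.supported_eq_span_single] at hz'
  induction hz' using Submodule.span_induction with
  | zero => simp [bdry]
  | add x y _ _ hx hy =>
    rw [map_add, Finsupp.add_apply, hx, hy]
    split_ifs
    · simp [bdry, mul_add, Finset.sum_add_distrib]
    · simp
  | smul c x _ hx =>
    rw [map_smul, Finsupp.smul_apply, hx]
    split_ifs
    · simp only [bdry, Finsupp.smul_apply, smul_eq_mul, Finset.mul_sum]
      exact Finset.sum_congr rfl fun _ _ => mul_left_comm _ _ _
    · simp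
  | mem x hx =>
    obtain ⟨⟨F, b⟩, ⟨hF, hb⟩, rfl⟩ := hx
    change F ∈ K at hF
    change b.support ⊆ F at hb
    have hsingle : ∀ F' G' : Finset α, ∀ a' b' : α →₀ ℕ,
        Finsupp.single (⟨F', b'⟩ : Cell α) (1 : ℚ) ⟨G', a'⟩ =
          if F' = G' ∧ b' = a' then 1 else 0 := by
      intro F' G' a' b'
      rw [Finsupp.single_apply]
      simp
    rw [faceDiff_single, Finsupp.finsetSum_apply]
    simp only [Finsupp.smul_apply, smul_eq_mul, hsingle, bdry]
    by_cases hab : b = a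
    · subst hab
      by_cases hex : ∃ v ∈ F \ b.support, F.erase v = G
      · obtain ⟨v, hv, rfl⟩ := hex
        rw [Finset.mem_sdiff] at hv
        have hsub : b.support ⊆ F.erase v := by
          intro u hu
          refine Finset.mem_erase.2 ⟨?_, hb hu⟩
          rintro rfl
          exact hv.2 hu
        rw [if_pos hsub, Finset.sum_eq_single v, Finset.sum_eq_single F]
        · simp
        · intro F' _ hne
          rw [if_neg (fun h => hne h.1.symm), mul_zero]
        · intro h
          refine absurd (Finset.mem_filter.2 ⟨hF, Finset.erase_subset _ _, ?_⟩) h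
          exact (Finset.card_erase_add_one hv.1).symm
        · intro w hw hwv
          rw [if_neg, mul_zero]
          rintro ⟨h, -⟩
          have : w ∈ F.erase v := Finset.mem_erase.2 ⟨hwv, (Finset.mem_sdiff.1 hw).1⟩
          rw [← h] at this
          exact (Finset.mem_erase.1 this).1 rfl
        · exact fun h => absurd (Finset.mem_sdiff.2 hv) h
      · rw [Finset.sum_eq_zero fun w hw => by
          rw [if_neg fun h => hex ⟨w, hw, h.1⟩, mul_zero]]
        split_ifs with hs
        · refine (Finset.sum_eq_zero fun F' hF' => ?_).symm
          rw [if_neg, mul_zero]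
          rintro ⟨rfl, -⟩
          obtain ⟨-, h1, h2⟩ := Finset.mem_filter.1 hF'
          obtain ⟨v, hv, hvG, h⟩ := exists_erase_eq h1 h2
          exact hex ⟨v, Finset.mem_sdiff.2 ⟨hv, fun h => hvG (hs h)⟩, h.symm⟩
        · rfl
    · simp [hab]

/-- The cycles of the complex of face modules; for `j = r` and a Cohen–Macaulay complex of
dimension `r - 1` this is the canonical module of the Stanley–Reisner ring. -/
noncomputable def cycleMod (K : Finset (Finset α)) (j n : ℕ) : Submodule ℚ (Cell α →₀ ℚ) :=
  faceMod K j n ⊓ LinearMap.ker faceDiff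

/-- Exactness in a single multidegree `a`: this is the vanishing of the homology of the link of
the support of `a`. -/
lemma exists_faceDiff_eq_of_multidegree {K : Finset (Finset α)} {r : ℕ} (hK : IsComplex K)
    (hp : IsPure K r) (hCM : IsCM K) {j n : ℕ} (hj : j < r) {a : α →₀ ℕ} {z : Cell α →₀ ℚ}
    (hz : z ∈ cycleMod K j n) (ha : ∀ x, z x ≠ 0 → x.2 = a) :
    ∃ y ∈ faceMod K (j + 1) n, faceDiff y = z := by
  by_cases hz0 : z = 0
  · exact ⟨0, zero_mem _, by rw [hz0, map_zero]⟩
  obtain ⟨hzm, hzd⟩ := hz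
  have hzm' := mem_faceMod.1 hzm
  have hzd' : faceDiff z = 0 := hzd
  obtain ⟨⟨F₀, a₀⟩, hx⟩ : ∃ x, z x ≠ 0 := by
    by_contra! h
    exact hz0 (Finsupp.ext h)
  obtain rfl : a₀ = a := ha _ hx
  obtain ⟨⟨hF₀, hF₀j⟩, hn, haF₀⟩ := mem_cells.1 (hzm' _ hx)
  simp only at hF₀ hF₀j hn haF₀
  set S := a₀.support with hS
  have hsum : ∀ F, S ⊆ F → F.sum a₀ = n := by
    intro F hF
    rw [← hn, ← Finset.sum_subset hF, ← Finset.sum_subset haF₀] <;>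
    · intro u _ hu
      simpa [hS] using hu
  have hSK : S ∈ K := hK.2 _ hF₀ _ haF₀
  have hSj : S.card ≤ j := hF₀j ▸ Finset.card_le_card haF₀
  have hzS : ∀ F, z ⟨F, a₀⟩ ≠ 0 → S ⊆ F := fun F hF => (mem_cells.1 (hzm' _ hF)).2.2
  obtain ⟨B, hB, hSB, hBr⟩ := hp S hSK
  have hsup : j - S.card < (linkF K S).sup Finset.card := by
    have h1 : B \ S ∈ linkF K S := by
      rw [mem_linkF, Finset.sdiff_union_of_subset hSB]
      exact ⟨hB, Finset.sdiff_disjoint⟩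
    have h2 := Finset.le_sup (f := Finset.card) h1
    rw [Finset.card_sdiff_of_subset hSB] at h2
    omega
  -- the chain on the link of `S` corresponding to `z`
  set c : Finset α → ℚ := fun H => if Disjoint H S then linkSign S H * z ⟨H ∪ S, a₀⟩ else 0
    with hc
  have hbdry_congr : ∀ f g : Finset α → ℚ, ∀ G, (∀ H ∈ linkF K S, f H = g H) →
      bdry (linkF K S) f G = bdry (linkF K S) g G := fun f g G h =>
    Finset.sum_congr rfl fun H hH => by rw [h H (Finset.mem_filter.1 hH).1]
  have hbz : ∀ G, S ⊆ G → bdry K (fun F => z ⟨F, a₀⟩) G = 0 := by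
    intro G hG
    have h := faceDiff_apply (K := K) (z := z) (fun x hx => by
      have := mem_cells.1 (hzm' x hx)
      exact ⟨this.1.1, this.2.2⟩) G a₀
    rw [if_pos hG, hzd'] at h
    exact h.symm
  have hbnd : ∀ f G, ¬ Disjoint G S → bdry (linkF K S) f G = 0 := by
    intro f G hG
    refine Finset.sum_eq_zero fun H hH => ?_
    obtain ⟨h1, h2, -⟩ := Finset.mem_filter.1 hH
    exact absurd (Finset.disjoint_of_subset_left h2 (mem_linkF.1 h1).2) hG
  obtain ⟨d, hd, hdc⟩ := hCM S hSK (j - S.card) hsup c (by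
    intro H hH
    have hdis : Disjoint H S := by
      by_contra h
      exact hH (if_neg h)
    rw [hc] at hH
    simp only [if_pos hdis] at hH
    obtain ⟨⟨h1, h2⟩, -⟩ := mem_cells.1 (hzm' _ (right_ne_zero_of_mul hH))
    simp only at h1 h2
    rw [Finset.card_union_of_disjoint hdis] at h2
    exact ⟨mem_linkF.2 ⟨h1, hdis⟩, by omega⟩) (by
    intro G
    by_cases hG : Disjoint G S
    · rw [hbdry_congr c (fun H => linkSign S H * z ⟨H ∪ S, a₀⟩) G
        (fun H hH => if_pos (mem_linkF.1 hH).2),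
        bdry_linkF K S G (fun F => z ⟨F, a₀⟩) hG, hbz _ Finset.subset_union_right, mul_zero]
    · exact hbnd _ _ hG)
  set y : Cell α →₀ ℚ := ∑ F ∈ K.filter (fun F => S ⊆ F ∧ F.card = j + 1),
    Finsupp.single (⟨F, a₀⟩ : Cell α) (linkSign S (F \ S) * d (F \ S)) with hy
  have hycells : ∀ F ∈ K.filter (fun F => S ⊆ F ∧ F.card = j + 1),
      (⟨F, a₀⟩ : Cell α) ∈ cells K (j + 1) n := by
    intro F hF
    obtain ⟨h1, h2, h3⟩ := Finset.mem_filter.1 hF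
    exact mem_cells.2 ⟨⟨h1, h3⟩, hsum F h2, h2⟩
  have hym : y ∈ faceMod K (j + 1) n := sum_mem fun F hF => single_mem_faceMod _ (hycells F hF)
  have hyval : ∀ F b, y ⟨F, b⟩ =
      if b = a₀ ∧ F ∈ K ∧ S ⊆ F ∧ F.card = j + 1 then linkSign S (F \ S) * d (F \ S) else 0 := by
    intro F b
    rw [hy, Finsupp.finsetSum_apply]
    by_cases hb : b = a₀
    · subst hb
      simp [Finsupp.single_apply, Finset.sum_ite_eq', Finset.mem_filter]
    · rw [if_neg (fun h => hb h.1)]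
      refine Finset.sum_eq_zero fun F' _ => ?_
      rw [Finsupp.single_apply, if_neg]
      intro h
      simp only [Sigma.mk.injEq, heq_eq_eq] at h
      exact hb h.2.symm
  refine ⟨y, hym, Finsupp.ext ?_⟩
  rintro ⟨G, b⟩
  rw [faceDiff_apply (K := K) fun x hx => by
    have := mem_cells.1 (mem_faceMod.1 hym x hx)
    exact ⟨this.1.1, this.2.2⟩]
  by_cases hb : b = a₀
  · subst hb
    by_cases hSG : S ⊆ G
    · have hdis : Disjoint (G \ S) S := Finset.sdiff_disjoint
      have h1 := bdry_linkF K S (G \ S) (fun F => y ⟨F, b⟩) hdis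
      rw [hbdry_congr _ d _ ?_, hdc, Finset.sdiff_union_of_subset hSG] at h1
      · rw [if_pos hSG]
        have h2 := congrArg (fun q => linkSign S (G \ S) * q) h1
        simp only [← mul_assoc, linkSign_mul_self, one_mul] at h2
        rw [← h2, hc]
        simp only [if_pos hdis, ← mul_assoc, linkSign_mul_self, one_mul,
          Finset.sdiff_union_of_subset hSG]
      · intro H hH
        obtain ⟨h2, h3⟩ := mem_linkF.1 hH
        rw [hyval, Finset.union_sdiff_cancel_right h3]
        split_ifs with h
        · rw [← mul_assoc, linkSign_mul_self, one_mul]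
        · rw [mul_zero]
          by_contra h0
          refine h ⟨rfl, h2, Finset.subset_union_right, ?_⟩
          rw [Finset.card_union_of_disjoint h3, (hd H (Ne.symm h0)).2]
          omega
    · rw [if_neg hSG]
      by_contra h
      exact hSG (hzS G (Ne.symm h))
  · have h0 : z ⟨G, b⟩ = 0 := by
      by_contra h
      exact hb (ha _ h)
    rw [h0]
    split_ifs
    · refine Finset.sum_eq_zero fun F _ => ?_
      simp only [hyval]
      rw [if_neg (fun h => hb h.1), mul_zero]
    · rfl

/-- For a Cohen–Macaulay complex, the complex of face modules is exact below the top cardinality: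
the multidegree components of a cycle are cycles, and each of them is a boundary. -/
lemma exists_faceDiff_eq {K : Finset (Finset α)} {r : ℕ} (hK : IsComplex K)
    (hp : IsPure K r) (hCM : IsCM K) {j n : ℕ} (hj : j < r) {z : Cell α →₀ ℚ}
    (hz : z ∈ cycleMod K j n) : ∃ y ∈ faceMod K (j + 1) n, faceDiff y = z := by
  have hz1 := mem_faceMod.1 hz.1
  have hcond : ∀ w : Cell α →₀ ℚ, w ∈ faceMod K j n → ∀ x, w x ≠ 0 →
      x.1 ∈ K ∧ x.2.support ⊆ x.1 := fun w hw x hx => by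
    have := mem_cells.1 (mem_faceMod.1 hw x hx)
    exact ⟨this.1.1, this.2.2⟩
  have hpart : ∀ a : α →₀ ℕ, ∃ y ∈ faceMod K (j + 1) n,
      faceDiff y = z.filter fun x => x.2 = a := by
    intro a
    have hmem : (z.filter fun x => x.2 = a) ∈ faceMod K j n := by
      rw [mem_faceMod]
      intro x hx
      rw [Finsupp.filter_apply] at hx
      split_ifs at hx with h
      · exact hz1 x hx
      · exact absurd rfl hx
    refine exists_faceDiff_eq_of_multidegree hK hp hCM hj (a := a) ⟨hmem, ?_⟩ ?_
    · rw [SetLike.mem_coe, LinearMap.mem_ker]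
      ext ⟨G, b⟩
      rw [faceDiff_apply (hcond _ hmem)]
      have h0 := faceDiff_apply (hcond _ hz.1) G b
      rw [show faceDiff z = 0 from hz.2] at h0
      by_cases hb : b = a
      · simp only [Finsupp.filter_apply, if_pos hb]
        exact h0.symm
      · simp [hb, bdry]
    · intro x hx
      rw [Finsupp.filter_apply] at hx
      by_contra h
      exact hx (if_neg h)
  choose y hy hyd using hpart
  refine ⟨∑ a ∈ z.support.image (fun x => x.2), y a, sum_mem fun a _ => hy a, ?_⟩
  rw [map_sum]
  ext x
  simp only [hyd, Finsupp.finsetSum_apply, Finsupp.filter_apply]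
  rw [Finset.sum_ite_eq]
  split_ifs with h
  · rfl
  · by_contra h0
    exact h (Finset.mem_image_of_mem _ (Finsupp.mem_support_iff.2 (Ne.symm h0)))

end Differential

/-! ### Nonnegativity of the `h`-vector -/

section Nonneg

variable [LinearOrder α]

lemma cycleMod_zero (K : Finset (Finset α)) (n : ℕ) : cycleMod K 0 n = faceMod K 0 n :=
  inf_eq_left.2 fun _ hz => faceDiff_eq_zero_of_card hz

instance (K : Finset (Finset α)) (j n : ℕ) : FiniteDimensional ℚ (cycleMod K j n) :=
  Submodule.finiteDimensional_of_le (S₂ := faceMod K j n) inf_le_left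

lemma hilb_cycleMod_succ {K : Finset (Finset α)} {r : ℕ} (hK : IsComplex K)
    (hp : IsPure K r) (hCM : IsCM K) {j : ℕ} (hj : j < r) :
    hilb (cycleMod K (j + 1)) = hilb (faceMod K (j + 1)) - hilb (cycleMod K j) := by
  ext n
  have h := finrank_map_add_inf_ker faceDiff (faceMod K (j + 1) n)
  have h1 : (faceMod K (j + 1) n).map faceDiff = cycleMod K j n := by
    ext z
    constructor
    · rintro ⟨y, hy, rfl⟩
      exact ⟨faceDiff_mem hK hy, faceDiff_faceDiff y⟩
    · intro hz
      obtain ⟨y, hy, h⟩ := exists_faceDiff_eq hK hp hCM hj hz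
      exact ⟨y, hy, h⟩
  rw [h1] at h
  simp only [hilb, PowerSeries.coeff_mk, map_sub]
  rw [← h, cycleMod]
  push_cast
  ring

/-- The module of `m`-cycles has depth at least `m`: break the exact complex of face modules into
short exact sequences and apply the depth lemma to each. -/
lemma isReg_cycleMod {K : Finset (Finset α)} {r : ℕ} (hK : IsComplex K)
    (hp : IsPure K r) (hCM : IsCM K) {t : α → ℚ} (ht : ∀ F ∈ K, Set.InjOn t (F : Set α))
    {m : ℕ} (hm : m ≤ r) : IsReg (fun l => mulForm fun u => t u ^ l) (cycleMod K m) m := by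
  induction m with
  | zero => exact fun k hk => absurd hk (Nat.not_lt_zero k)
  | succ m ih =>
    exact isReg_of_exact (A := cycleMod K (m + 1)) (B := faceMod K (m + 1)) (C := cycleMod K m)
      (fun _ _ _ => mulForm_comm _ _ _)
      (faceMod_stable (fun l u => t u ^ l) K (m + 1)) faceDiff
      (fun _ _ => faceDiff_mulForm _ _) (fun _ _ => Iff.rfl)
      (fun n x hx => ⟨faceDiff_mem hK hx, faceDiff_faceDiff x⟩)
      (fun n z hz => exists_faceDiff_eq hK hp hCM (by omega) hz) (ih (by omega))
      (isReg_faceMod ht (m + 1))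

lemma hilb_cycleMod {K : Finset (Finset α)} {r : ℕ} (hK : IsComplex K)
    (hp : IsPure K r) (hCM : IsCM K) {m : ℕ} (hm : m ≤ r) :
    (1 - PowerSeries.X) ^ m * hilb (cycleMod K m) =
      ∑ j ∈ Finset.range (m + 1),
        PowerSeries.C ((-1 : ℤ) ^ (m - j) * fvec K j) * (1 - PowerSeries.X) ^ (m - j) := by
  induction m with
  | zero =>
    have h := hilb_faceMod K 0
    rw [show cycleMod K 0 = faceMod K 0 from funext fun n => cycleMod_zero K n, h]
    simp
  | succ m ih =>
    have ih' := ih (by omega)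
    rw [hilb_cycleMod_succ hK hp hCM (by omega), mul_sub, hilb_faceMod, Finset.sum_range_succ,
      pow_succ', mul_assoc, ih', Finset.mul_sum, sub_eq_neg_add, ← Finset.sum_neg_distrib]
    congr 1
    · refine Finset.sum_congr rfl fun j hj => ?_
      have hj' : m + 1 - j = (m - j) + 1 := by
        have := Finset.mem_range.1 hj
        omega
      rw [hj', pow_succ, pow_succ]
      simp only [map_mul, map_neg, map_one]
      ring
    · simp

lemma coeff_one_sub_X_pow (N n : ℕ) :
    ((1 - PowerSeries.X : PowerSeries ℤ) ^ N).coeff n = (-1) ^ n * (N.choose n : ℤ) := by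
  induction N generalizing n with
  | zero => cases n <;> simp [PowerSeries.coeff_one]
  | succ N ih =>
    rw [pow_succ', sub_mul, one_mul, map_sub, ih]
    cases n with
    | zero => simp
    | succ n =>
      rw [PowerSeries.coeff_succ_X_mul, ih, Nat.choose_succ_succ]
      push_cast
      ring

/-- The `h`-numbers of a Cohen–Macaulay complex are nonnegative: in reverse order they are the
Hilbert function of the quotient of the canonical module by a regular sequence of `r` linear
forms. -/
lemma hvec_nonneg {K : Finset (Finset α)} {r : ℕ} (hK : IsComplex K)
    (hp : IsPure K r) (hCM : IsCM K) {i : ℕ} (hi : i ≤ r) : 0 ≤ hvec K r i := by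
  obtain ⟨t, ht⟩ : ∃ t : α → ℚ, ∀ F ∈ K, Set.InjOn t (F : Set α) := by
    obtain ⟨f, hf⟩ := Set.countable_iff_exists_injOn.1 (K.sup id).countable_toSet
    exact ⟨fun u => f u, fun F hF u hu w hw h => hf (Finset.le_sup (f := id) hF hu)
      (Finset.le_sup (f := id) hF hw) (Nat.cast_injective h)⟩
  set T : ℕ → (Cell α →₀ ℚ) →ₗ[ℚ] (Cell α →₀ ℚ) := fun l => mulForm fun u => t u ^ l
  have hT : ∀ i j x, T i (T j x) = T j (T i x) := fun _ _ _ => mulForm_comm _ _ _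
  have hstab : IsStable T (cycleMod K r) := by
    intro l n x hx
    refine ⟨faceMod_stable (fun l u => t u ^ l) K r l n x hx.1, ?_⟩
    rw [SetLike.mem_coe, LinearMap.mem_ker, faceDiff_mulForm, show faceDiff x = 0 from hx.2,
      map_zero]
  have h := hilbQ_coeff_nonneg (T := T) hstab r (r - i)
  rw [hilbQ_eq_of_isReg hT hstab (isReg_cycleMod hK hp hCM ht le_rfl),
    hilb_cycleMod hK hp hCM le_rfl, map_sum] at h
  refine h.trans_eq ?_
  rw [hvec]
  symm
  refine Finset.sum_subset_zero_on_sdiff (Finset.range_mono (by omega)) ?_ ?_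
  · intro j hj
    simp only [Finset.mem_sdiff, Finset.mem_range] at hj
    rw [PowerSeries.coeff_C_mul, coeff_one_sub_X_pow, Nat.choose_eq_zero_of_lt (by omega)]
    simp
  · intro j hj
    have hji := Finset.mem_range.1 hj
    rw [PowerSeries.coeff_C_mul, coeff_one_sub_X_pow]
    have : (-1 : ℤ) ^ (r - j) * (-1) ^ (r - i) = (-1) ^ (i - j) := by
      rw [show r - j = (i - j) + (r - i) by omega, pow_add, mul_assoc, ← mul_pow]
      simp
    rw [← this]
    ring

end Nonneg

/-! ### Purity and links of Cohen–Macaulay complexes -/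

section Purity

variable [LinearOrder α]

lemma linkF_mono {K : Finset (Finset α)} (hK : IsComplex K) {S H H' : Finset α}
    (hH : H ∈ linkF K S) (h : H' ⊆ H) : H' ∈ linkF K S := by
  rw [mem_linkF] at hH ⊢
  exact ⟨hK.2 _ hH.1 _ (Finset.union_subset_union_left h), Finset.disjoint_of_subset_left h hH.2⟩

lemma sgn_singleton (u : α) : sgn ({u} : Finset α) ∅ = 1 := by
  have h := sgn_erase (Finset.mem_singleton_self u)
  simpa [Finset.filter_singleton] using h

/-- A Cohen–Macaulay complex is pure. If not, take a face `G` of maximal size lying both in a face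
of top cardinality and in a face that is not extendable to one. The link of `G` then splits into
two nonempty parts without common vertices, so it is disconnected, although its reduced homology
in degree zero vanishes. -/
lemma isPure_of_isCM {K : Finset (Finset α)} {r : ℕ} (hK : IsComplex K) (hCM : IsCM K)
    (hr : K.sup Finset.card = r) : IsPure K r := by
  classical
  by_contra hnp
  set P : Finset α → Prop := fun F => ∃ B ∈ K, F ⊆ B ∧ B.card = r with hP
  have hPmono : ∀ F F', F ⊆ F' → P F' → P F := fun F F' h ⟨B, hB, h1, h2⟩ =>
    ⟨B, hB, h.trans h1, h2⟩
  have hle : ∀ F ∈ K, F.card ≤ r := fun F hF => hr ▸ Finset.le_sup (f := Finset.card) hF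
  obtain ⟨F₀, hF₀, hF₀P⟩ : ∃ F ∈ K, ¬ P F := by
    unfold IsPure at hnp
    push Not at hnp
    obtain ⟨F, hF, h⟩ := hnp
    exact ⟨F, hF, fun ⟨B, hB, h1, h2⟩ => h B hB h1 h2⟩
  obtain ⟨R₀, hR₀, hR₀r⟩ := Finset.exists_mem_eq_sup K ⟨∅, hK.1⟩ Finset.card
  set Q : Finset (Finset α) := K.filter fun G => P G ∧ ∃ B ∈ K, G ⊆ B ∧ ¬ P B with hQ
  have hQne : Q.Nonempty := ⟨∅, Finset.mem_filter.2 ⟨hK.1,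
    ⟨R₀, hR₀, Finset.empty_subset _, by rw [← hr, hR₀r]⟩, F₀, hF₀, Finset.empty_subset _, hF₀P⟩⟩
  obtain ⟨G, hGQ, hGmax⟩ := Finset.exists_max_image Q Finset.card hQne
  obtain ⟨hG, ⟨R, hR, hGR, hRr⟩, B, hB, hGB, hBP⟩ := Finset.mem_filter.1 hGQ
  have hPB : ∀ B ∈ K, r ≤ B.card → P B := fun B hB h =>
    ⟨B, hB, subset_rfl, le_antisymm (hle B hB) h⟩
  have hBr : B.card < r := by
    by_contra h
    exact hBP (hPB B hB (not_lt.1 h))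
  have hPG : P G := ⟨R, hR, hGR, hRr⟩
  have hGB' : G ⊂ B := hGB.ssubset_of_ne fun h => hBP (h ▸ hPG)
  have hGBc := Finset.card_lt_card hGB'
  obtain ⟨w, hwB, hwG⟩ := Finset.exists_of_ssubset hGB'
  obtain ⟨u, huR, huG⟩ : ∃ u ∈ R, u ∉ G := by
    by_contra! h
    have := Finset.card_le_card h
    omega
  set L := linkF K G with hL
  -- any proper extension of `G` that lies in a top face has only extendable faces above it
  have hup : ∀ H e, H ∪ G ∈ K → Disjoint H G → H.Nonempty → H ⊆ e → e ∪ G ∈ K →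
      P (H ∪ G) → P (e ∪ G) := by
    intro H e hH hdis hne hHe he hPH
    by_contra hPe
    have := hGmax (H ∪ G) (Finset.mem_filter.2
      ⟨hH, hPH, e ∪ G, he, Finset.union_subset_union_left hHe, hPe⟩)
    rw [Finset.card_union_of_disjoint hdis] at this
    have := hne.card_pos
    omega
  have huL : {u} ∈ L := mem_linkF.2 ⟨hK.2 R hR _
    (Finset.union_subset (Finset.singleton_subset_iff.2 huR) hGR),
    Finset.disjoint_singleton_left.2 huG⟩
  have hwL : {w} ∈ L := mem_linkF.2 ⟨hK.2 B hB _
    (Finset.union_subset (Finset.singleton_subset_iff.2 hwB) hGB),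
    Finset.disjoint_singleton_left.2 hwG⟩
  have huP : P ({u} ∪ G) := ⟨R, hR,
    Finset.union_subset (Finset.singleton_subset_iff.2 huR) hGR, hRr⟩
  have hwP : ¬ P ({w} ∪ G) := fun h => by
    have := hup {w} B (mem_linkF.1 hwL).1 (mem_linkF.1 hwL).2 (Finset.singleton_nonempty w)
      (Finset.singleton_subset_iff.2 hwB) (by rwa [Finset.union_eq_left.2 hGB]) h
    rw [Finset.union_eq_left.2 hGB] at this
    exact hBP this
  have huw : u ≠ w := by
    rintro rfl
    exact hwP huP
  have hsup : 1 < L.sup Finset.card := by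
    have h1 : R \ G ∈ L :=
      mem_linkF.2 ⟨by rwa [Finset.sdiff_union_of_subset hGR], Finset.sdiff_disjoint⟩
    have h2 := Finset.le_sup (f := Finset.card) h1
    rw [Finset.card_sdiff_of_subset hGR] at h2
    omega
  set c : Finset α → ℚ := fun H => if H = {u} then 1 else if H = {w} then -1 else 0 with hc
  have hcne : ∀ H, c H ≠ 0 → H = {u} ∨ H = {w} := by
    intro H hH
    by_contra! h
    exact hH (by simp [hc, h.1, h.2])
  have hcu : c {u} = 1 := by simp [hc]
  have hcw : c {w} = -1 := by simp [hc, huw.symm]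
  obtain ⟨d, -, hdc⟩ := hCM G hG 1 hsup c
    (by
      intro H hH
      rcases hcne H hH with rfl | rfl
      · exact ⟨huL, Finset.card_singleton _⟩
      · exact ⟨hwL, Finset.card_singleton _⟩)
    (by
      intro G'
      unfold bdry
      rcases G'.eq_empty_or_nonempty with rfl | hne
      · rw [Finset.sum_eq_add_of_mem {u} {w} (by simp [huL, ← hL]) (by simp [hwL, ← hL])
          (by simpa using huw)]
        · rw [sgn_singleton, sgn_singleton, hcu, hcw]
          simp
        · rintro H - ⟨h1, h2⟩
          by_contra h
          rcases hcne H (right_ne_zero_of_mul h) with h | h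
          · exact h1 h
          · exact h2 h
      · refine Finset.sum_eq_zero fun F hF => ?_
        have hcard := (Finset.mem_filter.1 hF).2.2
        have := hne.card_pos
        by_contra h
        rcases hcne F (right_ne_zero_of_mul h) with rfl | rfl <;>
          rw [Finset.card_singleton] at hcard <;> omega)
  -- sum the boundary of `d` over the vertices on the side of `u`
  have h1 : ∑ H ∈ L.filter (fun H => H.card = 1 ∧ P (H ∪ G)), bdry L d H = 1 := by
    rw [Finset.sum_eq_single {u}, hdc, hcu]
    · intro H hH hne
      rw [hdc]
      by_contra h
      rcases hcne H h with rfl | rfl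
      · exact hne rfl
      · exact hwP (Finset.mem_filter.1 hH).2.2
    · exact fun h => absurd (Finset.mem_filter.2 ⟨huL, Finset.card_singleton _, huP⟩) h
  have h0 : ∑ H ∈ L.filter (fun H => H.card = 1 ∧ P (H ∪ G)), bdry L d H = 0 := by
    unfold bdry
    rw [Finset.sum_comm' (t' := L.filter fun e => e.card = 2 ∧ P (e ∪ G))
      (s' := fun e => e.powersetCard 1)]
    · refine Finset.sum_eq_zero fun e he => ?_
      obtain ⟨a, b, hab, rfl⟩ := Finset.card_eq_two.1 (Finset.mem_filter.1 he).2.1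
      rw [Finset.powersetCard_one, Finset.sum_map, Finset.sum_pair hab]
      have hs := sgn_erase_erase (F := {a, b}) (v := a) (w := b) (by simp) (by simp) hab
      have ea : ({a, b} : Finset α).erase a = {b} := by
        rw [Finset.erase_insert]
        simpa using hab
      have eb : ({a, b} : Finset α).erase b = {a} := by
        rw [Finset.pair_comm, Finset.erase_insert]
        simpa using hab.symm
      have es : ∀ x : α, ({x} : Finset α).erase x = ∅ := fun x => by simp
      rw [ea, eb, es, es, sgn_singleton, sgn_singleton, mul_one, mul_one] at hs
      simp only [Function.Embedding.coeFn_mk]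
      rw [hs]
      push_cast
      ring
    · intro H e
      simp only [Finset.mem_filter, Finset.mem_powersetCard]
      constructor
      · rintro ⟨⟨hH, hH1, hHP⟩, he, hHe, hec⟩
        refine ⟨⟨hHe, hH1⟩, he, by omega, ?_⟩
        exact hup H e (mem_linkF.1 hH).1 (mem_linkF.1 hH).2 (Finset.card_pos.1 (by omega)) hHe
          (mem_linkF.1 he).1 hHP
      · rintro ⟨⟨hHe, hH1⟩, he, he2, heP⟩
        exact ⟨⟨linkF_mono hK he hHe, hH1,
          hPmono _ _ (Finset.union_subset_union_left hHe) heP⟩, he, hHe, by omega⟩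
  rw [h0] at h1
  exact zero_ne_one h1

lemma linkF_linkF {K : Finset (Finset α)} {S H : Finset α} (hH : H ∈ linkF K S) :
    linkF (linkF K S) H = linkF K (H ∪ S) := by
  have h := (mem_linkF.1 hH).2
  ext X
  simp only [mem_linkF, Finset.disjoint_union_left, Finset.disjoint_union_right,
    Finset.union_assoc]
  tauto

lemma isCM_linkF {K : Finset (Finset α)} (hCM : IsCM K) (S : Finset α) : IsCM (linkF K S) := by
  intro H hH
  rw [linkF_linkF hH]
  exact hCM _ (mem_linkF.1 hH).1

lemma sup_card_linkF {K : Finset (Finset α)} {r : ℕ} (hp : IsPure K r)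
    (hr : K.sup Finset.card = r) {S : Finset α} (hS : S ∈ K) :
    (linkF K S).sup Finset.card = r - S.card := by
  refine le_antisymm (Finset.sup_le fun H hH => ?_) ?_
  · obtain ⟨h1, h2⟩ := mem_linkF.1 hH
    have := Finset.le_sup (f := Finset.card) h1
    rw [Finset.card_union_of_disjoint h2, hr] at this
    omega
  · obtain ⟨B, hB, hSB, hBr⟩ := hp S hS
    have h1 : B \ S ∈ linkF K S :=
      mem_linkF.2 ⟨by rwa [Finset.sdiff_union_of_subset hSB], Finset.sdiff_disjoint⟩
    have h2 := Finset.le_sup (f := Finset.card) h1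
    rwa [Finset.card_sdiff_of_subset hSB, hBr] at h2

end Purity

/-! ### Deletion and link of a vertex -/

section Induction

variable [LinearOrder α]

lemma lk_eq_linkF (K : Finset (Finset α)) (v : α) : lk K v = linkF K {v} := by
  simp only [lk, linkF, Finset.singleton_subset_iff, Finset.erase_eq]

lemma mem_lk {K : Finset (Finset α)} {v : α} {H : Finset α} :
    H ∈ lk K v ↔ insert v H ∈ K ∧ v ∉ H := by
  rw [lk_eq_linkF, mem_linkF, Finset.disjoint_singleton_right, Finset.union_comm,
    ← Finset.insert_eq]

lemma isComplex_delS {K : Finset (Finset α)} (hK : IsComplex K) (A : Finset α) :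
    IsComplex (delS K A) := by
  refine ⟨Finset.mem_filter.2 ⟨hK.1, Finset.disjoint_empty_left _⟩, fun F hF G hG => ?_⟩
  obtain ⟨h1, h2⟩ := Finset.mem_filter.1 hF
  exact Finset.mem_filter.2 ⟨hK.2 F h1 G hG, Finset.disjoint_of_subset_left hG h2⟩

lemma delS_empty (K : Finset (Finset α)) : delS K ∅ = K := by
  simp [delS]

lemma delV_eq_delS (K : Finset (Finset α)) (v : α) : delV K v = delS K {v} := by
  simp [delV, delS]

lemma delS_delV (K : Finset (Finset α)) (v : α) (A : Finset α) :
    delS (delV K v) A = delS K (insert v A) := by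
  ext F
  simp only [delS, delV, Finset.mem_filter, Finset.disjoint_insert_right]
  tauto

lemma delS_lk (K : Finset (Finset α)) (v : α) (A : Finset α) :
    delS (lk K v) A = lk (delS K (A.erase v)) v := by
  ext F
  simp only [delS, Finset.mem_filter, mem_lk, Finset.disjoint_insert_left, Finset.mem_erase]
  have h : v ∉ F → (Disjoint F (A.erase v) ↔ Disjoint F A) := fun hv => by
    rw [← Finset.disjoint_erase_comm, Finset.erase_eq_of_notMem hv]
  constructor
  · rintro ⟨⟨h1, h2⟩, h3⟩
    exact ⟨⟨h1, by simp, (h h2).2 h3⟩, h2⟩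
  · rintro ⟨⟨h1, -, h3⟩, h2⟩
    exact ⟨⟨h1, h2⟩, (h h2).1 h3⟩

lemma isComplex_lk {K : Finset (Finset α)} (hK : IsComplex K) {v : α} (hv : {v} ∈ K) :
    IsComplex (lk K v) := by
  refine ⟨mem_lk.2 ⟨by simpa using hv, by simp⟩, fun F hF G hG => ?_⟩
  rw [mem_lk] at hF ⊢
  exact ⟨hK.2 _ hF.1 _ (Finset.insert_subset_insert _ hG), fun h => hF.2 (hG h)⟩

lemma fvec_zero {K : Finset (Finset α)} (hK : IsComplex K) : fvec K 0 = 1 := by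
  rw [fvec, Finset.card_eq_one]
  refine ⟨∅, ?_⟩
  ext F
  simp only [Finset.mem_filter, Finset.card_eq_zero, Finset.mem_singleton]
  constructor
  · exact fun h => h.2
  · rintro rfl
    exact ⟨hK.1, rfl⟩

lemma hvec_zero {K : Finset (Finset α)} (hK : IsComplex K) (r : ℕ) : hvec K r 0 = 1 := by
  simp [hvec, fvec_zero hK]

lemma fvec_delV_zero (K : Finset (Finset α)) (v : α) : fvec (delV K v) 0 = fvec K 0 := by
  rw [fvec, fvec, delV, Finset.filter_filter]
  congr 1
  refine Finset.filter_congr fun F _ => ?_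
  simp only [Finset.card_eq_zero]
  constructor
  · exact fun h => h.2
  · rintro rfl
    simp

lemma fvec_succ (K : Finset (Finset α)) (v : α) (j : ℕ) :
    fvec K (j + 1) = fvec (delV K v) (j + 1) + fvec (lk K v) j := by
  have h : fvec (lk K v) j = (K.filter fun F => F.card = j + 1 ∧ v ∈ F).card := by
    rw [fvec]
    refine Finset.card_bij' (fun H _ => insert v H) (fun F _ => F.erase v) ?_ ?_ ?_ ?_
    · intro H hH
      simp only [Finset.mem_filter, mem_lk] at hH ⊢
      exact ⟨hH.1.1, by rw [Finset.card_insert_of_notMem hH.1.2, hH.2],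
        Finset.mem_insert_self _ _⟩
    · intro F hF
      simp only [Finset.mem_filter, mem_lk] at hF ⊢
      refine ⟨⟨by rw [Finset.insert_erase hF.2.2]; exact hF.1, by simp⟩, ?_⟩
      rw [Finset.card_erase_of_mem hF.2.2, hF.2.1]
      omega
    · intro H hH
      simp only [Finset.mem_filter, mem_lk] at hH
      exact Finset.erase_insert hH.1.2
    · intro F hF
      exact Finset.insert_erase (Finset.mem_filter.1 hF).2.2
  rw [h, fvec, fvec, delV, Finset.filter_filter,
    ← Finset.card_filter_add_card_filter_not (s := K.filter fun F => F.card = j + 1)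
      (fun F => v ∈ F), Finset.filter_filter, Finset.filter_filter, add_comm]
  simp only [and_comm]

lemma hvec_succ (K : Finset (Finset α)) (v : α) (r i : ℕ) :
    hvec K (r + 1) (i + 1) = hvec (delV K v) (r + 1) (i + 1) + hvec (lk K v) r i := by
  unfold hvec
  rw [Finset.sum_range_succ', Finset.sum_range_succ' _ (i + 1), fvec_delV_zero, add_right_comm,
    ← Finset.sum_add_distrib]
  congr 1
  refine Finset.sum_congr rfl fun j _ => ?_
  rw [fvec_succ K v]
  simp only [Nat.add_sub_add_right]
  push_cast
  ring

/-- `K` is a `k`-Cohen–Macaulay complex with top faces of cardinality `r`. -/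
def IsKCM (K : Finset (Finset α)) (r k : ℕ) : Prop :=
  IsComplex K ∧ ∀ A : Finset α, A.card < k → IsCM (delS K A) ∧ (delS K A).sup Finset.card = r

lemma IsKCM.delV {K : Finset (Finset α)} {r k : ℕ} (h : IsKCM K r (k + 1)) (v : α) :
    IsKCM (delV K v) r k := by
  refine ⟨delV_eq_delS K v ▸ isComplex_delS h.1 _, fun A hA => ?_⟩
  rw [delS_delV]
  exact h.2 _ ((Finset.card_insert_le _ _).trans_lt (by omega))

lemma IsKCM.lk {K : Finset (Finset α)} {r k : ℕ} (h : IsKCM K (r + 1) k) {v : α}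
    (hv : {v} ∈ K) : IsKCM (lk K v) r k := by
  refine ⟨isComplex_lk h.1 hv, fun A hA => ?_⟩
  rw [delS_lk, lk_eq_linkF]
  obtain ⟨h1, h2⟩ := h.2 (A.erase v) ((Finset.card_erase_le).trans_lt hA)
  refine ⟨isCM_linkF h1 _, ?_⟩
  rw [sup_card_linkF (isPure_of_isCM (isComplex_delS h.1 _) h1 h2) h2, Finset.card_singleton,
    Nat.add_sub_cancel]
  exact Finset.mem_filter.2 ⟨hv, by simp⟩

lemma choose_le_hvec {k : ℕ} (hk : 1 ≤ k) : ∀ (i r : ℕ) (K : Finset (Finset α)),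
    IsKCM K r k → i ≤ r → ((k + i - 2).choose i : ℤ) ≤ hvec K r i := by
  induction k, hk using Nat.le_induction with
  | base =>
    intro i r K hK hi
    cases i with
    | zero => simp [hvec_zero hK.1]
    | succ i =>
      rw [Nat.choose_eq_zero_of_lt (by omega), Nat.cast_zero]
      have h := hK.2 ∅ (by simp)
      rw [delS_empty] at h
      exact hvec_nonneg hK.1 (isPure_of_isCM hK.1 h.1 h.2) h.1 hi
  | succ k hk ihk =>
    intro i
    induction i with
    | zero =>
      intro r K hK _
      simp [hvec_zero hK.1]
    | succ i ihi =>
      intro r K hK hi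
      obtain ⟨r, rfl⟩ : ∃ s, r = s + 1 := ⟨r - 1, by omega⟩
      obtain ⟨v, hv⟩ : ∃ v, {v} ∈ K := by
        have h := (hK.2 ∅ (by simp)).2
        rw [delS_empty] at h
        obtain ⟨F, hF, hFr⟩ := Finset.exists_mem_eq_sup K ⟨∅, hK.1.1⟩ Finset.card
        obtain ⟨v, hv⟩ := Finset.card_pos.1 (show 0 < F.card by omega)
        exact ⟨v, hK.1.2 F hF _ (Finset.singleton_subset_iff.2 hv)⟩
      have h1 := ihk (i + 1) (r + 1) _ (hK.delV v) hi
      have h2 := ihi r _ (hK.lk hv) (by omega)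
      obtain ⟨k, rfl⟩ : ∃ l, k = l + 1 := ⟨k - 1, by omega⟩
      rw [hvec_succ K v]
      rw [show k + 1 + (i + 1) - 2 = k + i by omega] at h1
      rw [show k + 1 + 1 + i - 2 = k + i by omega] at h2
      rw [show k + 1 + 1 + (i + 1) - 2 = (k + i) + 1 by omega, Nat.choose_succ_succ]
      push_cast
      linarith

end Induction

/-- if `K` is an `(r-1)`-dimensional `k`-CM complex (for every vertex set
`A` with `|A| < k`, the deletion `K - A` is Cohen–Macaulay of dimension `r-1`), then
`h_i(K) ≥ C(k+i-2, i) = h_i(U_{r,r+k-1})` for all `0 ≤ i ≤ r`. -/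
theorem stmt9 [LinearOrder α] (K : Finset (Finset α)) (r k : ℕ) (hk : 1 ≤ k)
    (hK : IsComplex K) (hp : IsPure K r)
    (hkcm : ∀ A : Finset α, A.card < k →
      IsCM (delS K A) ∧ (delS K A).sup Finset.card = r) :
    ∀ i ≤ r, ((k + i - 2).choose i : ℤ) ≤ hvec K r i := by
  exact fun i hi => choose_le_hvec hk i r K ⟨hK, hkcm⟩ hi
end

section
/- Let Δ be an (r-1)-dimensional k-CM simplicial complex with n vertices. Then (n-i)·h_i(Δ) ≥ (r-i+1)·h_{i-1}(Δ) + n·C(i+k-3, i). -/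
/-!
The `h`-numbers of a Cohen–Macaulay complex are dimensions in a graded module. For a finite set `F`
let `ℚ[F]` be the polynomial ring on `F`. If `K` is a Cohen–Macaulay complex with facets of size `r`, the modules
`M_j = ⨁_{F ∈ K, |F| = j} ℚ[F]`, with the signed restriction maps, form a complex
`M_r → M_{r-1} → ⋯ → M_0` which is exact below the top: in multidegree `m` it is the chain complex
on the faces containing the support of `m`, that is, up to signs (`twist`), the chain complex of a
link (`star_exact`, `exists_bd_eq`). The linear forms `θ_i = ∑_v a(v)^i X_v` with `a` injective
form a regular sequence of length `|F|` on each `ℚ[F]`, by a Vandermonde argument, and chasing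
depths along the complex shows that `θ_0, …, θ_{r-1}` is regular on the module of top cycles
(`reg_ZZ`). Its Hilbert series is determined by the `f`-vector (`hilb_ZZ`), so the coefficients of
`(1 - x)^r` times it, which are the dimensions of a graded quotient, are the `h`-numbers in reverse
order. Hence `h_i ≥ 0` (`hvec_nonneg`).

A Cohen–Macaulay complex is pure (`isPure_of_isCM`), because an impure one has a disconnected link
of dimension at least one. Therefore the link of a vertex in a `k`-CM complex is `k`-CM of one
dimension less, while the deletion of a vertex is `(k-1)`-CM of the same dimension. Induction with
`h_i(K) = h_i(K - v) + h_{i-1}(lk v)` (`hvec_succ`) and Pascal's rule yields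
`h_i(K) ≥ C(i+q-1, i)` when `K` is `(q+1)`-CM (`choose_le_hvec`). Applying this to each `K - v` and
summing, with `∑_v h_i(K - v) = (n-i) h_i(K) - (r-i+1) h_{i-1}(K)` (`sum_hvec_delS`), gives the
claim.
-/

variable {α : Type*} [DecidableEq α]

namespace KCM

/-! ### Regular sequences in graded submodule families -/

section Graded

variable {W W' : Type*} [AddCommGroup W] [Module ℚ W] [AddCommGroup W'] [Module ℚ W']

/-- For a graded family `A d` of subspaces of `W` and operators `x 0, x 1, …` of degree one,
`thetaSub x A i d` is the degree `d` part of `(x 0, …, x (i - 1)) A`. -/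
def thetaSub (x : ℕ → W →ₗ[ℚ] W) (A : ℕ → Submodule ℚ W) : ℕ → ℕ → Submodule ℚ W
  | 0, _ => ⊥
  | _ + 1, 0 => ⊥
  | i + 1, d + 1 => thetaSub x A i (d + 1) ⊔ (A d).map (x i)

/-- `x 0, …, x (m - 1)` is a (weakly) regular sequence on the graded family `A`. -/
def Reg (x : ℕ → W →ₗ[ℚ] W) (A : ℕ → Submodule ℚ W) (m : ℕ) : Prop :=
  ∀ i < m, ∀ d, ∀ a ∈ A d, x i a ∈ thetaSub x A i (d + 1) → a ∈ thetaSub x A i d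

/-- The operators `x i` map `A d` into `A (d + 1)`. -/
def Stable (x : ℕ → W →ₗ[ℚ] W) (A : ℕ → Submodule ℚ W) : Prop :=
  ∀ i d, ∀ a ∈ A d, x i a ∈ A (d + 1)

variable {x : ℕ → W →ₗ[ℚ] W} {x' : ℕ → W' →ₗ[ℚ] W'} {A : ℕ → Submodule ℚ W}
  {A' : ℕ → Submodule ℚ W'}

lemma thetaSub_zero_right (i : ℕ) : thetaSub x A i 0 = ⊥ := by
  cases i <;> rfl

lemma mem_thetaSub_succ {i d : ℕ} {w : W} :
    w ∈ thetaSub x A (i + 1) (d + 1) ↔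
      ∃ b ∈ thetaSub x A i (d + 1), ∃ c ∈ A d, b + x i c = w := by
  simp [thetaSub, Submodule.mem_sup]

lemma thetaSub_le (hs : Stable x A) (i d : ℕ) : thetaSub x A i d ≤ A d := by
  induction i with
  | zero => exact bot_le
  | succ i ih =>
    cases d with
    | zero => exact bot_le
    | succ d =>
      refine sup_le ih ?_
      rintro _ ⟨a, ha, rfl⟩
      exact hs i d a ha

lemma mem_thetaSub_of_lt {i l d : ℕ} (h : l < i) {a : W} (ha : a ∈ A d) :
    x l a ∈ thetaSub x A i (d + 1) := by
  induction i with
  | zero => omega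
  | succ i ih =>
    rcases Nat.lt_succ_iff_lt_or_eq.mp h with h | rfl
    · exact Submodule.mem_sup_left (ih h)
    · exact Submodule.mem_sup_right ⟨a, ha, rfl⟩

lemma thetaSub_map (g : W →ₗ[ℚ] W') {i : ℕ} (hg : ∀ l < i, ∀ w, g (x l w) = x' l (g w))
    (hA : ∀ d, ∀ a ∈ A d, g a ∈ A' d) (d : ℕ) :
    ∀ w ∈ thetaSub x A i d, g w ∈ thetaSub x' A' i d := by
  induction i generalizing d with
  | zero =>
    intro w hw
    have : w = 0 := by simpa [thetaSub] using hw
    simp [this]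
  | succ i ih =>
    intro w hw
    cases d with
    | zero =>
      have : w = 0 := by simpa [thetaSub] using hw
      simp [this]
    | succ d =>
      obtain ⟨b, hb, c, hc, rfl⟩ := mem_thetaSub_succ.mp hw
      refine mem_thetaSub_succ.mpr
        ⟨g b, ih (fun l hl => hg l (by omega)) _ b hb, g c, hA d c hc, ?_⟩
      rw [map_add, hg i (by omega)]

lemma thetaSub_stable (hs : Stable x A) (hc : ∀ i l w, x i (x l w) = x l (x i w))
    (i : ℕ) : Stable x (thetaSub x A i) := by
  induction i with
  | zero =>
    intro l d w hw
    have : w = 0 := by simpa [thetaSub] using hw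
    simp [this]
  | succ i ih =>
    intro l d w hw
    cases d with
    | zero =>
      have : w = 0 := by simpa [thetaSub] using hw
      simp [this]
    | succ d =>
      obtain ⟨b, hb, c, hc', rfl⟩ := mem_thetaSub_succ.mp hw
      refine mem_thetaSub_succ.mpr ⟨x l b, ih l _ b hb, x l c, hs l d c hc', ?_⟩
      rw [map_add, hc i l]

lemma thetaSub_map_lift (f : W →ₗ[ℚ] W) (hf : ∀ l w, f (x l w) = x l (f w)) (i d : ℕ) :
    ∀ w ∈ thetaSub x (fun d => (A d).map f) i d, ∃ w' ∈ thetaSub x A i d, f w' = w := by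
  induction i generalizing d with
  | zero =>
    intro w hw
    have : w = 0 := by simpa [thetaSub] using hw
    exact ⟨0, zero_mem _, by simp [this]⟩
  | succ i ih =>
    intro w hw
    cases d with
    | zero =>
      have : w = 0 := by simpa [thetaSub] using hw
      exact ⟨0, zero_mem _, by simp [this]⟩
    | succ d =>
      obtain ⟨b, hb, _, ⟨c, hc, rfl⟩, rfl⟩ := mem_thetaSub_succ.mp hw
      obtain ⟨b', hb', rfl⟩ := ih _ b hb
      exact ⟨b' + x i c, mem_thetaSub_succ.mpr ⟨b', hb', c, hc, rfl⟩, by rw [map_add, hf]⟩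

/-- If `x 0, …, x (m - 1)` is regular on the image `f(A)`, then `(x 0, …, x (i - 1))A ∩ ker f` is
`(x 0, …, x (i - 1))(A ∩ ker f)` for `i ≤ m`. -/
lemma thetaSub_inter_ker (hs : Stable x A) (hc : ∀ i l w, x i (x l w) = x l (x i w))
    (f : W →ₗ[ℚ] W) (hf : ∀ l w, f (x l w) = x l (f w)) {m : ℕ}
    (hC : Reg x (fun d => (A d).map f) m) {i : ℕ} (hi : i ≤ m) (d : ℕ) :
    ∀ w ∈ thetaSub x A i d, f w = 0 →
      w ∈ thetaSub x (fun d => A d ⊓ LinearMap.ker f) i d := by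
  induction i generalizing d with
  | zero => intro w hw _; simpa [thetaSub] using hw
  | succ i ih =>
    intro w hw hfw
    cases d with
    | zero => simpa [thetaSub] using hw
    | succ d =>
      obtain ⟨b, hb, c, hc', rfl⟩ := mem_thetaSub_succ.mp hw
      have h1 : x i (f c) ∈ thetaSub x (fun d => (A d).map f) i (d + 1) := by
        have h2 := thetaSub_map (x' := x) (A' := fun d => (A d).map f) f
          (fun l _ w => hf l w) (fun d a ha => ⟨a, ha, rfl⟩) _ b hb
        have h3 : x i (f c) = - f b := by
          rw [map_add, hf] at hfw
          exact eq_neg_of_add_eq_zero_right hfw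
        rw [h3]
        exact neg_mem h2
      obtain ⟨c', hc1, hc2⟩ := thetaSub_map_lift f hf i d _
        (hC i (by omega) d _ ⟨c, hc', rfl⟩ h1)
      have hcc : c - c' ∈ A d ⊓ LinearMap.ker f :=
        ⟨sub_mem hc' (thetaSub_le hs _ _ hc1), by simp [hc2]⟩
      have hcc0 : f (c - c') = 0 := hcc.2
      refine mem_thetaSub_succ.mpr ⟨b + x i c', ih (by omega) _ _
        (add_mem hb (thetaSub_stable hs hc i i _ _ hc1)) ?_, c - c', hcc, ?_⟩
      · have : b + x i c' = (b + x i c) - x i (c - c') := by rw [map_sub]; abel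
        rw [this, map_sub, hfw, hf, hcc0]; simp
      · rw [map_sub]; abel

/-- The depth lemma: for `0 → A ∩ ker f → A → f(A) → 0`, the length of the regular sequence on the
kernel is at least one more than on the image, as long as it is regular on `A`. -/
lemma Reg.ker (hs : Stable x A) (hc : ∀ i l w, x i (x l w) = x l (x i w))
    (f : W →ₗ[ℚ] W) (hf : ∀ l w, f (x l w) = x l (f w)) {m : ℕ}
    (hA : Reg x A (m + 1)) (hC : Reg x (fun d => (A d).map f) m) :
    Reg x (fun d => A d ⊓ LinearMap.ker f) (m + 1) := by
  intro i hi d a ha hx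
  refine thetaSub_inter_ker hs hc f hf hC (by omega) d a (hA i hi d a ha.1 ?_) ha.2
  exact thetaSub_map (x' := x) (A' := A) LinearMap.id (fun _ _ _ => rfl)
    (fun _ _ h => (Submodule.mem_inf.mp h).1) _ _ hx

lemma finrank_map_add (f : W →ₗ[ℚ] W') (p : Submodule ℚ W) [Module.Finite ℚ p] :
    Module.finrank ℚ (p.map f) + Module.finrank ℚ ↥(p ⊓ LinearMap.ker f) = Module.finrank ℚ p := by
  have h := (f.domRestrict p).finrank_range_add_finrank_ker
  rw [LinearMap.range_domRestrict, LinearMap.ker_domRestrict] at h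
  rw [← h]
  congr 1
  rw [← Submodule.finrank_map_subtype_eq, Submodule.map_comap_subtype]

/-- Hilbert series of the quotient `A / (x 0, …, x (i - 1)) A`. -/
noncomputable def gser (x : ℕ → W →ₗ[ℚ] W) (A : ℕ → Submodule ℚ W) (i : ℕ) : PowerSeries ℤ :=
  PowerSeries.mk fun d =>
    (Module.finrank ℚ (A d) : ℤ) - (Module.finrank ℚ (thetaSub x A i d) : ℤ)

/-- Hilbert series of a graded family. -/
noncomputable def hilb (A : ℕ → Submodule ℚ W) : PowerSeries ℤ :=
  PowerSeries.mk fun d => (Module.finrank ℚ (A d) : ℤ)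

lemma gser_zero : gser x A 0 = hilb A := by
  ext d
  simp only [gser, hilb, PowerSeries.coeff_mk]
  have h : thetaSub x A 0 d = ⊥ := rfl
  rw [h, finrank_bot]
  simp

lemma gser_succ (hs : Stable x A) (hc : ∀ i l w, x i (x l w) = x l (x i w))
    [∀ d, Module.Finite ℚ (A d)] {m i : ℕ} (hA : Reg x A m) (hi : i < m) :
    gser x A (i + 1) = (1 - PowerSeries.X) * gser x A i := by
  ext d
  rw [sub_mul, one_mul, map_sub]
  cases d with
  | zero =>
    simp only [gser, PowerSeries.coeff_mk, PowerSeries.coeff_zero_X_mul, sub_zero]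
    rw [thetaSub_zero_right, thetaSub_zero_right]
  | succ d =>
    rw [PowerSeries.coeff_succ_X_mul]
    simp only [gser, PowerSeries.coeff_mk]
    have hfin : ∀ i d, Module.Finite ℚ (thetaSub x A i d) := fun i d =>
      Submodule.finiteDimensional_of_le (thetaSub_le hs i d)
    have := hfin i (d + 1)
    have := hfin i d
    have h1 := Submodule.finrank_sup_add_finrank_inf_eq (thetaSub x A i (d + 1)) ((A d).map (x i))
    have h2 : thetaSub x A i (d + 1) ⊓ (A d).map (x i) = (thetaSub x A i d).map (x i) := by
      apply le_antisymm
      · rintro _ ⟨h, a, ha, rfl⟩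
        exact ⟨a, hA i hi d a ha h, rfl⟩
      · rintro _ ⟨a, ha, rfl⟩
        exact ⟨thetaSub_stable hs hc i i d a ha, a, thetaSub_le hs _ _ ha, rfl⟩
    have h3 : A d ⊓ LinearMap.ker (x i) = thetaSub x A i d ⊓ LinearMap.ker (x i) := by
      apply le_antisymm
      · rintro a ⟨ha, hk⟩
        refine ⟨hA i hi d a ha ?_, hk⟩
        rw [LinearMap.mem_ker.mp hk]
        exact zero_mem _
      · exact inf_le_inf_right _ (thetaSub_le hs _ _)
    have h4 := finrank_map_add (x i) (A d)
    have h5 := finrank_map_add (x i) (thetaSub x A i d)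
    rw [h2] at h1
    rw [h3] at h4
    have h7 : thetaSub x A (i + 1) (d + 1) = thetaSub x A i (d + 1) ⊔ (A d).map (x i) := rfl
    rw [h7]
    have h6 : (Module.finrank ℚ ↥(thetaSub x A i (d + 1) ⊔ (A d).map (x i)) : ℤ)
        + Module.finrank ℚ (thetaSub x A i d) =
        Module.finrank ℚ (thetaSub x A i (d + 1)) + Module.finrank ℚ (A d) := by
      rw [← h4, ← h5]
      push_cast
      have := congrArg (Nat.cast (R := ℤ)) h1
      push_cast at this
      linarith
    linarith

lemma gser_eq (hs : Stable x A) (hc : ∀ i l w, x i (x l w) = x l (x i w))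
    [∀ d, Module.Finite ℚ (A d)] {m : ℕ} (hA : Reg x A m) :
    gser x A m = (1 - PowerSeries.X) ^ m * hilb A := by
  have : ∀ i ≤ m, gser x A i = (1 - PowerSeries.X) ^ i * hilb A := by
    intro i
    induction i with
    | zero => intro _; simp [gser_zero]
    | succ i ih => intro hi; rw [gser_succ hs hc hA hi, ih (by omega), pow_succ]; ring
  exact this m le_rfl

lemma gser_nonneg (hs : Stable x A) [∀ d, Module.Finite ℚ (A d)] (i d : ℕ) :
    0 ≤ PowerSeries.coeff d (gser x A i) := by
  simp only [gser, PowerSeries.coeff_mk]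
  have := Submodule.finrank_mono (thetaSub_le hs i d)
  omega

end Graded

/-! ### Linear forms on a simplex -/

section Transfer

variable {W W' : Type*} [AddCommGroup W] [Module ℚ W] [AddCommGroup W'] [Module ℚ W']
  {x : ℕ → W →ₗ[ℚ] W} {x' : ℕ → W' →ₗ[ℚ] W'} {A : ℕ → Submodule ℚ W}
  {A' : ℕ → Submodule ℚ W'}

lemma Reg.transfer {m : ℕ} (hA : Reg x A m) (φ : W →ₗ[ℚ] W') (ψ : W' →ₗ[ℚ] W)
    (hφ : ∀ l < m, ∀ w, φ (x l w) = x' l (φ w)) (hψ : ∀ l < m, ∀ w, ψ (x' l w) = x l (ψ w))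
    (hφA : ∀ d, ∀ a ∈ A d, φ a ∈ A' d) (hψA : ∀ d, ∀ a ∈ A' d, ψ a ∈ A d)
    (hφψ : ∀ d, ∀ a ∈ A' d, φ (ψ a) = a) : Reg x' A' m := by
  intro i hi d a ha hx
  have h1 := thetaSub_map (x := x') (x' := x) (A' := A) ψ (i := i)
    (fun l hl => hψ l (by omega)) hψA _ _ hx
  rw [hψ i hi] at h1
  have h2 := thetaSub_map (x := x) (x' := x') (A' := A') φ (i := i)
    (fun l hl => hφ l (by omega)) hφA _ _ (hA i hi d _ (hψA d a ha) h1)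
  rwa [hφψ d a ha] at h2

end Transfer

open MvPolynomial in
/-- Multiplication by the `i`-th variable of `ℚ[y_0, …, y_{j-1}]` (zero if `j ≤ i`). -/
noncomputable def xS (j i : ℕ) : MvPolynomial (Fin j) ℚ →ₗ[ℚ] MvPolynomial (Fin j) ℚ :=
  if h : i < j then LinearMap.mulLeft ℚ (X ⟨i, h⟩) else 0

lemma xS_apply {j i : ℕ} (h : i < j) (p : MvPolynomial (Fin j) ℚ) :
    xS j i p = MvPolynomial.X ⟨i, h⟩ * p := by
  simp [xS, h]

lemma stable_xS (j : ℕ) : Stable (xS j) (MvPolynomial.homogeneousSubmodule (Fin j) ℚ) := by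
  intro i d a ha
  by_cases h : i < j
  · rw [xS_apply h, add_comm d 1]
    exact (MvPolynomial.isHomogeneous_X ℚ _).mul ha
  · simp [xS, h]

lemma exists_of_mem_thetaSub_xS {j i d : ℕ} (hij : i ≤ j) {p : MvPolynomial (Fin j) ℚ}
    (hp : p ∈ thetaSub (xS j) (MvPolynomial.homogeneousSubmodule (Fin j) ℚ) i d)
    {m : Fin j →₀ ℕ} (hm : MvPolynomial.coeff m p ≠ 0) : ∃ l : Fin j, (l : ℕ) < i ∧ m l ≠ 0 := by
  induction i generalizing d p with
  | zero =>
    have : p = 0 := by simpa [thetaSub] using hp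
    simp [this] at hm
  | succ i ih =>
    cases d with
    | zero =>
      have : p = 0 := by simpa [thetaSub] using hp
      simp [this] at hm
    | succ d =>
      obtain ⟨b, hb, c, hc, rfl⟩ := mem_thetaSub_succ.mp hp
      by_cases hbm : MvPolynomial.coeff m b = 0
      · rw [MvPolynomial.coeff_add, hbm, zero_add, xS_apply (by omega),
          MvPolynomial.coeff_X_mul'] at hm
        refine ⟨⟨i, by omega⟩, by simp, ?_⟩
        by_contra h0
        rw [if_neg (by simpa using h0)] at hm
        exact hm rfl
      · obtain ⟨l, hl, h⟩ := ih (by omega) hb hbm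
        exact ⟨l, by omega, h⟩

lemma mem_thetaSub_xS {j i d : ℕ} {p : MvPolynomial (Fin j) ℚ}
    (hp : p ∈ MvPolynomial.homogeneousSubmodule (Fin j) ℚ d)
    (h : ∀ m, MvPolynomial.coeff m p ≠ 0 → ∃ l : Fin j, (l : ℕ) < i ∧ m l ≠ 0) :
    p ∈ thetaSub (xS j) (MvPolynomial.homogeneousSubmodule (Fin j) ℚ) i d := by
  rw [p.as_sum]
  refine sum_mem fun m hm => ?_
  have hm' : MvPolynomial.coeff m p ≠ 0 := MvPolynomial.mem_support_iff.mp hm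
  obtain ⟨l, hl, hml⟩ := h m hm'
  have hdeg : m.degree = d := by
    by_contra hne
    exact hm' (MvPolynomial.IsHomogeneous.coeff_eq_zero hp hne)
  have hle : Finsupp.single l 1 ≤ m := by
    rw [Finsupp.single_le_iff]; omega
  obtain ⟨m', rfl⟩ := exists_add_of_le hle
  have hd : d = m'.degree + 1 := by
    rw [← hdeg, map_add, Finsupp.degree_single, add_comm]
  subst hd
  have : MvPolynomial.monomial (Finsupp.single l 1 + m') (MvPolynomial.coeff
      (Finsupp.single l 1 + m') p) = xS j l (MvPolynomial.monomial m' (MvPolynomial.coeff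
      (Finsupp.single l 1 + m') p)) := by
    rw [xS_apply l.2, MvPolynomial.X, MvPolynomial.monomial_mul, one_mul]
  rw [this]
  exact mem_thetaSub_of_lt hl (MvPolynomial.isHomogeneous_monomial _ rfl)

lemma reg_xS (j : ℕ) : Reg (xS j) (MvPolynomial.homogeneousSubmodule (Fin j) ℚ) j := by
  intro i hi d a ha hx
  refine mem_thetaSub_xS ha fun m hm => ?_
  obtain ⟨l, hl, h⟩ := exists_of_mem_thetaSub_xS hi.le hx (m := Finsupp.single ⟨i, hi⟩ 1 + m)
    (by rwa [xS_apply hi, MvPolynomial.coeff_X_mul])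
  refine ⟨l, hl, ?_⟩
  have hne : (⟨i, hi⟩ : Fin j) ≠ l := by rintro rfl; simp at hl
  simpa [Finsupp.single_apply, hne] using h

instance finite_homog (j d : ℕ) :
    Module.Finite ℚ (MvPolynomial.homogeneousSubmodule (Fin j) ℚ d) :=
  Module.Finite.of_fg (MvPolynomial.homogeneousSubmodule_fg _ _ d)

lemma xS_comm (j i l : ℕ) (w : MvPolynomial (Fin j) ℚ) :
    xS j i (xS j l w) = xS j l (xS j i w) := by
  by_cases h : i < j
  · by_cases h' : l < j
    · simp only [xS_apply h, xS_apply h']; ring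
    · simp [xS, h']
  · simp [xS, h]

lemma hilb_xS (j : ℕ) :
    (1 - PowerSeries.X) ^ j * hilb (MvPolynomial.homogeneousSubmodule (Fin j) ℚ) = 1 := by
  rw [← gser_eq (stable_xS j) (xS_comm j) (reg_xS j)]
  ext d
  simp only [gser, PowerSeries.coeff_mk]
  cases d with
  | zero =>
    rw [thetaSub_zero_right, finrank_bot, MvPolynomial.homogeneousSubmodule_zero,
      Submodule.one_eq_span, finrank_span_singleton one_ne_zero]
    simp
  | succ d =>
    have : thetaSub (xS j) (MvPolynomial.homogeneousSubmodule (Fin j) ℚ) j (d + 1) =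
        MvPolynomial.homogeneousSubmodule (Fin j) ℚ (d + 1) := by
      refine le_antisymm (thetaSub_le (stable_xS j) _ _) fun p hp => ?_
      refine mem_thetaSub_xS hp fun m hm => ?_
      by_contra! hcon
      have hm0 : m = 0 := by ext l; exact hcon l l.2
      subst hm0
      exact hm (MvPolynomial.IsHomogeneous.coeff_eq_zero hp (by simp))
    rw [this, PowerSeries.coeff_one]
    simp

section Simplex

variable {β : Type*}

open MvPolynomial

/-- The linear form `∑_{v ∈ F} a_v ^ i X_v`. -/
noncomputable def theta (a : β → ℚ) (F : Finset β) (i : ℕ) : MvPolynomial β ℚ :=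
  ∑ v ∈ F, C (a v ^ i) * X v

/-- The polynomials, homogeneous of degree `d`, in the variables `X_v`, `v ∈ F`. -/
noncomputable def RF (F : Finset β) (d : ℕ) : Submodule ℚ (MvPolynomial β ℚ) :=
  homogeneousSubmodule β ℚ d ⊓ Subalgebra.toSubmodule (supported ℚ (F : Set β))

lemma mem_RF {F : Finset β} {d : ℕ} {p : MvPolynomial β ℚ} :
    p ∈ RF F d ↔ p.IsHomogeneous d ∧ p ∈ supported ℚ (F : Set β) := Iff.rfl

/-- Multiplication by `theta a F i`. -/
noncomputable def xR (a : β → ℚ) (F : Finset β) (i : ℕ) : MvPolynomial β ℚ →ₗ[ℚ] MvPolynomial β ℚ :=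
  LinearMap.mulLeft ℚ (theta a F i)

lemma theta_mem (a : β → ℚ) (F : Finset β) (i : ℕ) : theta a F i ∈ RF F 1 := by
  refine sum_mem fun v hv => mem_RF.mpr ⟨isHomogeneous_C_mul_X _ _, mul_mem ?_ ?_⟩
  · exact (supported ℚ (F : Set β)).algebraMap_mem _
  · exact X_mem_supported.mpr hv

lemma stable_xR (a : β → ℚ) (F : Finset β) : Stable (xR a F) (RF F) := by
  intro i d p hp
  have h := mem_RF.mp (theta_mem a F i)
  have hp := mem_RF.mp hp
  refine mem_RF.mpr ⟨?_, mul_mem h.2 hp.2⟩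
  rw [add_comm d 1]
  exact h.1.mul hp.1

/-- If the `a v`, `v ∈ F`, are distinct, then by Vandermonde the forms `theta a F i`, `i < |F|`, are
linear coordinates, so the simplex `F` looks like a polynomial ring in these forms. -/
lemma exists_coord (a : β → ℚ) (F : Finset β) (ha : Set.InjOn a F) :
    ∃ (φ : MvPolynomial (Fin F.card) ℚ →ₐ[ℚ] MvPolynomial β ℚ)
      (ψ : MvPolynomial β ℚ →ₐ[ℚ] MvPolynomial (Fin F.card) ℚ),
      (∀ i, φ (X i) = theta a F i) ∧ (∀ i : Fin F.card, ψ (theta a F i) = X i) ∧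
      (∀ d, ∀ p ∈ homogeneousSubmodule (Fin F.card) ℚ d, φ p ∈ RF F d) ∧
      (∀ d, ∀ p ∈ RF F d, ψ p ∈ homogeneousSubmodule (Fin F.card) ℚ d) ∧
      (∀ d, ∀ p ∈ RF F d, φ (ψ p) = p) ∧ (∀ p, ψ (φ p) = p) := by
  classical
  let e : Fin F.card ≃ F := F.equivFin.symm
  let V : Matrix (Fin F.card) (Fin F.card) ℚ := Matrix.vandermonde fun l => a (e l)
  have hV : IsUnit V.det := by
    rw [isUnit_iff_ne_zero]
    refine Matrix.det_vandermonde_ne_zero_iff.mpr fun l l' h => ?_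
    exact e.injective (Subtype.ext (ha (e l).2 (e l').2 h))
  let φ : MvPolynomial (Fin F.card) ℚ →ₐ[ℚ] MvPolynomial β ℚ := aeval fun i => theta a F i
  let ψ : MvPolynomial β ℚ →ₐ[ℚ] MvPolynomial (Fin F.card) ℚ :=
    aeval fun v => if h : v ∈ F then ∑ k, C (V⁻¹ k (e.symm ⟨v, h⟩)) * X k else 0
  have hψX : ∀ l, ψ (X (e l : β)) = ∑ k, C (V⁻¹ k l) * X k := by
    intro l
    simp [ψ]
  have hθ : ∀ i : Fin F.card, theta a F i = ∑ l, C (V l i) * X (e l : β) := by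
    intro i
    rw [theta, ← Finset.sum_coe_sort, ← e.sum_comp]
    simp [V, Matrix.vandermonde_apply]
  have hC : ∀ q, ψ (C q) = C q := fun q => ψ.commutes q
  have hC' : ∀ q, φ (C q) = C q := fun q => φ.commutes q
  have hφX : ∀ i, φ (X i) = theta a F i := fun i => by simp [φ]
  have hψθ : ∀ i : Fin F.card, ψ (theta a F i) = X i := by
    intro i
    rw [hθ, map_sum]
    simp only [map_mul, hC, hψX, Finset.mul_sum]
    rw [Finset.sum_comm]
    have : ∀ k, ∑ l, C (V l i) * (C (V⁻¹ k l) * X k) =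
        C ((V⁻¹ * V) k i) * (X k : MvPolynomial (Fin F.card) ℚ) := by
      intro k
      rw [Matrix.mul_apply, map_sum, Finset.sum_mul]
      refine Finset.sum_congr rfl fun l _ => ?_
      rw [map_mul]; ring
    simp only [this, Matrix.nonsing_inv_mul V hV, Matrix.one_apply]
    simp
  have hφψX : ∀ v ∈ F, φ (ψ (X v)) = X v := by
    intro v hv
    obtain ⟨l, hl⟩ := e.surjective ⟨v, hv⟩
    have hl' : v = e l := by rw [hl]
    rw [hl', hψX, map_sum]
    simp only [map_mul, hC', hφX, hθ, Finset.mul_sum]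
    rw [Finset.sum_comm]
    have : ∀ k, ∑ i, C (V⁻¹ i l) * (C (V k i) * X (e k : β)) =
        C ((V * V⁻¹) k l) * (X (e k : β) : MvPolynomial β ℚ) := by
      intro k
      rw [Matrix.mul_apply, map_sum, Finset.sum_mul]
      refine Finset.sum_congr rfl fun l _ => ?_
      rw [map_mul]; ring
    simp only [this, Matrix.mul_nonsing_inv V hV, Matrix.one_apply]
    simp
  refine ⟨φ, ψ, hφX, hψθ, ?_, ?_, ?_, ?_⟩
  · intro d p hp
    refine mem_RF.mpr ⟨?_, ?_⟩
    · have := MvPolynomial.IsHomogeneous.aeval (n := 1) hp (fun i : Fin F.card => theta a F i)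
        (fun i => (mem_RF.mp (theta_mem a F i)).1)
      rwa [one_mul] at this
    · have h : φ.range ≤ supported ℚ (F : Set β) := by
        rw [← Algebra.adjoin_range_eq_range_aeval]
        refine Algebra.adjoin_le ?_
        rintro _ ⟨i, rfl⟩
        exact (mem_RF.mp (theta_mem a F i)).2
      exact h ⟨p, rfl⟩
  · intro d p hp
    have := MvPolynomial.IsHomogeneous.aeval (n := 1) (mem_RF.mp hp).1
      (fun v => if h : v ∈ F then ∑ k, C (V⁻¹ k (e.symm ⟨v, h⟩)) *
        (X k : MvPolynomial (Fin F.card) ℚ) else 0) ?_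
    · rwa [one_mul] at this
    · intro v
      split_ifs
      · exact MvPolynomial.IsHomogeneous.sum _ _ _ fun k _ => isHomogeneous_C_mul_X _ _
      · exact isHomogeneous_zero _ _ _
  · intro d p hp
    have h : Set.EqOn (φ.comp ψ) (AlgHom.id ℚ (MvPolynomial β ℚ))
        (supported ℚ (F : Set β) : Set (MvPolynomial β ℚ)) := by
      refine AlgHom.eqOn_adjoin_iff.mpr ?_
      rintro _ ⟨v, hv, rfl⟩
      exact hφψX v hv
    exact h (mem_RF.mp hp).2
  · intro p
    have : ψ.comp φ = AlgHom.id ℚ _ := by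
      ext1 i
      simp only [AlgHom.comp_apply, hφX, hψθ, AlgHom.id_apply]
    exact DFunLike.congr_fun this p

lemma reg_xR (a : β → ℚ) (F : Finset β) (ha : Set.InjOn a F) : Reg (xR a F) (RF F) F.card := by
  obtain ⟨φ, ψ, h1, h2, h3, h4, h5, -⟩ := exists_coord a F ha
  refine (reg_xS F.card).transfer φ.toLinearMap ψ.toLinearMap ?_ ?_ h3 h4 h5
  · intro l hl w
    simp [xS_apply hl, xR, h1]
  · intro l hl w
    have := h2 ⟨l, hl⟩
    simp only at this
    simp [xS_apply hl, xR, this]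

lemma RF_eq_map (F : Finset β) : ∃ φ : MvPolynomial (Fin F.card) ℚ →ₗ[ℚ] MvPolynomial β ℚ,
    Function.Injective φ ∧ ∀ d, RF F d = (homogeneousSubmodule (Fin F.card) ℚ d).map φ := by
  obtain ⟨a, ha⟩ : ∃ a : β → ℚ, Set.InjOn a F := by
    obtain ⟨f, hf⟩ := Set.countable_iff_exists_injOn.mp F.countable_toSet
    exact ⟨fun v => f v, fun v hv w hw h => hf hv hw (Nat.cast_injective h)⟩
  obtain ⟨φ, ψ, -, -, h3, h4, h5, h6⟩ := exists_coord a F ha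
  refine ⟨φ.toLinearMap, Function.LeftInverse.injective h6, fun d => le_antisymm ?_ ?_⟩
  · intro p hp
    exact ⟨ψ p, h4 d p hp, h5 d p hp⟩
  · rintro _ ⟨p, hp, rfl⟩
    exact h3 d p hp

instance finite_RF (F : Finset β) (d : ℕ) : Module.Finite ℚ (RF F d) := by
  obtain ⟨φ, -, h⟩ := RF_eq_map F
  rw [h d]
  infer_instance

lemma finrank_RF (F : Finset β) (d : ℕ) :
    Module.finrank ℚ (RF F d) = Module.finrank ℚ (homogeneousSubmodule (Fin F.card) ℚ d) := by
  obtain ⟨φ, hφ, h⟩ := RF_eq_map F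
  rw [h d]
  exact (Submodule.equivMapOfInjective φ hφ _).finrank_eq.symm

end Simplex

/-! ### The boundary operator and links -/

section Boundary

variable {β : Type*} [LinearOrder β]

lemma sgn_insert {v : β} {G : Finset β} (hv : v ∉ G) :
    sgn (insert v G) G = (-1 : ℤ) ^ (G.filter (· < v)).card := by
  have h1 : insert v G \ G = {v} := by
    ext w; simp only [Finset.mem_sdiff, Finset.mem_insert, Finset.mem_singleton]
    constructor
    · rintro ⟨h | h, h'⟩
      · exact h
      · exact absurd h h'
    · rintro rfl; exact ⟨Or.inl rfl, hv⟩
  rw [sgn, h1, Finset.filter_insert]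
  simp

lemma subset_card_succ {G F : Finset β} (h : G ⊆ F) (hc : F.card = G.card + 1) :
    ∃ v ∉ G, F = insert v G := by
  obtain ⟨v, hv⟩ := Finset.card_eq_one.mp
    (show (F \ G).card = 1 by rw [Finset.card_sdiff_of_subset h]; omega)
  have hvm : v ∈ F \ G := by rw [hv]; simp
  refine ⟨v, (Finset.mem_sdiff.mp hvm).2, ?_⟩
  rw [← Finset.sdiff_union_of_subset h, hv]
  rfl

lemma bdry_congr {K : Finset (Finset β)} {c c' : Finset β → ℚ} {G : Finset β}
    (h : ∀ F, G ⊆ F → c F = c' F) : bdry K c G = bdry K c' G := by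
  refine Finset.sum_congr rfl fun F hF => ?_
  rw [h F (Finset.mem_filter.mp hF).2.1]

/-- In the boundary of the boundary, a face of two more elements contributes through exactly two
intermediate faces, with opposite signs. -/
lemma sgn_cancel {G : Finset β} {u v : β} (hu : u ∉ G) (hv : v ∉ G) (huv : u < v) :
    sgn (insert u G) G * sgn (insert v (insert u G)) (insert u G) +
      sgn (insert v G) G * sgn (insert u (insert v G)) (insert v G) = 0 := by
  rw [sgn_insert hu, sgn_insert hv, sgn_insert (by simp [hv, huv.ne']),
    sgn_insert (by simp [hu, huv.ne]), Finset.filter_insert, Finset.filter_insert, if_pos huv,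
    if_neg huv.not_gt, Finset.card_insert_of_notMem (by simp [hu])]
  ring

lemma bdry_bdry {K : Finset (Finset β)} (hK : IsComplex K) (c : Finset β → ℚ) (G : Finset β) :
    bdry K (bdry K c) G = 0 := by
  unfold bdry
  simp only [Finset.mul_sum]
  have h1 : ∑ F ∈ K.filter (fun F => G ⊆ F ∧ F.card = G.card + 1),
      ∑ E ∈ K.filter (fun E => F ⊆ E ∧ E.card = F.card + 1),
        (sgn F G : ℚ) * ((sgn E F : ℚ) * c E) =
      ∑ E ∈ K, ∑ F ∈ K.filter (fun F => (G ⊆ F ∧ F.card = G.card + 1) ∧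
        (F ⊆ E ∧ E.card = F.card + 1)), (sgn F G : ℚ) * ((sgn E F : ℚ) * c E) := by
    refine Finset.sum_comm' fun F E => ?_
    simp only [Finset.mem_filter]
    tauto
  rw [h1]
  refine Finset.sum_eq_zero fun E hE => ?_
  by_cases hGE : G ⊆ E ∧ E.card = G.card + 2
  · obtain ⟨hGE, hcard⟩ := hGE
    obtain ⟨u, v, hne, huv⟩ := Finset.card_eq_two.mp
      (show (E \ G).card = 2 by rw [Finset.card_sdiff_of_subset hGE]; omega)
    wlog hlt : u < v generalizing u v
    · exact this v u hne.symm (by rw [huv, Finset.pair_comm])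
        (lt_of_le_of_ne (not_lt.mp hlt) hne.symm)
    have hu : u ∈ E \ G := by rw [huv]; simp
    have hv : v ∈ E \ G := by rw [huv]; simp
    have hu' := Finset.mem_sdiff.mp hu
    have hv' := Finset.mem_sdiff.mp hv
    have hE' : E = insert v (insert u G) := by
      rw [← Finset.sdiff_union_of_subset hGE, huv]
      ext w; simp; tauto
    have hE'' : E = insert u (insert v G) := by rw [hE', Finset.insert_comm]
    have hset : K.filter (fun F => (G ⊆ F ∧ F.card = G.card + 1) ∧
        (F ⊆ E ∧ E.card = F.card + 1)) = {insert u G, insert v G} := by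
      ext F
      simp only [Finset.mem_filter, Finset.mem_insert, Finset.mem_singleton]
      constructor
      · rintro ⟨-, ⟨h1, h2⟩, h3, -⟩
        obtain ⟨w, hw, rfl⟩ := subset_card_succ h1 h2
        have : w ∈ E \ G := Finset.mem_sdiff.mpr ⟨h3 (Finset.mem_insert_self _ _), hw⟩
        rw [huv] at this
        simp only [Finset.mem_insert, Finset.mem_singleton] at this
        rcases this with rfl | rfl
        · exact Or.inl rfl
        · exact Or.inr rfl
      · rintro (rfl | rfl)
        · have hs : insert u G ⊆ E := by rw [hE']; exact Finset.subset_insert _ _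
          have := Finset.card_insert_of_notMem hu'.2
          exact ⟨hK.2 E hE _ hs, ⟨Finset.subset_insert _ _, this⟩, hs, by omega⟩
        · have hs : insert v G ⊆ E := by rw [hE'']; exact Finset.subset_insert _ _
          have := Finset.card_insert_of_notMem hv'.2
          exact ⟨hK.2 E hE _ hs, ⟨Finset.subset_insert _ _, this⟩, hs, by omega⟩
    have hne' : insert u G ≠ insert v G := by
      intro h
      have : u ∈ insert v G := h ▸ Finset.mem_insert_self u G
      simp [hne, hu'.2] at this
    rw [hset, Finset.sum_pair hne']
    have h := sgn_cancel hu'.2 hv'.2 hlt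
    rw [← hE', ← hE''] at h
    have h' : (sgn (insert u G) G : ℚ) * sgn E (insert u G) +
      sgn (insert v G) G * sgn E (insert v G) = 0 := by exact_mod_cast h
    linear_combination c E * h'
  · rw [Finset.filter_false_of_mem, Finset.sum_empty]
    rintro F - ⟨⟨h1, h2⟩, h3, h4⟩
    exact hGE ⟨h1.trans h3, by omega⟩

lemma mem_linkF {K : Finset (Finset β)} {S G : Finset β} :
    G ∈ linkF K S ↔ Disjoint G S ∧ G ∪ S ∈ K := by
  simp only [linkF, Finset.mem_image, Finset.mem_filter]
  constructor
  · rintro ⟨F, ⟨hF, hS⟩, rfl⟩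
    exact ⟨Finset.sdiff_disjoint, by rwa [Finset.sdiff_union_of_subset hS]⟩
  · rintro ⟨h1, h2⟩
    exact ⟨G ∪ S, ⟨h2, Finset.subset_union_right⟩, Finset.union_sdiff_cancel_right h1⟩

/-- The sign twist identifying the chains of the link of `S` with the chains of `K` on faces
containing `S`. -/
def twist (S G : Finset β) : ℚ := ∏ v ∈ G, (-1) ^ (S.filter (· < v)).card

lemma twist_mul_self (S G : Finset β) : twist S G * twist S G = 1 := by
  rw [twist, ← Finset.prod_mul_distrib]
  refine Finset.prod_eq_one fun v _ => ?_
  rw [← mul_pow]; simp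

lemma sgn_mul_twist {S G : Finset β} {v : β} (hvG : v ∉ G) (hvS : v ∉ S) (hGS : Disjoint G S) :
    (sgn (insert v G) G : ℚ) * twist S (insert v G) =
      twist S G * sgn (insert v G ∪ S) (G ∪ S) := by
  rw [Finset.insert_union, sgn_insert hvG, sgn_insert (by simp [hvG, hvS]), twist, twist,
    Finset.prod_insert hvG, Finset.filter_union,
    Finset.card_union_of_disjoint (Finset.disjoint_filter_filter hGS), pow_add]
  push_cast
  ring

lemma bdry_linkF (K : Finset (Finset β)) (S : Finset β) (c : Finset β → ℚ) {G : Finset β}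
    (hG : Disjoint G S) :
    bdry (linkF K S) (fun G => if Disjoint G S then twist S G * c (G ∪ S) else 0) G =
      twist S G * bdry K c (G ∪ S) := by
  rw [bdry, bdry, Finset.mul_sum]
  refine Finset.sum_bij (fun F _ => F ∪ S) ?_ ?_ ?_ ?_
  · intro F hF
    obtain ⟨hF, h1, h2⟩ := Finset.mem_filter.mp hF
    obtain ⟨h3, h4⟩ := mem_linkF.mp hF
    refine Finset.mem_filter.mpr ⟨h4, Finset.union_subset_union_left h1, ?_⟩
    rw [Finset.card_union_of_disjoint h3, Finset.card_union_of_disjoint hG]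
    omega
  · intro F hF F' hF' h
    have h3 := (mem_linkF.mp (Finset.mem_filter.mp hF).1).1
    have h3' := (mem_linkF.mp (Finset.mem_filter.mp hF').1).1
    rw [← Finset.union_sdiff_cancel_right h3, h, Finset.union_sdiff_cancel_right h3']
  · intro E hE
    obtain ⟨hE, h1, h2⟩ := Finset.mem_filter.mp hE
    have hS : S ⊆ E := Finset.subset_union_right.trans h1
    have hES : E \ S ∪ S = E := Finset.sdiff_union_of_subset hS
    refine ⟨E \ S, Finset.mem_filter.mpr ⟨mem_linkF.mpr ⟨Finset.sdiff_disjoint, by rwa [hES]⟩,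
      ?_, ?_⟩, hES⟩
    · exact Finset.subset_sdiff.mpr ⟨Finset.subset_union_left.trans h1, hG⟩
    · rw [Finset.card_sdiff_of_subset hS, h2, Finset.card_union_of_disjoint hG]
      omega
  · intro F hF
    obtain ⟨hF, h1, h2⟩ := Finset.mem_filter.mp hF
    obtain ⟨h3, h4⟩ := mem_linkF.mp hF
    obtain ⟨v, hv, rfl⟩ := subset_card_succ h1 h2
    have hvS : v ∉ S := Finset.disjoint_left.mp h3 (Finset.mem_insert_self _ _)
    rw [if_pos h3, ← mul_assoc, sgn_mul_twist hv hvS hG]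
    ring

lemma bdry_linkF_of_not_disjoint (K : Finset (Finset β)) (S : Finset β) (c : Finset β → ℚ)
    {G : Finset β} (hG : ¬ Disjoint G S) : bdry (linkF K S) c G = 0 := by
  rw [bdry, Finset.filter_false_of_mem, Finset.sum_empty]
  rintro F hF ⟨h, -⟩
  exact hG ((mem_linkF.mp hF).1.mono_left h)

lemma sup_card_linkF {L : Finset (Finset β)} {r : ℕ} (hp : IsPure L r)
    (hle : ∀ F ∈ L, F.card ≤ r) {S : Finset β} (hS : S ∈ L) :
    (linkF L S).sup Finset.card = r - S.card := by
  apply le_antisymm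
  · refine Finset.sup_le fun G hG => ?_
    obtain ⟨h1, h2⟩ := mem_linkF.mp hG
    have := hle _ h2
    rw [Finset.card_union_of_disjoint h1] at this
    omega
  · obtain ⟨B, hB, hSB, hc⟩ := hp S hS
    have : B \ S ∈ linkF L S :=
      mem_linkF.mpr ⟨Finset.sdiff_disjoint, by rwa [Finset.sdiff_union_of_subset hSB]⟩
    rw [← hc, ← Finset.card_sdiff_of_subset hSB]
    exact Finset.le_sup (f := Finset.card) this

/-- In a Cohen–Macaulay complex, the chain complex on the faces containing `S` is exact below the
top degree. -/
lemma star_exact {L : Finset (Finset β)} {r : ℕ} (hL : IsComplex L) (hCM : IsCM L)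
    (hp : IsPure L r) (hle : ∀ F ∈ L, F.card ≤ r) (S : Finset β) {j : ℕ} (hj : j < r)
    (c : Finset β → ℚ) (hc : ∀ F, c F ≠ 0 → F ∈ L ∧ F.card = j ∧ S ⊆ F)
    (hz : ∀ G, S ⊆ G → bdry L c G = 0) :
    ∃ d : Finset β → ℚ, (∀ F, d F ≠ 0 → F ∈ L ∧ F.card = j + 1 ∧ S ⊆ F) ∧
      ∀ G, S ⊆ G → bdry L d G = c G := by
  by_cases h0 : ∀ F, c F = 0
  · exact ⟨0, fun F h => absurd rfl h, fun G _ => by simp [bdry, h0]⟩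
  push Not at h0
  obtain ⟨F₀, hF₀⟩ := h0
  obtain ⟨hF₀L, hF₀j, hSF₀⟩ := hc F₀ hF₀
  have hS : S ∈ L := hL.2 F₀ hF₀L S hSF₀
  have hSj : S.card ≤ j := hF₀j ▸ Finset.card_le_card hSF₀
  obtain ⟨d', hd', hb⟩ := hCM S hS (j - S.card)
    (by rw [sup_card_linkF hp hle hS]; omega)
    (fun G => if Disjoint G S then twist S G * c (G ∪ S) else 0)
    (by
      intro G hG
      by_cases hGS : Disjoint G S
      · rw [if_pos hGS] at hG
        obtain ⟨h1, h2, -⟩ := hc _ (right_ne_zero_of_mul hG)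
        rw [Finset.card_union_of_disjoint hGS] at h2
        exact ⟨mem_linkF.mpr ⟨hGS, h1⟩, by omega⟩
      · rw [if_neg hGS] at hG
        exact absurd rfl hG)
    (by
      intro G
      by_cases hGS : Disjoint G S
      · rw [bdry_linkF _ _ _ hGS, hz _ Finset.subset_union_right, mul_zero]
      · exact bdry_linkF_of_not_disjoint _ _ _ hGS)
  let d : Finset β → ℚ := fun F => if S ⊆ F then twist S (F \ S) * d' (F \ S) else 0
  have hdd : d' = fun G => if Disjoint G S then twist S G * d (G ∪ S) else 0 := by
    funext G
    split_ifs with hGS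
    · simp only [d, if_pos (Finset.subset_union_right (s₁ := G) (s₂ := S)),
        Finset.union_sdiff_cancel_right hGS]
      rw [← mul_assoc, twist_mul_self, one_mul]
    · by_contra h
      exact hGS (mem_linkF.mp (hd' G h).1).1
  refine ⟨d, ?_, ?_⟩
  · intro F hF
    by_cases hSF : S ⊆ F
    · simp only [d, if_pos hSF] at hF
      obtain ⟨h1, h2⟩ := hd' _ (right_ne_zero_of_mul hF)
      have h3 := (mem_linkF.mp h1).2
      rw [Finset.sdiff_union_of_subset hSF] at h3
      rw [Finset.card_sdiff_of_subset hSF] at h2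
      have := Finset.card_le_card hSF
      exact ⟨h3, by omega, hSF⟩
    · simp only [d, if_neg hSF] at hF
      exact absurd rfl hF
  · intro G hSG
    have h := hb (G \ S)
    have hdis : Disjoint (G \ S) S := Finset.sdiff_disjoint
    rw [hdd, bdry_linkF _ _ _ hdis, if_pos hdis, Finset.sdiff_union_of_subset hSG] at h
    have h' := congrArg (fun q => twist S (G \ S) * q) h
    simpa only [← mul_assoc, twist_mul_self, one_mul] using h'

end Boundary

/-! ### The complex of polynomial rings on the faces -/

section FaceComplex

set_option linter.unusedSectionVars false

variable {β : Type*} [LinearOrder β]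

open MvPolynomial

/-- Multiplication by the `i`-th linear form, on every face. -/
noncomputable def xM (a : β → ℚ) (i : ℕ) :
    (Finset β → MvPolynomial β ℚ) →ₗ[ℚ] (Finset β → MvPolynomial β ℚ) :=
  LinearMap.pi fun F => xR a F i ∘ₗ LinearMap.proj F

lemma xM_apply (a : β → ℚ) (i : ℕ) (c : Finset β → MvPolynomial β ℚ) (F : Finset β) :
    xM a i c F = theta a F i * c F := rfl

lemma xM_comm (a : β → ℚ) (i l : ℕ) (c : Finset β → MvPolynomial β ℚ) :
    xM a i (xM a l c) = xM a l (xM a i c) := by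
  funext F
  simp only [xM_apply]
  ring

/-- The degree `d` part of `⨁_F ℚ[X_v : v ∈ F]`, over the faces `F` of `K` with `j` elements. -/
noncomputable def MM (K : Finset (Finset β)) (j d : ℕ) : Submodule ℚ (Finset β → MvPolynomial β ℚ) :=
  Submodule.pi Set.univ fun F => if F ∈ K ∧ F.card = j then RF F d else ⊥

lemma mem_MM {K : Finset (Finset β)} {j d : ℕ} {c : Finset β → MvPolynomial β ℚ} :
    c ∈ MM K j d ↔ ∀ F, c F ∈ RF F d ∧ (c F ≠ 0 → F ∈ K ∧ F.card = j) := by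
  simp only [MM, Submodule.mem_pi, Set.mem_univ, true_imp_iff]
  refine forall_congr' fun F => ?_
  split_ifs with h
  · exact ⟨fun h' => ⟨h', fun _ => h⟩, fun h' => h'.1⟩
  · rw [Submodule.mem_bot]
    refine ⟨fun h' => ⟨h' ▸ zero_mem _, fun h0 => absurd h' h0⟩, fun h' => ?_⟩
    by_contra h0
    exact h (h'.2 h0)

lemma stable_xM (a : β → ℚ) (K : Finset (Finset β)) (j : ℕ) : Stable (xM a) (MM K j) := by
  intro i d c hc
  rw [mem_MM] at hc ⊢
  intro F
  exact ⟨stable_xR a F i d _ (hc F).1, fun h => (hc F).2 (right_ne_zero_of_mul h)⟩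

lemma single_mem_MM {K : Finset (Finset β)} {F : Finset β} (hF : F ∈ K) {d : ℕ}
    {p : MvPolynomial β ℚ} (hp : p ∈ RF F d) : (Pi.single F p : Finset β → _) ∈ MM K F.card d := by
  rw [mem_MM]
  intro G
  by_cases h : G = F
  · subst h; simpa using ⟨hp, fun _ => hF⟩
  · simp [h]

lemma reg_xM (a : β → ℚ) (K : Finset (Finset β)) (ha : ∀ F ∈ K, Set.InjOn a F) (j : ℕ) :
    Reg (xM a) (MM K j) j := by
  intro i hi d c hc hx
  have hsum : c = ∑ F ∈ K.filter (fun F => F.card = j), Pi.single F (c F) := by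
    funext G
    rw [Finset.sum_apply]
    simp only [Pi.single_apply]
    rw [Finset.sum_ite_eq]
    split_ifs with h
    · rfl
    · by_contra h0
      exact h (Finset.mem_filter.mpr ((mem_MM.mp hc G).2 h0))
  rw [hsum]
  refine sum_mem fun F hF => ?_
  obtain ⟨hFK, rfl⟩ := Finset.mem_filter.mp hF
  have h1 := thetaSub_map (x := xM a) (x' := xR a F) (A' := RF F)
    (LinearMap.proj F : (Finset β → MvPolynomial β ℚ) →ₗ[ℚ] _) (i := i)
    (fun l _ w => rfl) (fun d c hc => (mem_MM.mp hc F).1) _ _ hx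
  have h2 := reg_xR a F (ha F hFK) i hi d _ (mem_MM.mp hc F).1 h1
  refine thetaSub_map (x := xR a F) (x' := xM a) (A' := MM K F.card)
    (LinearMap.single ℚ (fun _ : Finset β => MvPolynomial β ℚ) F) (i := i)
    (fun l _ w => ?_) (fun d p hp => single_mem_MM hFK hp) _ _ h2
  funext G
  rw [xM_apply]
  by_cases h : G = F
  · subst h; simp [xR]
  · simp [h]

lemma finrank_MM_aux (K : Finset (Finset β)) (j d : ℕ) :
    Module.Finite ℚ (MM K j d) ∧ Module.finrank ℚ (MM K j d) =
      fvec K j * Module.finrank ℚ (homogeneousSubmodule (Fin j) ℚ d) := by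
  let S := K.filter (fun F => F.card = j)
  let g : ((F : S) → RF (F : Finset β) d) →ₗ[ℚ] (Finset β → MvPolynomial β ℚ) :=
    LinearMap.pi fun F => if h : F ∈ S then (RF F d).subtype ∘ₗ LinearMap.proj (⟨F, h⟩ : S) else 0
  have hg : ∀ p (F : S), g p F = p F := by
    intro p F
    simp [g]
  have hg0 : ∀ p F, F ∉ S → g p F = 0 := by
    intro p F h
    simp [g, h]
  have hinj : Function.Injective g := by
    intro p q h
    funext F
    apply Subtype.ext
    rw [← hg, ← hg, h]
  have hrange : LinearMap.range g = MM K j d := by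
    apply le_antisymm
    · rintro _ ⟨p, rfl⟩
      rw [mem_MM]
      intro F
      by_cases h : F ∈ S
      · rw [hg p ⟨F, h⟩]
        exact ⟨(p ⟨F, h⟩).2, fun _ => Finset.mem_filter.mp h⟩
      · rw [hg0 p F h]
        exact ⟨zero_mem _, fun h => absurd rfl h⟩
    · intro c hc
      rw [mem_MM] at hc
      refine ⟨fun F => ⟨c F, (hc F).1⟩, ?_⟩
      funext F
      by_cases h : F ∈ S
      · rw [hg _ ⟨F, h⟩]
      · rw [hg0 _ F h]
        by_contra h0
        exact h (Finset.mem_filter.mpr ((hc F).2 (Ne.symm h0)))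
  rw [← hrange]
  refine ⟨inferInstance, ?_⟩
  rw [LinearMap.finrank_range_of_inj hinj, Module.finrank_pi_fintype]
  have : ∀ F : S, Module.finrank ℚ (RF (F : Finset β) d) =
      Module.finrank ℚ (homogeneousSubmodule (Fin j) ℚ d) := by
    intro F
    rw [finrank_RF, (Finset.mem_filter.mp F.2).2]
  rw [Finset.sum_congr rfl fun F _ => this F]
  simp [fvec, S]

instance finite_MM (K : Finset (Finset β)) (j d : ℕ) : Module.Finite ℚ (MM K j d) :=
  (finrank_MM_aux K j d).1

lemma hilb_MM (K : Finset (Finset β)) (j : ℕ) :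
    (1 - PowerSeries.X) ^ j * hilb (MM K j) = PowerSeries.C (fvec K j : ℤ) := by
  have : hilb (MM K j) =
      PowerSeries.C (fvec K j : ℤ) * hilb (homogeneousSubmodule (Fin j) ℚ) := by
    ext d
    rw [PowerSeries.coeff_C_mul]
    simp only [hilb, PowerSeries.coeff_mk]
    rw [(finrank_MM_aux K j d).2]
    push_cast
    rfl
  rw [this, mul_left_comm, hilb_xS, mul_one]

/-- Restriction to the face `G`: kill the variables outside `G`. -/
noncomputable def restr (G : Finset β) : MvPolynomial β ℚ →ₐ[ℚ] MvPolynomial β ℚ :=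
  aeval fun v => if v ∈ G then X v else 0

lemma coeff_restr (G : Finset β) (p : MvPolynomial β ℚ) (m : β →₀ ℕ) :
    coeff m (restr G p) = if m.support ⊆ G then coeff m p else 0 := by
  induction p using MvPolynomial.induction_on' with
  | add p q hp hq =>
    rw [map_add, coeff_add, hp, hq, coeff_add]
    split_ifs <;> simp
  | monomial u q =>
    have h : restr G (monomial u q) = if u.support ⊆ G then monomial u q else 0 := by
      rw [restr, aeval_monomial]
      split_ifs with hu
      · rw [monomial_eq]
        congr 1
        exact Finset.prod_congr rfl fun v hv => by simp only [if_pos (hu hv)]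
      · obtain ⟨v, hv, hvG⟩ := Finset.not_subset.mp hu
        rw [Finsupp.prod, Finset.prod_eq_zero hv, mul_zero]
        simp only [if_neg hvG]
        exact zero_pow (Finsupp.mem_support_iff.mp hv)
    rw [h]
    by_cases hum : u = m
    · subst hum
      split_ifs <;> simp
    · split_ifs <;> simp [coeff_monomial, hum]

lemma restr_theta (a : β → ℚ) {G F : Finset β} (h : G ⊆ F) (i : ℕ) :
    restr G (theta a F i) = theta a G i := by
  have hC : ∀ q, restr G (C q) = C q := fun q => (restr G).commutes q
  have hX : ∀ v, restr G (X v) = if v ∈ G then X v else 0 := fun v => by simp [restr]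
  rw [theta, theta, map_sum, ← Finset.sum_subset h]
  · exact Finset.sum_congr rfl fun v hv => by rw [map_mul, hC, hX, if_pos hv]
  · intro v _ hv
    rw [map_mul, hX, if_neg hv, mul_zero]

/-- The boundary operator of the complex of polynomial rings: the signed sum of the restrictions
to the codimension one faces. -/
noncomputable def bd (K : Finset (Finset β)) :
    (Finset β → MvPolynomial β ℚ) →ₗ[ℚ] (Finset β → MvPolynomial β ℚ) :=
  LinearMap.pi fun G => (restr G).toLinearMap ∘ₗ
    ∑ F ∈ K.filter (fun F => G ⊆ F ∧ F.card = G.card + 1), (sgn F G : ℚ) • LinearMap.proj F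

lemma bd_apply (K : Finset (Finset β)) (c : Finset β → MvPolynomial β ℚ) (G : Finset β) :
    bd K c G = ∑ F ∈ K.filter (fun F => G ⊆ F ∧ F.card = G.card + 1),
      (sgn F G : ℚ) • restr G (c F) := by
  simp [bd, map_sum]

lemma bd_xM (K : Finset (Finset β)) (a : β → ℚ) (l : ℕ) (c : Finset β → MvPolynomial β ℚ) :
    bd K (xM a l c) = xM a l (bd K c) := by
  funext G
  rw [xM_apply, bd_apply, bd_apply, Finset.mul_sum]
  refine Finset.sum_congr rfl fun F hF => ?_
  rw [xM_apply, map_mul, restr_theta a (Finset.mem_filter.mp hF).2.1, mul_smul_comm]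

lemma coeff_bd (K : Finset (Finset β)) (c : Finset β → MvPolynomial β ℚ) (G : Finset β)
    (m : β →₀ ℕ) : coeff m (bd K c G) =
      if m.support ⊆ G then bdry K (fun F => coeff m (c F)) G else 0 := by
  rw [bd_apply, coeff_sum]
  simp only [coeff_smul, coeff_restr, smul_eq_mul]
  split_ifs
  · rfl
  · simp

lemma bd_bd {K : Finset (Finset β)} (hK : IsComplex K) (c : Finset β → MvPolynomial β ℚ) :
    bd K (bd K c) = 0 := by
  funext G
  ext m
  rw [coeff_bd]
  split_ifs with h
  · rw [bdry_congr (c' := bdry K fun F => coeff m (c F)), bdry_bdry hK]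
    · rfl
    · intro F hF
      rw [coeff_bd, if_pos (h.trans hF)]
  · rfl

lemma restr_mem_RF (G : Finset β) {F : Finset β} {d : ℕ} {p : MvPolynomial β ℚ}
    (hp : p ∈ RF F d) : restr G p ∈ RF G d := by
  refine mem_RF.mpr ⟨?_, ?_⟩
  · intro m hm
    rw [coeff_restr] at hm
    split_ifs at hm with h
    · exact (mem_RF.mp hp).1 hm
    · exact absurd rfl hm
  · rw [mem_supported]
    intro v hv
    obtain ⟨m, hm, hvm⟩ := (mem_vars_iff_mem_support v).mp hv
    rw [mem_support_iff, coeff_restr] at hm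
    split_ifs at hm with h
    · exact h hvm
    · exact absurd rfl hm

lemma bd_mem {K : Finset (Finset β)} (hK : IsComplex K) {j d : ℕ}
    {c : Finset β → MvPolynomial β ℚ} (hc : c ∈ MM K (j + 1) d) : bd K c ∈ MM K j d := by
  rw [mem_MM] at hc ⊢
  intro G
  rw [bd_apply]
  refine ⟨sum_mem fun F _ => Submodule.smul_mem _ _ (restr_mem_RF G (hc F).1), fun h => ?_⟩
  obtain ⟨F, hF, h⟩ := Finset.exists_ne_zero_of_sum_ne_zero h
  obtain ⟨hFK, hGF, hcard⟩ := Finset.mem_filter.mp hF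
  have hcF : c F ≠ 0 := by
    rintro h0
    simp [h0] at h
  have := (hc F).2 hcF
  exact ⟨hK.2 F hFK G hGF, by omega⟩

lemma support_subset_of_coeff {F : Finset β} {d : ℕ} {p : MvPolynomial β ℚ} (hp : p ∈ RF F d)
    {m : β →₀ ℕ} (hm : coeff m p ≠ 0) : m.support ⊆ F ∧ m.degree = d := by
  constructor
  · intro v hv
    exact (mem_supported.mp (mem_RF.mp hp).2) ((mem_vars_iff_mem_support v).mpr ⟨m, mem_support_iff.mpr hm, hv⟩)
  · by_contra h
    exact hm (IsHomogeneous.coeff_eq_zero (mem_RF.mp hp).1 h)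

/-- Exactness of the complex of polynomial rings below the top degree. The multidegree `m` part is
the chain complex on the faces containing the support of `m`. -/
lemma exists_bd_eq {L : Finset (Finset β)} {r : ℕ} (hL : IsComplex L) (hCM : IsCM L)
    (hp : IsPure L r) (hle : ∀ F ∈ L, F.card ≤ r) {j : ℕ} (hj : j < r) {d : ℕ}
    {c : Finset β → MvPolynomial β ℚ} (hc : c ∈ MM L j d) (hz : bd L c = 0) :
    ∃ e ∈ MM L (j + 1) d, bd L e = c := by
  rw [mem_MM] at hc
  have key : ∀ m : β →₀ ℕ, ∃ e : Finset β → ℚ,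
      (∀ F, e F ≠ 0 → F ∈ L ∧ F.card = j + 1 ∧ m.support ⊆ F) ∧
      ∀ G, m.support ⊆ G → bdry L e G = coeff m (c G) := by
    intro m
    refine star_exact hL hCM hp hle m.support hj (fun F => coeff m (c F)) ?_ ?_
    · intro F hF
      have h0 : c F ≠ 0 := by
        rintro h0
        simp [h0] at hF
      exact ⟨((hc F).2 h0).1, ((hc F).2 h0).2, (support_subset_of_coeff (hc F).1 hF).1⟩
    · intro G hG
      have := coeff_bd L c G m
      rw [hz, if_pos hG] at this
      simpa using this.symm
  choose e he1 he2 using key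
  let E : Finset β → MvPolynomial β ℚ := fun F =>
    ∑ m ∈ F.finsuppAntidiag d, monomial m (e m F)
  have hmem : ∀ (F : Finset β) (m : β →₀ ℕ), m ∈ F.finsuppAntidiag d ↔
      m.degree = d ∧ m.support ⊆ F := by
    intro F m
    rw [Finset.mem_finsuppAntidiag]
    constructor
    · rintro ⟨h1, h2⟩
      refine ⟨?_, h2⟩
      rw [← h1, Finsupp.degree_apply]
      exact Finset.sum_subset h2 fun v _ hv => Finsupp.notMem_support_iff.mp hv
    · rintro ⟨h1, h2⟩
      refine ⟨?_, h2⟩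
      rw [← h1, Finsupp.degree_apply]
      exact (Finset.sum_subset h2 fun v _ hv => Finsupp.notMem_support_iff.mp hv).symm
  have hE : ∀ F m, coeff m (E F) = if m ∈ F.finsuppAntidiag d then e m F else 0 := by
    intro F m
    simp only [E, coeff_sum, coeff_monomial]
    rw [Finset.sum_ite_eq']
  refine ⟨E, ?_, ?_⟩
  · rw [mem_MM]
    intro F
    refine ⟨sum_mem fun m hm => mem_RF.mpr ⟨?_, ?_⟩, fun h => ?_⟩
    · exact isHomogeneous_monomial _ ((hmem F m).mp hm).1
    · rw [mem_supported]
      intro v hv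
      obtain ⟨m', hm', hvm⟩ := (mem_vars_iff_mem_support v).mp hv
      rw [mem_support_iff, coeff_monomial] at hm'
      split_ifs at hm' with h
      · exact ((hmem F m).mp hm).2 (h ▸ hvm)
      · exact absurd rfl hm'
    · obtain ⟨m, -, hm⟩ := Finset.exists_ne_zero_of_sum_ne_zero h
      have h0 : e m F ≠ 0 := by
        rintro h0
        simp [h0] at hm
      exact ⟨(he1 m F h0).1, (he1 m F h0).2.1⟩
  · funext G
    ext m
    rw [coeff_bd]
    split_ifs with h
    · by_cases hd : m.degree = d
      · rw [← he2 m G h]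
        refine bdry_congr fun F hF => ?_
        rw [hE, if_pos ((hmem F m).mpr ⟨hd, h.trans hF⟩)]
      · have h1 : coeff m (c G) = 0 := by
          by_contra h0
          exact hd (support_subset_of_coeff (hc G).1 h0).2
        rw [h1, bdry]
        refine Finset.sum_eq_zero fun F _ => ?_
        rw [hE, if_neg (fun h => hd ((hmem F m).mp h).1), mul_zero]
    · by_contra h0
      exact h (support_subset_of_coeff (hc G).1 (Ne.symm h0)).1

/-! ### Nonnegativity of the `h`-vector -/

/-- The cycles of the complex of polynomial rings. -/
noncomputable def ZZ (K : Finset (Finset β)) (j d : ℕ) :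
    Submodule ℚ (Finset β → MvPolynomial β ℚ) :=
  MM K j d ⊓ LinearMap.ker (bd K)

instance finite_ZZ (K : Finset (Finset β)) (j d : ℕ) : Module.Finite ℚ (ZZ K j d) :=
  Submodule.finiteDimensional_of_le (inf_le_left : ZZ K j d ≤ MM K j d)

lemma ZZ_zero (K : Finset (Finset β)) : ZZ K 0 = MM K 0 := by
  funext d
  refine le_antisymm inf_le_left fun c hc => Submodule.mem_inf.mpr ⟨hc, ?_⟩
  rw [LinearMap.mem_ker]
  funext G
  rw [bd_apply]
  refine Finset.sum_eq_zero fun F hF => ?_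
  have hcF : c F = 0 := by
    by_contra h0
    have h1 := ((mem_MM.mp hc F).2 h0).2
    have h2 := (Finset.mem_filter.mp hF).2.2
    omega
  simp [hcF]

/-- Exactness, as an identity between boundaries and cycles. -/
lemma map_bd_MM {L : Finset (Finset β)} {r : ℕ} (hL : IsComplex L) (hCM : IsCM L)
    (hp : IsPure L r) (hle : ∀ F ∈ L, F.card ≤ r) {j : ℕ} (hj : j < r) :
    (fun d => (MM L (j + 1) d).map (bd L)) = ZZ L j := by
  funext d
  apply le_antisymm
  · rintro _ ⟨c, hc, rfl⟩
    exact Submodule.mem_inf.mpr ⟨bd_mem hL hc, LinearMap.mem_ker.mpr (bd_bd hL c)⟩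
  · intro c hc
    obtain ⟨h1, h2⟩ := Submodule.mem_inf.mp hc
    obtain ⟨e, he, rfl⟩ := exists_bd_eq hL hCM hp hle hj h1 (LinearMap.mem_ker.mp h2)
    exact ⟨e, he, rfl⟩

lemma stable_ZZ (a : β → ℚ) (K : Finset (Finset β)) (j : ℕ) : Stable (xM a) (ZZ K j) := by
  intro i d c hc
  obtain ⟨h1, h2⟩ := Submodule.mem_inf.mp hc
  refine Submodule.mem_inf.mpr ⟨stable_xM a K j i d c h1, ?_⟩
  rw [LinearMap.mem_ker] at h2 ⊢
  rw [bd_xM, h2, map_zero]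

/-- Depth counting along the exact complex: the cycles in position `j` are the kernel of a map onto
the cycles in position `j - 1`, so each step up the complex gains one regular element. -/
lemma reg_ZZ {L : Finset (Finset β)} {r : ℕ} (hL : IsComplex L) (hCM : IsCM L)
    (hp : IsPure L r) (hle : ∀ F ∈ L, F.card ≤ r) (a : β → ℚ)
    (ha : ∀ F ∈ L, Set.InjOn a F) {j : ℕ} (hj : j ≤ r) : Reg (xM a) (ZZ L j) j := by
  induction j with
  | zero => intro i hi; omega
  | succ j ih =>
    refine Reg.ker (stable_xM a L (j + 1)) (xM_comm a) (bd L) (bd_xM L a)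
      (reg_xM a L ha (j + 1)) ?_
    rw [map_bd_MM hL hCM hp hle (by omega)]
    exact ih (by omega)

/-- The Hilbert series of the cycles is an alternating sum, by exactness, of the series
`f_l / (1 - X) ^ l`. -/
lemma hilb_ZZ {L : Finset (Finset β)} {r : ℕ} (hL : IsComplex L) (hCM : IsCM L)
    (hp : IsPure L r) (hle : ∀ F ∈ L, F.card ≤ r) {j : ℕ} (hj : j ≤ r) :
    (1 - PowerSeries.X) ^ j * hilb (ZZ L j) = ∑ l ∈ Finset.range (j + 1),
      PowerSeries.C (fvec L l : ℤ) * (PowerSeries.X - 1) ^ (j - l) := by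
  induction j with
  | zero => rw [ZZ_zero, hilb_MM]; simp
  | succ j ih =>
    have h : hilb (ZZ L (j + 1)) = hilb (MM L (j + 1)) - hilb (ZZ L j) := by
      ext d
      rw [map_sub]
      simp only [hilb, PowerSeries.coeff_mk]
      have h1 := finrank_map_add (bd L) (MM L (j + 1) d)
      have h2 : (MM L (j + 1) d).map (bd L) = ZZ L j d :=
        congrFun (map_bd_MM hL hCM hp hle (j := j) (by omega)) d
      rw [h2] at h1
      rw [← h1]
      push_cast
      rw [ZZ]
      ring
    rw [h, mul_sub, hilb_MM, pow_succ', mul_assoc, ih (by omega), Finset.sum_range_succ _ (j + 1),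
      Finset.mul_sum]
    have h3 : ∀ l ∈ Finset.range (j + 1), PowerSeries.C (fvec L l : ℤ) *
        (PowerSeries.X - 1) ^ (j + 1 - l) = - ((1 - PowerSeries.X) *
          (PowerSeries.C (fvec L l : ℤ) * (PowerSeries.X - 1) ^ (j - l))) := by
      intro l hl
      have : j + 1 - l = (j - l) + 1 := by
        have := Finset.mem_range.mp hl
        omega
      rw [this, pow_succ]
      ring
    rw [Finset.sum_congr rfl h3, Finset.sum_neg_distrib]
    simp
    ring

lemma coeff_X_sub_one_pow (n d : ℕ) : PowerSeries.coeff d ((PowerSeries.X - 1 : PowerSeries ℤ) ^ n) =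
    (-1) ^ (n - d) * (n.choose d : ℤ) := by
  have h : (PowerSeries.X - 1 : PowerSeries ℤ) ^ n =
      ((Polynomial.X + Polynomial.C (-1) : Polynomial ℤ) ^ n : Polynomial ℤ) := by
    push_cast
    simp [sub_eq_add_neg]
  rw [h, Polynomial.coeff_coe, Polynomial.coeff_X_add_C_pow]

/-- The `h`-numbers of a Cohen–Macaulay complex are nonnegative: `h_i` is the dimension of the
degree `r - i` part of the top cycles modulo the `r` linear forms. -/
lemma hvec_nonneg {L : Finset (Finset β)} {r : ℕ} (hL : IsComplex L) (hCM : IsCM L)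
    (hp : IsPure L r) (hle : ∀ F ∈ L, F.card ≤ r) {i : ℕ} (hi : i ≤ r) : 0 ≤ hvec L r i := by
  obtain ⟨f, hf⟩ := Set.countable_iff_exists_injOn.mp (L.sup id).countable_toSet
  have ha : ∀ F ∈ L, Set.InjOn (fun v => (f v : ℚ)) F := by
    intro F hF v hv w hw h
    have hsub : F ⊆ L.sup id := Finset.le_sup (f := id) hF
    exact hf (hsub hv) (hsub hw) (Nat.cast_injective h)
  have h1 := gser_nonneg (stable_ZZ (fun v => (f v : ℚ)) L r) r (r - i)
  rw [gser_eq (stable_ZZ _ L r) (xM_comm _) (reg_ZZ hL hCM hp hle _ ha le_rfl),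
    hilb_ZZ hL hCM hp hle le_rfl, map_sum] at h1
  refine h1.trans_eq ?_
  rw [hvec, ← Finset.sum_subset (Finset.range_mono (show i + 1 ≤ r + 1 by omega))]
  · refine Finset.sum_congr rfl fun l hl => ?_
    have hl := Finset.mem_range.mp hl
    rw [PowerSeries.coeff_C_mul, coeff_X_sub_one_pow, show r - l - (r - i) = i - l by omega]
    ring
  · intro l hl hl'
    rw [Finset.mem_range] at hl hl'
    rw [PowerSeries.coeff_C_mul, coeff_X_sub_one_pow, Nat.choose_eq_zero_of_lt (by omega)]
    simp

end FaceComplex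

/-! ### Purity of Cohen–Macaulay complexes -/

section Purity

variable {β : Type*} [LinearOrder β]

lemma isComplex_linkF {L : Finset (Finset β)} (hL : IsComplex L) {S : Finset β} (hS : S ∈ L) :
    IsComplex (linkF L S) := by
  refine ⟨mem_linkF.mpr ⟨Finset.disjoint_empty_left _, by simpa using hS⟩, fun F hF G hGF => ?_⟩
  obtain ⟨h1, h2⟩ := mem_linkF.mp hF
  exact mem_linkF.mpr ⟨Finset.disjoint_of_subset_left hGF h1,
    hL.2 _ h2 _ (Finset.union_subset_union_left hGF)⟩

/-- Faces contained in an `r`-element face stay so when a vertex is added. Otherwise the vertices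
of the link of `F` split into those joined to `F` by an `r`-element face and the others, and, by
induction, no edge of the link connects the two classes, so the link is disconnected. -/
lemma exists_facet_insert {L : Finset (Finset β)} {r : ℕ} (hL : IsComplex L) (hCM : IsCM L)
    (hle : ∀ F ∈ L, F.card ≤ r) (t : ℕ) : ∀ (F : Finset β) (w : β), r - F.card = t → w ∉ F →
      insert w F ∈ L → (∃ B ∈ L, F ⊆ B ∧ B.card = r) →
      ∃ B ∈ L, insert w F ⊆ B ∧ B.card = r := by
  induction t with
  | zero =>
    intro F w ht hw hwF _
    have := hle _ hwF
    rw [Finset.card_insert_of_notMem hw] at this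
    omega
  | succ t ih =>
    intro F w ht hw hwF hB
    by_contra hbad
    obtain ⟨B, hB, hFB, hBc⟩ := hB
    have hF : F ∈ L := hL.2 _ hB _ hFB
    have hN := isComplex_linkF hL hF
    have hcard : F.card + 2 ≤ r := by
      by_contra h
      exact hbad ⟨_, hwF, subset_rfl, by rw [Finset.card_insert_of_notMem hw]; omega⟩
    have hBF : B \ F ∈ linkF L F :=
      mem_linkF.mpr ⟨Finset.sdiff_disjoint, by rwa [Finset.sdiff_union_of_subset hFB]⟩
    have hBFc : (B \ F).card = r - F.card := by rw [Finset.card_sdiff_of_subset hFB, hBc]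
    have h1 : 1 < (linkF L F).sup Finset.card :=
      lt_of_lt_of_le (by omega) (Finset.le_sup (f := Finset.card) hBF)
    obtain ⟨u, hu⟩ : (B \ F).Nonempty := Finset.card_pos.mp (by omega)
    have hu' := Finset.mem_sdiff.mp hu
    have huN : {u} ∈ linkF L F := hN.2 _ hBF _ (Finset.singleton_subset_iff.mpr hu)
    have hwN : {w} ∈ linkF L F := mem_linkF.mpr ⟨by simpa using hw, hwF⟩
    set U : β → Prop := fun v => ∃ B ∈ L, insert v F ⊆ B ∧ B.card = r with hU
    have hUu : U u := ⟨B, hB, Finset.insert_subset hu'.1 hFB, hBc⟩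
    have hUw : ¬ U w := hbad
    have huw : u ≠ w := by
      rintro rfl
      exact hUw hUu
    -- by the inductive hypothesis for `insert a F`, no edge joins the two classes of vertices
    have hedge : ∀ a b, a ≠ b → {a, b} ∈ linkF L F → U a → U b := by
      intro a b hab hE hUa
      obtain ⟨h2, h3⟩ := mem_linkF.mp hE
      have haF : a ∉ F := Finset.disjoint_left.mp h2 (by simp)
      have hbF : b ∉ F := Finset.disjoint_left.mp h2 (by simp)
      obtain ⟨B', hB', hs, hc⟩ := ih (insert a F) b
        (by rw [Finset.card_insert_of_notMem haF]; omega) (by simp [hab.symm, hbF])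
        (by
          have : insert b (insert a F) = {a, b} ∪ F := by
            ext x; simp only [Finset.mem_insert, Finset.mem_union, Finset.mem_singleton]; tauto
          rwa [this]) hUa
      exact ⟨B', hB', (Finset.insert_subset_insert b (Finset.subset_insert a F)).trans hs, hc⟩
    obtain ⟨d, hd1, hd2⟩ := hCM F hF 1 h1
      (fun G => if G = {u} then 1 else if G = {w} then -1 else 0)
      (by
        intro G hG
        by_cases h2 : G = {u}
        · subst h2; exact ⟨huN, by simp⟩
        · by_cases h3 : G = {w}
          · subst h3; exact ⟨hwN, by simp⟩
          · simp [h2, h3] at hG)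
      (by
        intro G
        by_cases hG : G = ∅
        · subst hG
          have hne : ({u} : Finset β) ≠ {w} := by simpa using huw
          rw [bdry, ← Finset.sum_subset (s₁ := {{u}, {w}}), Finset.sum_pair hne]
          · have e1 := sgn_insert (v := u) (Finset.notMem_empty u)
            have e2 := sgn_insert (v := w) (Finset.notMem_empty w)
            simp only [insert_empty_eq, Finset.filter_empty, Finset.card_empty, pow_zero] at e1 e2
            simp [e1, e2, huw.symm]
          · intro G hG
            simp only [Finset.mem_insert, Finset.mem_singleton] at hG
            rcases hG with rfl | rfl
            · simp [huN]
            · simp [hwN]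
          · intro G _ hG
            simp only [Finset.mem_insert, Finset.mem_singleton, not_or] at hG
            simp [hG.1, hG.2]
        · refine Finset.sum_eq_zero fun E hE => ?_
          have h2 := (Finset.mem_filter.mp hE).2.2
          have h3 : 0 < G.card := Finset.card_pos.mpr (Finset.nonempty_iff_ne_empty.mpr hG)
          have h4 : E ≠ {u} := by rintro rfl; rw [Finset.card_singleton] at h2; omega
          have h5 : E ≠ {w} := by rintro rfl; rw [Finset.card_singleton] at h2; omega
          simp [h4, h5])
    -- restricting `d` to the edges in the class of `u` gives a chain with boundary `{u}`, which
    -- is not a cycle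
    classical
    let d' : Finset β → ℚ := fun E => if ∃ x ∈ E, U x then d E else 0
    have hd' : ∀ v, bdry (linkF L F) d' {v} = if v = u then 1 else 0 := by
      intro v
      by_cases hv : U v
      · have : bdry (linkF L F) d' {v} = bdry (linkF L F) d {v} :=
          bdry_congr fun E hE => if_pos ⟨v, Finset.singleton_subset_iff.mp hE, hv⟩
        have hvw : v ≠ w := by
          rintro rfl
          exact hUw hv
        rw [this, hd2]
        simp [hvw]
      · have hvu : v ≠ u := by
          rintro rfl
          exact hv hUu
        have : bdry (linkF L F) d' {v} = bdry (linkF L F) (fun _ => 0) {v} := by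
          refine bdry_congr fun E hE => ?_
          by_contra hne
          have h2 : (∃ x ∈ E, U x) ∧ d E ≠ 0 := by
            by_cases h : ∃ x ∈ E, U x
            · exact ⟨h, by simpa [d', h] using hne⟩
            · exact absurd (if_neg h) hne
          obtain ⟨⟨x, hx, hUx⟩, h3⟩ := h2
          obtain ⟨hEN, hEc⟩ := hd1 E h3
          have hxv : x ≠ v := by
            rintro rfl
            exact hv hUx
          have hE' : {x, v} ⊆ E :=
            Finset.insert_subset hx hE
          exact hv (hedge x v hxv (hN.2 _ hEN _ hE') hUx)
        rw [this, if_neg hvu]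
        simp [bdry]
    have h0 := bdry_bdry hN d' ∅
    rw [bdry, Finset.sum_eq_single {u}] at h0
    · have e1 := sgn_insert (v := u) (Finset.notMem_empty u)
      simp only [insert_empty_eq, Finset.filter_empty, Finset.card_empty, pow_zero] at e1
      simp [hd', e1] at h0
    · intro E hE hne
      obtain ⟨v, rfl⟩ := Finset.card_eq_one.mp
        (by simpa using (Finset.mem_filter.mp hE).2.2 : E.card = 1)
      have : v ≠ u := by
        rintro rfl
        exact hne rfl
      simp [hd', this]
    · intro h
      exact absurd (Finset.mem_filter.mpr ⟨huN, by simp, by simp⟩) h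

lemma isPure_of_isCM {L : Finset (Finset β)} {r : ℕ} (hL : IsComplex L) (hCM : IsCM L)
    (hr : L.sup Finset.card = r) : IsPure L r := by
  have hle : ∀ F ∈ L, F.card ≤ r := fun F hF => hr ▸ Finset.le_sup (f := Finset.card) hF
  intro F
  induction F using Finset.induction_on with
  | empty =>
    intro _
    obtain ⟨B, hB, h⟩ := Finset.exists_mem_eq_sup L ⟨∅, hL.1⟩ Finset.card
    exact ⟨B, hB, Finset.empty_subset _, by rw [← h, hr]⟩
  | insert w F hw ih =>
    intro hF
    exact exists_facet_insert hL hCM hle _ F w rfl hw hF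
      (ih (hL.2 _ hF _ (Finset.subset_insert _ _)))

end Purity

/-! ### Links and deletions -/

section KCM

variable {β : Type*} [LinearOrder β]

lemma linkF_linkF {L : Finset (Finset β)} {S T : Finset β} (hT : T ∈ linkF L S) :
    linkF (linkF L S) T = linkF L (T ∪ S) := by
  obtain ⟨h, -⟩ := mem_linkF.mp hT
  ext G
  rw [mem_linkF, mem_linkF, mem_linkF, Finset.disjoint_union_left, Finset.disjoint_union_right,
    Finset.union_assoc]
  tauto

lemma isCM_linkF {L : Finset (Finset β)} (hCM : IsCM L) {S : Finset β} : IsCM (linkF L S) := by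
  intro T hT
  rw [linkF_linkF hT]
  exact hCM _ (mem_linkF.mp hT).2

lemma mem_delS {K : Finset (Finset β)} {A F : Finset β} :
    F ∈ delS K A ↔ F ∈ K ∧ Disjoint F A := Finset.mem_filter

lemma isComplex_delS {K : Finset (Finset β)} (hK : IsComplex K) (A : Finset β) :
    IsComplex (delS K A) := by
  refine ⟨mem_delS.mpr ⟨hK.1, Finset.disjoint_empty_left _⟩, fun F hF G hGF => ?_⟩
  obtain ⟨h1, h2⟩ := mem_delS.mp hF
  exact mem_delS.mpr ⟨hK.2 _ h1 _ hGF, Finset.disjoint_of_subset_left hGF h2⟩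

lemma delS_empty (K : Finset (Finset β)) : delS K ∅ = K := by
  ext F; simp [mem_delS]

lemma delS_delS (K : Finset (Finset β)) (A B : Finset β) :
    delS (delS K A) B = delS K (A ∪ B) := by
  ext F
  rw [mem_delS, mem_delS, mem_delS, Finset.disjoint_union_right]
  tauto

lemma delS_linkF (K : Finset (Finset β)) (v : β) (A : Finset β) :
    delS (linkF K {v}) A = linkF (delS K (A.erase v)) {v} := by
  ext G
  rw [mem_delS, mem_linkF, mem_linkF, mem_delS, Finset.disjoint_union_left]
  constructor
  · rintro ⟨⟨h1, h2⟩, h3⟩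
    exact ⟨h1, h2, Finset.disjoint_of_subset_right (Finset.erase_subset _ _) h3, by simp⟩
  · rintro ⟨h1, h2, h3, -⟩
    refine ⟨⟨h1, h2⟩, Finset.disjoint_left.mpr fun x hx hxA => ?_⟩
    have hxv : x ≠ v := by
      rintro rfl
      exact Finset.disjoint_left.mp h1 hx (by simp)
    exact Finset.disjoint_left.mp h3 hx (Finset.mem_erase.mpr ⟨hxv, hxA⟩)

/-- `K` is an `(r-1)`-dimensional `k`-Cohen–Macaulay complex. -/
def KCMk (K : Finset (Finset β)) (r k : ℕ) : Prop :=
  IsComplex K ∧ ∀ A : Finset β, A.card < k → IsCM (delS K A) ∧ (delS K A).sup Finset.card = r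

lemma KCMk.isCM {K : Finset (Finset β)} {r k : ℕ} (h : KCMk K r (k + 1)) :
    IsCM K ∧ K.sup Finset.card = r := by
  have := h.2 ∅ (by simp)
  rwa [delS_empty] at this

lemma KCMk.delS {K : Finset (Finset β)} {r k : ℕ} (h : KCMk K r (k + 1)) (v : β) :
    KCMk (delS K {v}) r k := by
  refine ⟨isComplex_delS h.1 _, fun A hA => ?_⟩
  rw [delS_delS]
  refine h.2 _ (lt_of_le_of_lt (Finset.card_union_le _ _) ?_)
  rw [Finset.card_singleton]
  omega

lemma KCMk.linkF {K : Finset (Finset β)} {r k : ℕ} (h : KCMk K r k) {v : β} (hv : {v} ∈ K) :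
    KCMk (linkF K {v}) (r - 1) k := by
  refine ⟨isComplex_linkF h.1 hv, fun A hA => ?_⟩
  rw [delS_linkF]
  obtain ⟨h1, h2⟩ := h.2 (A.erase v) (lt_of_le_of_lt (Finset.card_erase_le) hA)
  have h3 : {v} ∈ _root_.delS K (A.erase v) := mem_delS.mpr ⟨hv, by simp⟩
  refine ⟨isCM_linkF h1, ?_⟩
  rw [sup_card_linkF (isPure_of_isCM (isComplex_delS h.1 _) h1 h2)
    (fun F hF => h2 ▸ Finset.le_sup (f := Finset.card) hF) h3, Finset.card_singleton]

end KCM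

/-! ### Recursions for the `h`-vector -/

section HVector

variable {β : Type*} [LinearOrder β]

lemma fvec_zero {K : Finset (Finset β)} (hK : IsComplex K) : fvec K 0 = 1 := by
  rw [fvec, Finset.card_eq_one]
  refine ⟨∅, ?_⟩
  ext F
  simp only [Finset.mem_filter, Finset.card_eq_zero, Finset.mem_singleton]
  exact ⟨fun h => h.2, fun h => ⟨h ▸ hK.1, h⟩⟩

lemma hvec_zero {K : Finset (Finset β)} (hK : IsComplex K) (r : ℕ) : hvec K r 0 = 1 := by
  simp [hvec, fvec_zero hK]

lemma fvec_succ (K : Finset (Finset β)) (v : β) (j : ℕ) :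
    fvec K (j + 1) = fvec (delS K {v}) (j + 1) + fvec (linkF K {v}) j := by
  rw [fvec, ← Finset.card_filter_add_card_filter_not (fun F => v ∉ F)]
  congr 1
  · rw [fvec, delS, Finset.filter_filter, Finset.filter_filter]
    congr 1
    ext F
    simp only [Finset.mem_filter, Finset.disjoint_singleton_right]
    tauto
  · refine Finset.card_bij' (fun F _ => F.erase v) (fun F _ => insert v F) ?_ ?_ ?_ ?_
    · intro F hF
      simp only [Finset.mem_filter, not_not] at hF
      obtain ⟨⟨h1, h2⟩, h3⟩ := hF
      refine Finset.mem_filter.mpr ⟨mem_linkF.mpr ⟨by simp, ?_⟩, ?_⟩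
      · rwa [Finset.union_comm, ← Finset.insert_eq, Finset.insert_erase h3]
      · rw [Finset.card_erase_of_mem h3, h2]; rfl
    · intro F hF
      obtain ⟨h1, h2⟩ := Finset.mem_filter.mp hF
      obtain ⟨h3, h4⟩ := mem_linkF.mp h1
      rw [Finset.disjoint_singleton_right] at h3
      rw [Finset.union_comm, ← Finset.insert_eq] at h4
      simp [h4, Finset.card_insert_of_notMem h3, h2]
    · intro F hF
      simp only [Finset.mem_filter, not_not] at hF
      exact Finset.insert_erase hF.2
    · intro F hF
      obtain ⟨h1, h2⟩ := Finset.mem_filter.mp hF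
      obtain ⟨h3, h4⟩ := mem_linkF.mp h1
      rw [Finset.disjoint_singleton_right] at h3
      exact Finset.erase_insert h3

lemma hvec_succ {K : Finset (Finset β)} (hK : IsComplex K) (v : β) (r i : ℕ) :
    hvec K (r + 1) (i + 1) = hvec (delS K {v}) (r + 1) (i + 1) + hvec (linkF K {v}) r i := by
  rw [hvec, hvec, Finset.sum_range_succ' _ (i + 1), Finset.sum_range_succ' _ (i + 1), hvec, fvec_zero hK,
    fvec_zero (isComplex_delS hK _), add_right_comm, ← Finset.sum_add_distrib]
  congr 1
  refine Finset.sum_congr rfl fun j _ => ?_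
  rw [fvec_succ K v j, Nat.add_sub_add_right, Nat.add_sub_add_right, Nat.add_sub_add_right]
  push_cast
  ring

/-- The `h`-numbers of a `(q+1)`-Cohen–Macaulay complex dominate those of the uniform matroid
complex of rank `r` on `r + q` elements. -/
lemma choose_le_hvec (q : ℕ) : ∀ (i r : ℕ) (K : Finset (Finset β)), KCMk K r (q + 1) → i ≤ r →
    ((i + q - 1).choose i : ℤ) ≤ hvec K r i := by
  induction q with
  | zero =>
    intro i r K h hi
    obtain ⟨h1, h2⟩ := h.isCM
    rcases i with _ | i
    · simp [hvec_zero h.1]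
    · have := hvec_nonneg h.1 h1 (isPure_of_isCM h.1 h1 h2)
        (fun F hF => h2 ▸ Finset.le_sup (f := Finset.card) hF) hi
      simpa using this
  | succ q ihq =>
    intro i
    induction i with
    | zero =>
      intro r K h _
      simp [hvec_zero h.1]
    | succ i ihi =>
      intro r K h hi
      obtain ⟨r, rfl⟩ : ∃ r', r = r' + 1 := ⟨r - 1, by omega⟩
      obtain ⟨B, hB, hBc⟩ := Finset.exists_mem_eq_sup K ⟨∅, h.1.1⟩ Finset.card
      rw [h.isCM.2] at hBc
      obtain ⟨v, hv⟩ : B.Nonempty := Finset.card_pos.mp (by omega)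
      have hvK : {v} ∈ K := h.1.2 _ hB _ (Finset.singleton_subset_iff.mpr hv)
      have e1 := ihq (i + 1) (r + 1) _ (h.delS v) hi
      have e2 := ihi r _ (h.linkF hvK) (by omega)
      rw [hvec_succ h.1 v]
      have e3 : i + 1 + (q + 1) - 1 = (i + q) + 1 := by omega
      have e4 : i + 1 + q - 1 = i + q := by omega
      have e5 : i + (q + 1) - 1 = i + q := by omega
      rw [e4] at e1
      rw [e5] at e2
      rw [e3, Nat.choose_succ_succ]
      push_cast
      linarith

lemma sum_fvec_delS (K : Finset (Finset β)) (j : ℕ) :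
    ∑ v ∈ verts K, (fvec (delS K {v}) j : ℤ) = ((verts K).card - j) * fvec K j := by
  have h : ∀ v, (fvec (delS K {v}) j : ℤ) =
      ∑ F ∈ K.filter (fun F => F.card = j), if v ∉ F then 1 else 0 := by
    intro v
    rw [Finset.sum_boole, fvec, delS, Finset.filter_filter, Finset.filter_filter]
    congr 3
    ext F
    simp only [Finset.disjoint_singleton_right]
    tauto
  simp only [h]
  rw [Finset.sum_comm, fvec, mul_comm, ← nsmul_eq_mul, ← Finset.sum_const]
  refine Finset.sum_congr rfl fun F hF => ?_
  obtain ⟨hF, hj⟩ := Finset.mem_filter.mp hF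
  have hs : F ⊆ verts K := Finset.le_sup (f := id) hF
  rw [Finset.sum_boole, Finset.filter_notMem_eq_sdiff, Finset.card_sdiff_of_subset hs, hj,
    Nat.cast_sub (hj ▸ Finset.card_le_card hs)]

/-- Averaging over vertex deletions. -/
lemma sum_hvec_delS (K : Finset (Finset β)) {r i : ℕ} (hi : i ≤ r) :
    ∑ v ∈ verts K, hvec (delS K {v}) r i = ((verts K).card - i) * hvec K r i -
      (r - i + 1) * (if i = 0 then 0 else hvec K r (i - 1)) := by
  have h1 : ∑ v ∈ verts K, hvec (delS K {v}) r i = ∑ j ∈ Finset.range (i + 1),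
      (-1 : ℤ) ^ (i - j) * ((r - j).choose (r - i) : ℤ) *
        (((verts K).card - j) * fvec K j) := by
    simp only [hvec]
    rw [Finset.sum_comm]
    refine Finset.sum_congr rfl fun j _ => ?_
    rw [← Finset.mul_sum, sum_fvec_delS]
  rw [h1]
  rcases i with _ | i
  · simp [hvec]
  · have h2 : ∀ j ∈ Finset.range (i + 1),
        (-1 : ℤ) ^ (i + 1 - j) * ((r - j).choose (r - (i + 1)) : ℤ) *
          (((verts K).card - j) * fvec K j) =
        ((verts K).card - ((i + 1 : ℕ) : ℤ)) * ((-1 : ℤ) ^ (i + 1 - j) *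
          ((r - j).choose (r - (i + 1)) : ℤ) * fvec K j) -
        ((r : ℤ) - (i + 1 : ℕ) + 1) * ((-1 : ℤ) ^ (i - j) *
          ((r - j).choose (r - i) : ℤ) * fvec K j) := by
      intro j hj
      have hj' : j ≤ i := Nat.lt_succ_iff.mp (Finset.mem_range.mp hj)
      have h3 := Nat.choose_succ_right_eq (r - j) (r - (i + 1))
      have e1 : r - (i + 1) + 1 = r - i := by omega
      have e2 : r - j - (r - (i + 1)) = i + 1 - j := by omega
      rw [e1, e2] at h3
      have h4 : ((r - j).choose (r - i) : ℤ) * ((r : ℤ) - i) =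
          ((r - j).choose (r - (i + 1)) : ℤ) * ((i : ℤ) + 1 - j) := by
        have := congrArg (Nat.cast : ℕ → ℤ) h3
        push_cast [Nat.cast_sub (show i ≤ r by omega), Nat.cast_sub (show j ≤ i + 1 by omega)]
          at this
        exact this
      rw [Nat.succ_sub hj', pow_succ]
      push_cast
      linear_combination (-1 : ℤ) ^ (i - j) * (fvec K j : ℤ) * h4
    rw [Finset.sum_range_succ, Finset.sum_congr rfl h2, Finset.sum_sub_distrib, ← Finset.mul_sum,
      ← Finset.mul_sum, if_neg (Nat.succ_ne_zero i), hvec, hvec, Finset.sum_range_succ _ (i + 1),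
      Nat.add_sub_cancel]
    ring

/-- The averaged inequality, from the lower bounds for the `(q+1)`-Cohen–Macaulay deletions. -/
lemma averaged_bound (K : Finset (Finset β)) {r q : ℕ} (h : KCMk K r (q + 2)) {i : ℕ}
    (hi : i ≤ r) :
    ((r : ℤ) - i + 1) * (if i = 0 then 0 else hvec K r (i - 1)) +
        ((verts K).card : ℤ) * ((i + q - 1).choose i : ℤ) ≤
      (((verts K).card : ℤ) - i) * hvec K r i := by
  have h1 : ((verts K).card : ℤ) * ((i + q - 1).choose i : ℤ) ≤
      ∑ v ∈ verts K, hvec (delS K {v}) r i := by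
    rw [← nsmul_eq_mul, ← Finset.sum_const]
    exact Finset.sum_le_sum fun v _ => choose_le_hvec q i r _ (h.delS v) hi
  rw [sum_hvec_delS K hi] at h1
  linarith

end HVector

end KCM

/-- if `K` is an `(r-1)`-dimensional `k`-CM complex with `n` vertices,
then `(n-i)·h_i(K) ≥ (r-i+1)·h_{i-1}(K) + n·C(i+k-3, i)` (with `h_{-1} = 0`). -/
theorem stmt10 [LinearOrder α] (K : Finset (Finset α)) (r k n : ℕ) (hk : 2 ≤ k)
    (hK : IsComplex K) (hp : IsPure K r) (hn : (verts K).card = n)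
    (hkcm : ∀ A : Finset α, A.card < k →
      IsCM (delS K A) ∧ (delS K A).sup Finset.card = r) :
    ∀ i ≤ r,
      ((r : ℤ) - i + 1) * (if i = 0 then 0 else hvec K r (i - 1)) +
          (n : ℤ) * ((i + k - 3).choose i : ℤ) ≤
        ((n : ℤ) - i) * hvec K r i := by
  intro i hi
  -- the two decidability instances of `α` agree
  obtain rfl : ‹DecidableEq α› = LinearOrder.toDecidableEq := Subsingleton.elim _ _
  obtain ⟨q, rfl⟩ : ∃ q, k = q + 2 := ⟨k - 2, by omega⟩
  subst hn
  have e : i + (q + 2) - 3 = i + q - 1 := by omega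
  rw [e]
  exact KCM.averaged_bound K ⟨hK, hkcm⟩ hi
end

section
/- If M is a connected matroid with more than one series class, then M has at least three regular series classes, where a series class S is regular if M - S is connected. -/
/-!
Connectedness is used in its circuit form: `M` restricted to `X` is connected when every partition
of `X` into two nonempty parts is crossed by a circuit inside `X` (`mr_add_ne_iff`). In this
form, elements `e` and `f` are in series when every circuit through `f` passes through `e`
(`mem_dual_closure_singleton_iff`).

The argument is direct rather than inductive. If `X` is a maximal proper subset of the ground set
with `M` restricted to `X` connected, then the complement of `X` is a series class, which is
therefore regular. So every proper connected subset `Y` is disjoint from some regular series class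
(`exists_regular`). Taking `Y` to be a singleton gives a regular class `S₁`; taking `Y = {e₁}` with
`e₁ ∈ S₁` gives a second class `S₂ ∋ e₂`; and taking `Y` to be a circuit through `e₁` and `e₂`, which
exists by connectedness (`CircConn.exists_circuit`), gives a third. Such a circuit is a proper subset
of the ground set, because otherwise all elements would be in series.
-/


open Polynomial

variable {α : Type*}

/-- The rank of a set `A` in a matroid `M`: the largest cardinality of an independent
subset of `A`. -/
noncomputable def mr (M : Matroid α) (A : Set α) : ℕ :=
  sSup {n | ∃ I, M.Indep I ∧ I ⊆ A ∧ I.ncard = n}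

/-- `mf M j` is the number of independent sets of `M` of cardinality `j`, i.e. the
number of faces of cardinality `j` of the independence complex of `M`. -/
noncomputable def mf (M : Matroid α) (j : ℕ) : ℕ :=
  {I : Set α | M.Indep I ∧ I.ncard = j}.ncard

/-- The `h`-vector of the independence complex of a rank-`r` matroid `M`:
`h_i = ∑_{j=0}^i (-1)^{i-j} C(r-j, r-i) f_j`. -/
noncomputable def mh (M : Matroid α) (r i : ℕ) : ℤ :=
  ∑ j ∈ Finset.range (i + 1), (-1 : ℤ) ^ (i - j) * ((r - j).choose (r - i) : ℤ) * (mf M j : ℤ)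

/-- Binomial coefficient `C(a,b)` for integers, with the convention that it is `0`
whenever `b < 0` or `b > a`. -/
def ch (a b : ℤ) : ℤ := if 0 ≤ b ∧ b ≤ a then (a.toNat.choose b.toNat : ℤ) else 0

/-- `e` is a loop of `M`. -/
def mLoop (M : Matroid α) (e : α) : Prop := e ∈ M.closure ∅

/-- `e` is a coloop of `M`, i.e. a loop of the dual matroid. -/
def mColoop (M : Matroid α) (e : α) : Prop := e ∈ M✶.closure ∅

/-- `M` is connected: it is not the direct sum of two smaller matroids; equivalently,
`r(A) + r(E \ A) ≠ r(E)` for every proper nonempty subset `A` of the ground set. -/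
def mConnected (M : Matroid α) : Prop :=
  M.E.Nonempty ∧ ∀ A ⊆ M.E, A.Nonempty → (M.E \ A).Nonempty →
    mr M A + mr M (M.E \ A) ≠ mr M M.E

/-- The deletion `M - D`. -/
noncomputable def mdel (M : Matroid α) (D : Set α) : Matroid α := M.restrict (M.E \ D)

/-- The contraction `M / C`, defined as the dual of the deletion of `C` in the dual. -/
noncomputable def mcon (M : Matroid α) (C : Set α) : Matroid α := (mdel M✶ C)✶

/-- `P` is a parallel class of `M`: the set of all non-loop elements parallel to some
fixed non-loop element `e`. -/
def mParClass (M : Matroid α) (P : Set α) : Prop :=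
  ∃ e ∈ M.E, ¬ mLoop M e ∧ P = {f | f ∈ M.E ∧ ¬ mLoop M f ∧ f ∈ M.closure {e}}

/-- `S` is a series class of `M`: a parallel class of the dual matroid. -/
def mSerClass (M : Matroid α) (S : Set α) : Prop := mParClass M✶ S

/-- `T(M; x, 0)`: the Tutte polynomial of `M` (with ground set the whole fintype)
evaluated at `y = 0`, so that `T(M;x,0) = ∑_i b_i(M) x^i`. -/
noncomputable def bpoly [Fintype α] [DecidableEq α] (M : Matroid α) : Polynomial ℤ :=
  ∑ A : Finset α,
    (X - 1) ^ (mr M Set.univ - mr M (A : Set α)) *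
      C ((-1 : ℤ) ^ (A.card - mr M (A : Set α)))

/-- Two elements of the ground set lie in the same connected component iff no
separator (a set `A` with `r(A) + r(E \ A) = r(E)`) splits them. -/
def crel (M : Matroid α) (e f : α) : Prop :=
  e ∈ M.E ∧ f ∈ M.E ∧
    ∀ A ⊆ M.E, mr M A + mr M (M.E \ A) = mr M M.E → (e ∈ A ↔ f ∈ A)

/-- The number of connected components of `M`. -/
noncomputable def numComponents (M : Matroid α) : ℕ :=
  {S : Set α | ∃ e ∈ M.E, S = {f | crel M e f}}.ncard

/-! ### Connectedness and series elements via circuits -/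

/-- The circuit form of connectedness of `M` restricted to `X`: every partition of `X` into two
nonempty parts is crossed by a circuit contained in `X`. -/
def CircConn (M : Matroid α) (X : Set α) : Prop :=
  X.Nonempty ∧ ∀ A ⊆ X, A.Nonempty → (X \ A).Nonempty →
    ∃ C ⊆ X, M.IsCircuit C ∧ (C ∩ A).Nonempty ∧ (C \ A).Nonempty

/-- The elements of `M` in series with `e`, described by circuits: those `f` such that every
circuit through `f` passes through `e`. This is the series class of `e` when every element of `M` lies
on a circuit (`mSerClass_iff`). -/
def serSet (M : Matroid α) (e : α) : Set α :=
  {f | f ∈ M.E ∧ ∀ C, M.IsCircuit C → f ∈ C → e ∈ C}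

/-! ### Rank and connectedness -/

lemma mr_eq_eRk (M : Matroid α) (hfin : M.E.Finite) (A : Set α) : (mr M A : ℕ∞) = M.eRk A := by
  obtain ⟨I, hI⟩ := M.exists_isBasis' A
  have hIf : I.Finite := hfin.subset hI.indep.subset_ground
  rw [hI.eRk_eq_encard, ← hIf.cast_ncard_eq, Nat.cast_inj]
  have hle : ∀ n ∈ {n | ∃ I, M.Indep I ∧ I ⊆ A ∧ I.ncard = n}, n ≤ I.ncard := by
    rintro n ⟨J, hJ, hJA, rfl⟩
    have := hJ.encard_le_eRk_of_subset hJA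
    rw [hI.eRk_eq_encard, ← hIf.cast_ncard_eq,
      ← (hfin.subset hJ.subset_ground).cast_ncard_eq, Nat.cast_le] at this
    exact this
  exact le_antisymm (csSup_le ⟨_, I, hI.indep, hI.subset, rfl⟩ hle)
    (le_csSup ⟨_, hle⟩ ⟨I, hI.indep, hI.subset, rfl⟩)

lemma mr_restrict (M : Matroid α) {X A : Set α} (hA : A ⊆ X) : mr (M.restrict X) A = mr M A := by
  unfold mr
  congr 1
  ext n
  simp only [Set.mem_ofPred_eq, Matroid.restrict_indep_iff]
  exact ⟨fun ⟨I, h, h2, h3⟩ ↦ ⟨I, h.1, h2, h3⟩, fun ⟨I, h, h2, h3⟩ ↦ ⟨I, ⟨h, h2.trans hA⟩, h2, h3⟩⟩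

/-- Rank is additive over a partition `A`, `X \ A` exactly when no circuit crosses it; this is the
bridge between the rank definition of connectedness and the one by circuits. -/
lemma mr_add_ne_iff (M : Matroid α) (hfin : M.E.Finite) {X A : Set α} (hX : X ⊆ M.E) (hA : A ⊆ X) :
    mr M A + mr M (X \ A) ≠ mr M X ↔
      ∃ C ⊆ X, M.IsCircuit C ∧ (C ∩ A).Nonempty ∧ (C \ A).Nonempty := by
  have key : mr M A + mr M (X \ A) ≠ mr M X ↔ M.eRk A + M.eRk (X \ A) ≠ M.eRk X := by
    rw [← mr_eq_eRk M hfin, ← mr_eq_eRk M hfin, ← mr_eq_eRk M hfin]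
    norm_cast
  have hspan : ∀ I J, M.IsBasis I A → M.IsBasis J (X \ A) → X ⊆ M.closure (I ∪ J) := by
    intro I J hI hJ x hx
    by_cases hxA : x ∈ A
    · exact M.closure_subset_closure Set.subset_union_left (hI.subset_closure hxA)
    · exact M.closure_subset_closure Set.subset_union_right (hJ.subset_closure ⟨hx, hxA⟩)
  have hdisj : ∀ I J, M.IsBasis I A → M.IsBasis J (X \ A) → Disjoint I J := fun I J hI hJ ↦
    Set.disjoint_sdiff_right.mono hI.subset hJ.subset
  have hsub : ∀ I J, M.IsBasis I A → M.IsBasis J (X \ A) → I ∪ J ⊆ X := fun I J hI hJ ↦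
    Set.union_subset (hI.subset.trans hA) (hJ.subset.trans Set.sdiff_subset)
  rw [key]
  constructor
  · intro h
    obtain ⟨I, hI⟩ := M.exists_isBasis A (hA.trans hX)
    obtain ⟨J, hJ⟩ := M.exists_isBasis (X \ A) (Set.sdiff_subset.trans hX)
    have hdep : M.Dep (I ∪ J) := by
      rw [← Matroid.not_indep_iff ((hsub I J hI hJ).trans hX)]
      intro hind
      apply h
      have hb : M.IsBasis (I ∪ J) X :=
        Matroid.isBasis_iff_indep_subset_closure.2 ⟨hind, hsub I J hI hJ, hspan I J hI hJ⟩
      rw [hI.eRk_eq_encard, hJ.eRk_eq_encard, hb.eRk_eq_encard,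
        Set.encard_union_eq (hdisj I J hI hJ)]
    obtain ⟨C, hC, hCc⟩ := hdep.exists_isCircuit_subset
    refine ⟨C, hC.trans (hsub I J hI hJ), hCc, ?_, ?_⟩
    · by_contra hne
      refine hCc.not_indep (hJ.indep.subset fun x hx ↦ ?_)
      exact (hC hx).resolve_left fun hxI ↦ hne ⟨x, hx, hI.subset hxI⟩
    · by_contra hne
      refine hCc.not_indep (hI.indep.subset fun x hx ↦ ?_)
      exact (hC hx).resolve_right fun hxJ ↦ hne ⟨x, hx, (hJ.subset hxJ).2⟩
  · rintro ⟨C, hCX, hC, ⟨a, haC, haA⟩, ⟨b, hbC, hbA⟩⟩ h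
    -- The two proper subsets `C ∩ A` and `C \ A` of `C` extend to bases of the two parts, whose
    -- union contains `C` and so is a dependent spanning set of `X`.
    have h1 : M.Indep (C ∩ A) :=
      hC.ssubset_indep ⟨Set.inter_subset_left, fun hh ↦ hbA (hh hbC).2⟩
    have h2 : M.Indep (C \ A) :=
      hC.ssubset_indep ⟨Set.sdiff_subset, fun hh ↦ (hh haC).2 haA⟩
    obtain ⟨I, hI, hCI⟩ := h1.subset_isBasis_of_subset Set.inter_subset_right (hA.trans hX)
    obtain ⟨J, hJ, hCJ⟩ := h2.subset_isBasis_of_subset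
      (Set.sdiff_subset_sdiff_left hCX) (Set.sdiff_subset.trans hX)
    have hCIJ : C ⊆ I ∪ J := by
      intro x hx
      by_cases hxA : x ∈ A
      · exact .inl (hCI ⟨hx, hxA⟩)
      · exact .inr (hCJ ⟨hx, hxA⟩)
    have hdep : M.Dep (I ∪ J) := hC.dep.superset hCIJ ((hsub I J hI hJ).trans hX)
    have hlt := Matroid.eRk_lt_encard_of_dep_of_finite (hfin.subset hdep.subset_ground) hdep
    have heq : M.eRk X ≤ M.eRk (I ∪ J) := by
      rw [← M.eRk_closure_eq (I ∪ J)]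
      exact M.eRk_mono (hspan I J hI hJ)
    rw [Set.encard_union_eq (hdisj I J hI hJ), ← hI.eRk_eq_encard, ← hJ.eRk_eq_encard, h] at hlt
    exact absurd hlt (not_lt.2 heq)

lemma mConnected_restrict_iff (M : Matroid α) (hfin : M.E.Finite) {X : Set α} (hX : X ⊆ M.E) :
    mConnected (M.restrict X) ↔ CircConn M X := by
  unfold mConnected CircConn
  rw [Matroid.restrict_ground_eq]
  refine and_congr_right fun _ ↦ forall₂_congr fun A hA ↦ imp_congr_right fun _ ↦
    imp_congr_right fun _ ↦ ?_
  rw [mr_restrict M hA, mr_restrict M Set.sdiff_subset, mr_restrict M subset_rfl,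
    mr_add_ne_iff M hfin hX hA]

lemma circConn_of_isCircuit {M : Matroid α} {C : Set α} (hC : M.IsCircuit C) : CircConn M C :=
  ⟨hC.nonempty, fun A hA hne hne' ↦
    ⟨C, subset_rfl, hC, by rwa [Set.inter_eq_right.2 hA], hne'⟩⟩

lemma CircConn.union {M : Matroid α} {X C : Set α} (hX : CircConn M X) (hC : M.IsCircuit C)
    (hne : (C ∩ X).Nonempty) : CircConn M (X ∪ C) := by
  refine ⟨hX.1.mono Set.subset_union_left, ?_⟩
  intro A hA hAne hAne'
  obtain ⟨z, hzC, hzX⟩ := hne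
  -- If `X` itself is split by `A`, use a circuit inside `X`; otherwise `C` is split.
  by_cases h1 : (X ∩ A).Nonempty
  · by_cases h2 : (X \ A).Nonempty
    · obtain ⟨D, hDX, hD, ⟨a, ha⟩, b, hb⟩ := hX.2 (X ∩ A) Set.inter_subset_left h1 (by simpa)
      exact ⟨D, hDX.trans Set.subset_union_left, hD, ⟨a, ha.1, ha.2.2⟩,
        b, hb.1, fun h ↦ hb.2 ⟨hDX hb.1, h⟩⟩
    · obtain ⟨y, hy, hyA⟩ := hAne'
      refine ⟨C, Set.subset_union_right, hC, ⟨z, hzC, ?_⟩, y, ?_, hyA⟩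
      · by_contra h
        exact h2 ⟨z, hzX, h⟩
      · exact hy.resolve_left fun h ↦ h2 ⟨y, h, hyA⟩
  · obtain ⟨y, hy⟩ := hAne
    exact ⟨C, Set.subset_union_right, hC,
      ⟨y, (hA hy).resolve_left fun h ↦ h1 ⟨y, h, hy⟩, hy⟩, z, hzC, fun h ↦ h1 ⟨z, hzX, h⟩⟩

/-! ### Common circuits -/

/-- Lying on a common circuit is a transitive relation. Among the circuits `C₁` through `a` and
`C₂` through `b` that meet, take a pair with smallest union: strong elimination of a common
element produces a meeting pair with smaller union unless `C₁` or `C₂` already joins `a` to `b`. -/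
lemma exists_circuit_of_inter {M : Matroid α} (hfin : M.E.Finite) {a b : α} :
    ∀ (n : ℕ) (C₁ C₂ : Set α), (C₁ ∪ C₂).ncard = n → M.IsCircuit C₁ → M.IsCircuit C₂ → a ∈ C₁ →
      b ∈ C₂ → (C₁ ∩ C₂).Nonempty → ∃ C, M.IsCircuit C ∧ a ∈ C ∧ b ∈ C := by
  intro n
  induction n using Nat.strong_induction_on with
  | _ n ih =>
    intro C₁ C₂ hn h₁ h₂ ha hb ⟨f, hf₁, hf₂⟩
    by_contra hcon
    have hb1 : b ∉ C₁ := fun h ↦ hcon ⟨C₁, h₁, ha, h⟩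
    have ha2 : a ∉ C₂ := fun h ↦ hcon ⟨C₂, h₂, h, hb⟩
    have hfinU : (C₁ ∪ C₂).Finite :=
      hfin.subset (Set.union_subset h₁.subset_ground h₂.subset_ground)
    have hsmall : ∀ D₁ D₂, M.IsCircuit D₁ → M.IsCircuit D₂ → a ∈ D₁ → b ∈ D₂ →
        (D₁ ∩ D₂).Nonempty → D₁ ∪ D₂ ⊆ C₁ ∪ C₂ → C₁ ∪ C₂ ⊆ D₁ ∪ D₂ := by
      intro D₁ D₂ k₁ k₂ ha' hb' hne hsub
      by_contra hns
      exact hcon (ih _ (hn ▸ Set.ncard_lt_ncard ⟨hsub, hns⟩ hfinU) D₁ D₂ rfl k₁ k₂ ha' hb' hne)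
    obtain ⟨C₃, hC₃, h₃, ha3⟩ := h₁.strong_elimination h₂ hf₁ hf₂ ha ha2
    obtain ⟨C₄, hC₄, h₄, hb4⟩ := h₂.strong_elimination h₁ hf₂ hf₁ hb hb1
    rw [Set.union_comm] at hC₄
    have hmeet : ∃ x ∈ C₃, x ∉ C₁ := by
      by_contra! h
      have := h₃.eq_of_subset_isCircuit h₁ h
      exact (hC₃ (this ▸ hf₁)).2 rfl
    obtain ⟨x, hx3, hx1⟩ := hmeet
    have hx2 : x ∈ C₂ := (hC₃ hx3).1.resolve_left hx1
    have hmeet' : ∃ y ∈ C₄, y ∉ C₂ := by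
      by_contra! h
      have := h₄.eq_of_subset_isCircuit h₂ h
      exact (hC₄ (this ▸ hf₂)).2 rfl
    obtain ⟨y, hy4, hy2⟩ := hmeet'
    have hy1 : y ∈ C₁ := (hC₄ hy4).1.resolve_right hy2
    -- Minimality of `C₁ ∪ C₄` forces `C₂ \ C₁ ⊆ C₄`.
    have hx4 : x ∈ C₄ :=
      (hsmall C₁ C₄ h₁ h₄ ha hb4 ⟨y, hy1, hy4⟩
        (Set.union_subset Set.subset_union_left fun z hz ↦ (hC₄ hz).1)
        (.inr hx2)).resolve_left hx1
    have h_sup := hsmall C₃ C₄ h₃ h₄ ha3 hb4 ⟨x, hx3, hx4⟩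
      (Set.union_subset (fun z hz ↦ (hC₃ hz).1) fun z hz ↦ (hC₄ hz).1) (.inl hf₁)
    exact h_sup.elim (fun h ↦ (hC₃ h).2 rfl) fun h ↦ (hC₄ h).2 rfl

lemma CircConn.exists_circuit {M : Matroid α} (hfin : M.E.Finite) (hM : CircConn M M.E) {a b : α}
    (ha : a ∈ M.E) (hb : b ∈ M.E) (hab : a ≠ b) : ∃ C, M.IsCircuit C ∧ a ∈ C ∧ b ∈ C := by
  by_contra hcon
  -- A circuit crossing the boundary of the class of `a` would bring in a new element.
  obtain ⟨D, -, hD, ⟨x, hxD, hxE, hx⟩, y, hyD, hy⟩ :=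
    hM.2 {x | x ∈ M.E ∧ (x = a ∨ ∃ C, M.IsCircuit C ∧ a ∈ C ∧ x ∈ C)} (fun x hx ↦ hx.1)
      ⟨a, ha, .inl rfl⟩ ⟨b, hb, fun h ↦ h.2.elim (fun h ↦ hab h.symm) hcon⟩
  refine hy ⟨hD.subset_ground hyD, .inr ?_⟩
  obtain rfl | ⟨C, hC, haC, hxC⟩ := hx
  · exact ⟨D, hD, hxD, hyD⟩
  · exact exists_circuit_of_inter hfin _ C D rfl hC hD haC hyD ⟨x, hxC, hxD⟩

/-! ### Series classes -/

lemma mem_dual_closure_singleton_iff {M : Matroid α} {e f : α} (he : e ∈ M.E) (hf : f ∈ M.E) :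
    f ∈ M✶.closure {e} ↔ ∀ C, M.IsCircuit C → f ∈ C → e ∈ C := by
  obtain rfl | hne := eq_or_ne f e
  · exact ⟨fun _ _ _ h ↦ h, fun _ ↦ M✶.mem_closure_of_mem rfl (by simpa)⟩
  constructor
  · intro h C hC hfC
    obtain ⟨D, hDss, hD, hfD⟩ := Matroid.exists_isCircuit_of_mem_closure h (by simpa)
    by_contra heC
    refine hC.inter_isCocircuit_ne_singleton (K := D) hD (e := f) ?_
    ext x
    constructor
    · rintro ⟨hxC, hxD⟩
      rcases hDss hxD with rfl | rfl
      · rfl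
      · exact absurd hxC heC
    · rintro rfl
      exact ⟨hfC, hfD⟩
  · intro h
    have hcol : (M.delete {e}).IsColoop f := by
      rw [Matroid.isColoop_iff_forall_notMem_isCircuit (by simpa using ⟨hf, hne⟩)]
      intro C hC hfC
      rw [Matroid.delete_isCircuit_iff] at hC
      exact hC.2.le_bot ⟨h C hC.1 hfC, rfl⟩
    have := hcol.dual_isLoop
    rw [Matroid.dual_delete, Matroid.contract_isLoop_iff_mem_closure] at this
    exact this.1

lemma mSerClass_iff {M : Matroid α} (hM : ∀ e ∈ M.E, ∃ C, M.IsCircuit C ∧ e ∈ C) (S : Set α) :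
    mSerClass M S ↔ ∃ e ∈ M.E, S = serSet M e := by
  have hnl : ∀ e ∈ M.E, ¬ mLoop M✶ e := by
    intro e he hl
    obtain ⟨C, hC, heC⟩ := hM e he
    exact hC.not_isColoop_of_mem heC hl
  have hs : ∀ e ∈ M.E, {f | f ∈ M✶.E ∧ ¬ mLoop M✶ f ∧ f ∈ M✶.closure {e}} = serSet M e := by
    intro e he
    ext f
    exact ⟨fun h ↦ ⟨h.1, (mem_dual_closure_singleton_iff he h.1).1 h.2.2⟩,
      fun h ↦ ⟨h.1, hnl f h.1, (mem_dual_closure_singleton_iff he h.1).2 h.2⟩⟩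
  constructor
  · rintro ⟨e, he, -, rfl⟩
    exact ⟨e, he, hs e he⟩
  · rintro ⟨e, he, rfl⟩
    exact ⟨e, he, hnl e he, (hs e he).symm⟩

/-! ### Regular series classes -/

/-- The engine of the proof: a maximal connected proper subset `X ⊇ Y` has a regular series class
as its complement. Indeed a circuit that meets both `X` and its complement can be added to `X`, so
by maximality it contains the whole complement; hence the elements outside `X` are in series, and
no element of `X` is in series with them because `X` is connected. -/
lemma exists_regular {M : Matroid α} (hfin : M.E.Finite) (hM : CircConn M M.E)
    (hser : ∀ e ∈ M.E, serSet M e ≠ M.E) {Y : Set α} (hYE : Y ⊆ M.E) (hYne : Y ≠ M.E)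
    (hY : CircConn M Y) :
    ∃ e ∈ M.E, Disjoint Y (serSet M e) ∧ CircConn M (M.E \ serSet M e) := by
  obtain ⟨X, hYX, hXmax⟩ := Set.Finite.exists_le_maximal
    (s := {X | X ⊆ M.E ∧ X ≠ M.E ∧ CircConn M X})
    (hfin.finite_subsets.subset fun X hX ↦ hX.1) ⟨hYE, hYne, hY⟩
  obtain ⟨hXE, hXne, hX⟩ := hXmax.prop
  have hEX : (M.E \ X).Nonempty :=
    Set.sdiff_nonempty.2 fun h ↦ hXne (hXE.antisymm h)
  have hcross : ∀ C, M.IsCircuit C → (C ∩ X).Nonempty → (C \ X).Nonempty → M.E \ X ⊆ C := by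
    intro C hC hCX ⟨c, hcC, hcX⟩ x hx
    by_contra hxC
    refine hcX (hXmax.le_of_ge (y := X ∪ C) ⟨Set.union_subset hXE hC.subset_ground, ?_,
      hX.union hC hCX⟩ Set.subset_union_left (.inr hcC))
    intro h
    exact (h.symm ▸ hx.1 : x ∈ X ∪ C).elim hx.2 hxC
  obtain ⟨C₀, -, hC₀, hC₀X, hC₀X'⟩ := hM.2 X hXE hX.1 hEX
  have hC₀s := hcross C₀ hC₀ hC₀X hC₀X'
  -- A circuit avoiding `X` would be a proper subset of `C₀`.
  have hall : ∀ C, M.IsCircuit C → (C \ X).Nonempty → M.E \ X ⊆ C := by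
    intro C hC hCX
    refine hcross C hC ?_ hCX
    by_contra hne
    have hsub : C ⊆ C₀ := fun x hx ↦ hC₀s ⟨hC.subset_ground hx, fun h ↦ hne ⟨x, hx, h⟩⟩
    exact hne (hC.eq_of_subset_isCircuit hC₀ hsub ▸ hC₀X)
  obtain ⟨e, heE, heX⟩ := hEX
  have hsub : M.E \ X ⊆ serSet M e := fun f hf ↦
    ⟨hf.1, fun C hC hfC ↦ hall C hC ⟨f, hfC, hf.2⟩ ⟨heE, heX⟩⟩
  have hdisj : ∀ f ∈ X, f ∉ serSet M e := by
    intro f hfX hf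
    by_cases hne : (X \ {f}).Nonempty
    · obtain ⟨D, hDX, hD, ⟨x, hxD, hxf⟩, -⟩ :=
        hX.2 {f} (Set.singleton_subset_iff.2 hfX) ⟨f, rfl⟩ hne
      rw [Set.mem_singleton_iff] at hxf
      exact heX (hDX (hf.2 D hD (hxf ▸ hxD)))
    · refine hser e heE (Set.Subset.antisymm (fun x hx ↦ hx.1) fun x hx ↦ ?_)
      by_cases hxX : x ∈ X
      · by_cases hxf : x = f
        · exact hxf ▸ hf
        · exact absurd ⟨x, hxX, hxf⟩ hne
      · exact hsub ⟨hx, hxX⟩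
  have hXeq : M.E \ serSet M e = X := by
    ext x
    refine ⟨fun hx ↦ ?_, fun hx ↦ ⟨hXE hx, hdisj x hx⟩⟩
    by_contra h
    exact hx.2 (hsub ⟨hx.1, h⟩)
  refine ⟨e, heE, Set.disjoint_left.2 fun f hf ↦ hdisj f (hYX hf), ?_⟩
  rwa [hXeq]

lemma circConn_singleton (M : Matroid α) (e : α) : CircConn M {e} := by
  refine ⟨⟨e, rfl⟩, ?_⟩
  rintro A hA ⟨a, ha⟩ ⟨b, hb, hbA⟩
  obtain rfl : a = e := hA ha
  obtain rfl : b = a := hb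
  exact absurd ha hbA

/-- a connected matroid with more than one series class has at least
three regular series classes (a series class `S` is regular if `M - S` is connected). -/
theorem stmt11 (M : Matroid α) (hfin : M.E.Finite) (hconn : mConnected M)
    (hmany : ∃ S₁ S₂ : Set α, mSerClass M S₁ ∧ mSerClass M S₂ ∧ S₁ ≠ S₂) :
    ∃ S₁ S₂ S₃ : Set α, S₁ ≠ S₂ ∧ S₁ ≠ S₃ ∧ S₂ ≠ S₃ ∧
      mSerClass M S₁ ∧ mSerClass M S₂ ∧ mSerClass M S₃ ∧
      mConnected (mdel M S₁) ∧ mConnected (mdel M S₂) ∧ mConnected (mdel M S₃) := by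
  have hM : CircConn M M.E := by
    rw [← mConnected_restrict_iff M hfin subset_rfl, Matroid.restrict_ground_eq_self]
    exact hconn
  have hnt : M.E.Nontrivial := by
    by_contra h
    rw [Set.not_nontrivial_iff] at h
    obtain ⟨S₁, S₂, ⟨e, he, -, rfl⟩, ⟨f, hf, -, rfl⟩, hne⟩ := hmany
    obtain rfl := h he hf
    exact hne rfl
  have hcirc : ∀ e ∈ M.E, ∃ C, M.IsCircuit C ∧ e ∈ C := by
    intro e he
    obtain ⟨f, hf, hfe⟩ := hnt.exists_ne e
    obtain ⟨C, hC, h, -⟩ := hM.exists_circuit hfin he hf hfe.symm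
    exact ⟨C, hC, h⟩
  have hself : ∀ e ∈ M.E, e ∈ serSet M e := fun e he ↦ ⟨he, fun _ _ h ↦ h⟩
  -- If the ground set is a circuit, it is the only one, and all elements are in series.
  have hEcirc : ¬ M.IsCircuit M.E := by
    intro hE
    obtain ⟨S₁, S₂, h₁, h₂, hne⟩ := hmany
    obtain ⟨e, he, rfl⟩ := (mSerClass_iff hcirc _).1 h₁
    obtain ⟨f, hf, rfl⟩ := (mSerClass_iff hcirc _).1 h₂
    have : ∀ e ∈ M.E, serSet M e = M.E := fun e he ↦
      Set.Subset.antisymm (fun x hx ↦ hx.1) fun x hx ↦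
        ⟨hx, fun C hC _ ↦ (hC.eq_of_subset_isCircuit hE hC.subset_ground) ▸ he⟩
    exact hne ((this e he).trans (this f hf).symm)
  have hser : ∀ e ∈ M.E, serSet M e ≠ M.E := by
    intro e he heq
    apply hEcirc
    obtain ⟨C, hC, heC⟩ := hcirc e he
    have hmem : ∀ D, M.IsCircuit D → e ∈ D := by
      intro D hD
      obtain ⟨x, hx⟩ := hD.nonempty
      exact (heq ▸ hD.subset_ground hx : x ∈ serSet M e).2 D hD hx
    -- Two distinct circuits through `e` would yield, by elimination, a circuit avoiding `e`.
    have huniq : ∀ D, M.IsCircuit D → D = C := by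
      intro D hD
      by_contra hne
      obtain ⟨K, hK, hKc⟩ := hD.elimination hC hne e
      exact (hK (hmem K hKc)).2 rfl
    have hCE : C = M.E := by
      refine hC.subset_ground.antisymm fun x hx ↦ ?_
      obtain ⟨D, hD, hxD⟩ := hcirc x hx
      exact huniq D hD ▸ hxD
    exact hCE ▸ hC
  have hfinal : ∀ e ∈ M.E, CircConn M (M.E \ serSet M e) →
      mSerClass M (serSet M e) ∧ mConnected (mdel M (serSet M e)) := fun e he h ↦
    ⟨(mSerClass_iff hcirc _).2 ⟨e, he, rfl⟩,
      (mConnected_restrict_iff M hfin Set.sdiff_subset).2 h⟩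
  have hsing : ∀ e ∈ M.E, ∃ f ∈ M.E, Disjoint {e} (serSet M f) ∧
      CircConn M (M.E \ serSet M f) := by
    intro e he
    refine exists_regular hfin hM hser (Set.singleton_subset_iff.2 he) ?_ (circConn_singleton M e)
    rintro h
    exact Set.not_nontrivial_singleton (h ▸ hnt)
  obtain ⟨x, hx⟩ := hnt.nonempty
  obtain ⟨e₁, he₁, -, hc₁⟩ := hsing x hx
  obtain ⟨e₂, he₂, hd₂, hc₂⟩ := hsing e₁ he₁
  rw [Set.disjoint_singleton_left] at hd₂
  have h12 : e₁ ≠ e₂ := fun h ↦ hd₂ (h ▸ hself e₂ he₂)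
  -- A circuit meeting both classes found so far forces the third class to differ from them.
  obtain ⟨C, hC, h1C, h2C⟩ := hM.exists_circuit hfin he₁ he₂ h12
  obtain ⟨e₃, he₃, hd₃, hc₃⟩ := exists_regular hfin hM hser hC.subset_ground
    (fun h ↦ hEcirc (h ▸ hC)) (circConn_of_isCircuit hC)
  obtain ⟨hs₁, hr₁⟩ := hfinal e₁ he₁ hc₁
  obtain ⟨hs₂, hr₂⟩ := hfinal e₂ he₂ hc₂
  obtain ⟨hs₃, hr₃⟩ := hfinal e₃ he₃ hc₃
  exact ⟨serSet M e₁, serSet M e₂, serSet M e₃, fun h ↦ hd₂ (h ▸ hself e₁ he₁),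
    fun h ↦ Set.disjoint_left.1 hd₃ h1C (h ▸ hself e₁ he₁),
    fun h ↦ Set.disjoint_left.1 hd₃ h2C (h ▸ hself e₂ he₂), hs₁, hs₂, hs₃, hr₁, hr₂, hr₃⟩
end
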